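/- Let (R,m) be a Cohen-Macaulay local ring of dimension d and let M be an R-module with dim_R(M) = d which is not maximal Cohen-Macaulay. If Gdim_R(λM) < ∞, then sup{ i : H^i_m(M) ≠ 0, i ≠ d } = d − rgr(M). -/

import Mathlib

open CategoryTheory

noncomputable section

universe u

/-- The `i`-th Ext group `Ext^i_R(M,N)`, as a type (with its `R`-module structure). -/
abbrev extM (R : Type u) [CommRing R] (i : ℕ) (M N : Type u) [AddCommGroup M] [Module R M]
    [AddCommGroup N] [Module R N] : Type u :=
  ((Ext R (ModuleCat.{u} R) i).obj (Opposite.op (ModuleCat.of R M))).obj (ModuleCat.of R N)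

/-- The `i`-th Tor group `Tor^R_i(M,N)`, as a type. -/
abbrev torM (R : Type u) [CommRing R] (i : ℕ) (M N : Type u) [AddCommGroup M] [Module R M]
    [AddCommGroup N] [Module R N] : Type u :=
  ((Tor (ModuleCat.{u} R) i).obj (ModuleCat.of R M)).obj (ModuleCat.of R N)

/-- The `i`-th local cohomology `H^i_I(M)`, as a type. -/
abbrev locCoh (R : Type u) [CommRing R] (I : Ideal R) (i : ℕ) (M : Type u) [AddCommGroup M]
    [Module R M] : Type u :=
  (localCohomology I i).obj (ModuleCat.of R M)

/-- A submodule `N ≤ M` is superfluous if `K ⊔ N = ⊤` implies `K = ⊤`. -/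
def Submodule.IsSuperfluous {R M : Type u} [CommRing R] [AddCommGroup M] [Module R M]
    (N : Submodule R M) : Prop :=
  ∀ K : Submodule R M, K ⊔ N = ⊤ → K = ⊤

/-- A minimal projective resolution of `M` by finitely generated projective modules:
each `P i → Ω^i M` is a projective cover (i.e. has superfluous kernel). -/
structure MinRes (R : Type u) [CommRing R] (M : Type u) [AddCommGroup M] [Module R M] where
  P : ℕ → ModuleCat.{u} R
  projective : ∀ i, Module.Projective R (P i)
  finite : ∀ i, Module.Finite R (P i)
  d : (i : ℕ) → (↥(P (i + 1)) →ₗ[R] ↥(P i))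
  ε : ↥(P 0) →ₗ[R] M
  surj : Function.Surjective ε
  exact0 : LinearMap.range (d 0) = LinearMap.ker ε
  exact : ∀ i, LinearMap.range (d (i + 1)) = LinearMap.ker (d i)
  min_eps : (LinearMap.ker ε).IsSuperfluous
  min_d : ∀ i, (LinearMap.ker (d i)).IsSuperfluous

namespace MinRes

variable {R M : Type u} [CommRing R] [AddCommGroup M] [Module R M]

/-- `T k F` is the Auslander-Bridger transpose `𝒯_{k+1} M = Tr Ω^k M`, computed as the
cokernel of `P_k* → P_{k+1}*`. -/
def T (F : MinRes R M) (k : ℕ) : Type u :=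
  (Module.Dual R ↥(F.P (k + 1))) ⧸ LinearMap.range (F.d k).dualMap

instance (F : MinRes R M) (k : ℕ) : AddCommGroup (F.T k) :=
  inferInstanceAs (AddCommGroup ((Module.Dual R ↥(F.P (k + 1))) ⧸
    LinearMap.range (F.d k).dualMap))

instance (F : MinRes R M) (k : ℕ) : Module R (F.T k) :=
  inferInstanceAs (Module R ((Module.Dual R ↥(F.P (k + 1))) ⧸
    LinearMap.range (F.d k).dualMap))

/-- The transpose `Tr M = coker(P₀* → P₁*)` computed from a minimal projective presentation. -/
abbrev Tr (F : MinRes R M) : Type u := F.T 0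

/-- `λM = ΩTr M`, realized as the image of `P₀* → P₁*` for a minimal projective
presentation `P₁ → P₀ → M → 0`. -/
def lambdaMod (F : MinRes R M) : Type u :=
  ↥(LinearMap.range (F.d 0).dualMap)

instance (F : MinRes R M) : AddCommGroup F.lambdaMod :=
  inferInstanceAs (AddCommGroup ↥(LinearMap.range (F.d 0).dualMap))

instance (F : MinRes R M) : Module R F.lambdaMod :=
  inferInstanceAs (Module R ↥(LinearMap.range (F.d 0).dualMap))

end MinRes

/-- `M` is a horizontally linked `R`-module, i.e. `M ≅ λλM`. -/
def IsHorizontallyLinked (R : Type u) [CommRing R] (M : Type u) [AddCommGroup M]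
    [Module R M] : Prop :=
  ∃ (F : MinRes R M) (G : MinRes R F.lambdaMod), Nonempty (G.lambdaMod ≃ₗ[R] M)

/-- `M` and `N` are horizontally linked to each other: `M ≅ λN` and `N ≅ λM`. -/
def MutuallyLinked (A : Type u) [CommRing A] (M N : Type u) [AddCommGroup M] [Module A M]
    [AddCommGroup N] [Module A N] : Prop :=
  ∃ (F : MinRes A M) (G : MinRes A N),
    Nonempty (F.lambdaMod ≃ₗ[A] N) ∧ Nonempty (G.lambdaMod ≃ₗ[A] M)

/-- `M` is linked to `N` by the ideal `c`: `c` annihilates both modules and they are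
horizontally linked to each other as `R ⧸ c`-modules. -/
def LinkedBy (R : Type u) [CommRing R] (c : Ideal R) (M N : Type u) [AddCommGroup M]
    [Module R M] [AddCommGroup N] [Module R N] : Prop :=
  ∃ (hM : Module.IsTorsionBySet R M c) (hN : Module.IsTorsionBySet R N c),
    letI := hM.module
    letI := hN.module
    MutuallyLinked (R ⧸ c) M N

/-- A stable module: no nonzero projective direct summand. -/
def IsStableModule (R : Type u) [CommRing R] (M : Type u) [AddCommGroup M] [Module R M] : Prop :=
  ∀ N : Submodule R M, Module.Projective R ↥N → (∃ N' : Submodule R M, IsCompl N N') → N = ⊥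

/-- `M` has G-dimension zero: `M` is finitely generated and reflexive,
and `Ext^i(M,R) = 0 = Ext^i(M*,R)` for all `i > 0`. -/
def IsGDimZero (R : Type u) [CommRing R] (M : Type u) [AddCommGroup M] [Module R M] : Prop :=
  Module.Finite R M ∧ Function.Bijective (Module.Dual.eval R M) ∧
    (∀ i : ℕ, 0 < i → Subsingleton (extM R i M R)) ∧
    (∀ i : ℕ, 0 < i → Subsingleton (extM R i (Module.Dual R M) R))

/-- `M` admits a resolution of length `≤ n` by modules of G-dimension zero. -/
def GDimLE (R : Type u) [CommRing R] : ℕ → ModuleCat.{u} R → Prop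
  | 0, M => IsGDimZero R ↥M
  | n + 1, M =>
    ∃ (G : ModuleCat.{u} R) (f : ↥G →ₗ[R] ↥M), IsGDimZero R ↥G ∧ Function.Surjective f ∧
      GDimLE R n (ModuleCat.of R ↥(LinearMap.ker f))

/-- The G-dimension of `M`: the minimal length of a resolution of `M` by modules of
G-dimension zero (`∞` if there is none). -/
def GDim (R : Type u) [CommRing R] (M : Type u) [AddCommGroup M] [Module R M] : ℕ∞ :=
  sInf {n : ℕ∞ | ∃ k : ℕ, n = k ∧ GDimLE R k (ModuleCat.of R M)}

/-- The reduced grade of `M`: `rgr M = inf{ i > 0 | Ext^i(M,R) ≠ 0 }`. -/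
def rgr (R : Type u) [CommRing R] (M : Type u) [AddCommGroup M] [Module R M] : ℕ∞ :=
  sInf {n : ℕ∞ | ∃ k : ℕ, n = k ∧ 0 < k ∧ ¬ Subsingleton (extM R k M R)}

/-- The grade of `M`: `gr M = inf{ i ≥ 0 | Ext^i(M,R) ≠ 0 }`. -/
def egrade (R : Type u) [CommRing R] (M : Type u) [AddCommGroup M] [Module R M] : ℕ∞ :=
  sInf {n : ℕ∞ | ∃ k : ℕ, n = k ∧ ¬ Subsingleton (extM R k M R)}

/-- `depth_I(M) = inf{ i | Ext^i(R/I, M) ≠ 0 }`; for `I` the maximal ideal of a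
local ring this is the depth of `M`. -/
def edepth (R : Type u) [CommRing R] (I : Ideal R) (M : Type u) [AddCommGroup M]
    [Module R M] : ℕ∞ :=
  sInf {n : ℕ∞ | ∃ k : ℕ, n = k ∧ ¬ Subsingleton (extM R k (R ⧸ I) M)}

/-- The depth of the local ring `R`. -/
def rdepth (R : Type u) [CommRing R] [IsLocalRing R] : ℕ∞ :=
  edepth R (IsLocalRing.maximalIdeal R) R

/-- `depth_{R_p}(M_p)`. -/
def locDepth (R : Type u) [CommRing R] (p : Ideal R) [p.IsPrime] (M : Type u) [AddCommGroup M]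
    [Module R M] : ℕ∞ :=
  edepth (Localization.AtPrime p) (IsLocalRing.maximalIdeal (Localization.AtPrime p))
    (LocalizedModule p.primeCompl M)

/-- `depth R_p`. -/
def locRingDepth (R : Type u) [CommRing R] (p : Ideal R) [p.IsPrime] : ℕ∞ :=
  rdepth (Localization.AtPrime p)

/-- `Gdim_{R_p}(M_p)`. -/
def locGDim (R : Type u) [CommRing R] (p : Ideal R) [p.IsPrime] (M : Type u) [AddCommGroup M]
    [Module R M] : ℕ∞ :=
  GDim (Localization.AtPrime p) (LocalizedModule p.primeCompl M)

/-- `rgr_{R_p}(M_p)`. -/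
def locRgr (R : Type u) [CommRing R] (p : Ideal R) [p.IsPrime] (M : Type u) [AddCommGroup M]
    [Module R M] : ℕ∞ :=
  rgr (Localization.AtPrime p) (LocalizedModule p.primeCompl M)

/-- `dim_{R_p}(M_p)`, the Krull dimension of the support of `M_p` over `R_p`. -/
def locDim (R : Type u) [CommRing R] (p : Ideal R) [p.IsPrime] (M : Type u) [AddCommGroup M]
    [Module R M] : WithBot ℕ∞ :=
  ringKrullDim ((Localization.AtPrime p) ⧸
    Module.annihilator (Localization.AtPrime p) (LocalizedModule p.primeCompl M))

/-- `M` satisfies the condition `S̃_k`: `depth_{R_p}(M_p) ≥ min{k, depth R_p}` for all primes. -/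
def Stilde (R : Type u) [CommRing R] (k : ℕ) (M : Type u) [AddCommGroup M] [Module R M] : Prop :=
  ∀ (p : Ideal R) (_ : p.IsPrime), min (k : ℕ∞) (locRingDepth R p) ≤ locDepth R p M

/-- `M` satisfies Serre's condition `(S_k)`:
`depth_{R_p}(M_p) ≥ min{k, dim_{R_p}(M_p)}` for all primes. -/
def SerreS (R : Type u) [CommRing R] (k : ℕ) (M : Type u) [AddCommGroup M] [Module R M] : Prop :=
  ∀ (p : Ideal R) (_ : p.IsPrime),
    min (k : WithBot ℕ∞) (locDim R p M) ≤ (locDepth R p M : WithBot ℕ∞)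

/-- `M` is a `k`-th syzygy module. -/
def IsKthSyzygy (R : Type u) [CommRing R] : ℕ → ModuleCat.{u} R → Prop
  | 0, _ => True
  | k + 1, M =>
    ∃ (P : ModuleCat.{u} R) (f : ↥M →ₗ[R] ↥P), Module.Projective R ↥P ∧ Module.Finite R ↥P ∧
      Function.Injective f ∧ IsKthSyzygy R k (ModuleCat.of R (↥P ⧸ LinearMap.range f))

/-- The `I`-torsion submodule `Γ_I(M) = { x | I^n x = 0 for some n }`. -/
def gammaTorsion (R : Type u) [CommRing R] (I : Ideal R) (M : Type u) [AddCommGroup M]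
    [Module R M] : Submodule R M where
  carrier := {x | ∃ n : ℕ, ∀ a ∈ I ^ n, a • x = 0}
  zero_mem' := ⟨0, fun a _ => smul_zero a⟩
  add_mem' := by
    rintro x y ⟨n, hn⟩ ⟨m, hm⟩
    exact ⟨n + m, fun a ha => by
      rw [smul_add, hn a (Ideal.pow_le_pow_right (Nat.le_add_right n m) ha),
        hm a (Ideal.pow_le_pow_right (Nat.le_add_left m n) ha), add_zero]⟩
  smul_mem' := by
    rintro c x ⟨n, hn⟩
    exact ⟨n, fun a ha => by rw [smul_comm, hn a ha, smul_zero]⟩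

/-- `N` has finite flat dimension (characterized by uniform vanishing of `Tor`). -/
def HasFiniteFlatDim (R : Type u) [CommRing R] (N : Type u) [AddCommGroup N] [Module R N] : Prop :=
  ∃ n : ℕ, ∀ i : ℕ, n < i → ∀ (M : ModuleCat.{u} R), Subsingleton (torM R i ↥M N)

/-- `N` has finite injective dimension (characterized by uniform vanishing of `Ext`). -/
def HasFiniteInjDim (R : Type u) [CommRing R] (N : Type u) [AddCommGroup N] [Module R N] : Prop :=
  ∃ n : ℕ, ∀ i : ℕ, n < i → ∀ (M : ModuleCat.{u} R), Subsingleton (extM R i ↥M N)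

/-- `K` is a semidualizing `R`-module. -/
def IsSemidualizing (R : Type u) [CommRing R] (K : Type u) [AddCommGroup K] [Module R K] : Prop :=
  Module.Finite R K ∧ Function.Bijective (LinearMap.lsmul R K) ∧
    ∀ i : ℕ, 0 < i → Subsingleton (extM R i K K)

/-- The biduality map `M → Hom(Hom(M,K),K)`. -/
def evalK (R : Type u) [CommRing R] (K M : Type u) [AddCommGroup K] [Module R K]
    [AddCommGroup M] [Module R M] : M →ₗ[R] ((M →ₗ[R] K) →ₗ[R] K) :=
  LinearMap.applyₗ

/-- `M` has `G_K`-dimension zero. -/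
def IsGKDimZero (R : Type u) [CommRing R] (K M : Type u) [AddCommGroup K] [Module R K]
    [AddCommGroup M] [Module R M] : Prop :=
  Module.Finite R M ∧ Function.Bijective (evalK R K M) ∧
    (∀ i : ℕ, 0 < i → Subsingleton (extM R i M K)) ∧
    (∀ i : ℕ, 0 < i → Subsingleton (extM R i (M →ₗ[R] K) K))

/-- `M` admits a resolution of length `≤ n` by modules of `G_K`-dimension zero. -/
def GKDimLE (R : Type u) [CommRing R] (K : Type u) [AddCommGroup K] [Module R K] :
    ℕ → ModuleCat.{u} R → Prop
  | 0, M => IsGKDimZero R K ↥M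
  | n + 1, M =>
    ∃ (G : ModuleCat.{u} R) (f : ↥G →ₗ[R] ↥M), IsGKDimZero R K ↥G ∧ Function.Surjective f ∧
      GKDimLE R K n (ModuleCat.of R ↥(LinearMap.ker f))

/-- The `G_K`-dimension of `M`. -/
def GKDim (R : Type u) [CommRing R] (K M : Type u) [AddCommGroup K] [Module R K]
    [AddCommGroup M] [Module R M] : ℕ∞ :=
  sInf {n : ℕ∞ | ∃ k : ℕ, n = k ∧ GKDimLE R K k (ModuleCat.of R M)}

/-- The grade of a module, `gr_R(M) = grade(Ann_R(M), R) = inf{i | Ext^i(R/Ann M, R) ≠ 0}`. -/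
def grAnn (R : Type u) [CommRing R] (M : Type u) [AddCommGroup M] [Module R M] : ℕ∞ :=
  egrade R (R ⧸ Module.annihilator R M)

/-- The grade of an ideal, `grade(I) = inf{i | Ext^i(R/I, R) ≠ 0}`. -/
def gradeI (R : Type u) [CommRing R] (I : Ideal R) : ℕ∞ :=
  egrade R (R ⧸ I)

/-- The ideal `I` is `G_K`-Gorenstein: `R/I` is `G_K`-perfect and `Ext^{gr I}(R/I, K)` is
cyclic. -/
def IsGKGorensteinIdeal (R : Type u) [CommRing R] (K : Type u) [AddCommGroup K] [Module R K]
    (I : Ideal R) : Prop :=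
  ∃ n : ℕ, grAnn R (R ⧸ I) = (n : ℕ∞) ∧ GKDim R K (R ⧸ I) = (n : ℕ∞) ∧
    ∃ x : extM R n (R ⧸ I) K, Submodule.span R {x} = ⊤

end

/-!
Write `H = H^d_m(R)`. Since `R` is Cohen–Macaulay, a finite projective module `P` has
`H^d_m(P) ≅ Hom(P*, H)` and no other local cohomology.

If `T` has finite G-dimension, then `Ext^1(T, H) = 0` and the maps `T → H` separate the elements
of `T`: embed `T` into a module of finite projective dimension with cokernel of G-dimension zero,
and for modules of finite projective dimension induct on `d`, dividing by a regular element `u`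
and replacing `H` by `ker (u : H → H) = H^{d-1}_m(R/u)`.

For a projective resolution `P` of `M` it follows that `Hom(-, H)` detects exactness of
`P_k* → P_{k+1}* → P_{k+2}*` as soon as `coker (P_k* → P_{k+1}*)` has such a hull. This holds for
`k = 0` because `λM` has finite G-dimension, and passes from `k` to `k + 1` when
`Ext^{k+1}(M, R) = 0`. Hence `Ext^{k+1}(M, R) = Ext^1(Ω^k M, R)` vanishes if and only if
`H^{d-1}_m(Ω^k M) ≅ H^{d-k-1}_m(M)` does, as long as all lower `Ext^j(M, R)` with `j > 0` vanish.
-/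

open Abelian Limits Opposite IsLocalRing

universe u

section ExtVanishing

variable {R : Type u} [CommRing R]

/-- `Ext^i_R(M, N) = 0`, for the `Ext` groups of the derived category, which carry long exact
sequences; `subsingleton_extM_iff` compares them with `extM`. -/
def ExtVanishes (R : Type u) [CommRing R] (i : ℕ) (M N : Type u) [AddCommGroup M] [Module R M]
    [AddCommGroup N] [Module R N] : Prop :=
  Subsingleton (Abelian.Ext.{u} (ModuleCat.of R M) (ModuleCat.of R N) i)

variable {A B C N X : Type u} [AddCommGroup A] [Module R A] [AddCommGroup B] [Module R B]
  [AddCommGroup C] [Module R C] [AddCommGroup N] [Module R N] [AddCommGroup X] [Module R X]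

namespace ExtVanishes

theorem eq_zero {i : ℕ} (h : ExtVanishes R i A B)
    (x : Abelian.Ext.{u} (ModuleCat.of R A) (ModuleCat.of R B) i) : x = 0 :=
  h.elim x 0

theorem of_forall_eq_zero {i : ℕ}
    (h : ∀ x : Abelian.Ext.{u} (ModuleCat.of R A) (ModuleCat.of R B) i, x = 0) :
    ExtVanishes R i A B :=
  subsingleton_of_forall_eq 0 h

theorem of_projective {i : ℕ} (hi : 0 < i) [Module.Projective R A] : ExtVanishes R i A B := by
  obtain ⟨j, rfl⟩ := Nat.exists_eq_add_of_lt hi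
  have : Projective (ModuleCat.of R A) := (IsProjective.iff_projective A).1 inferInstance
  exact of_forall_eq_zero fun x => Ext.eq_zero_of_projective x

theorem zero_iff : ExtVanishes R 0 A B ↔ ∀ f : A →ₗ[R] B, f = 0 := by
  constructor
  · intro h f
    have hf := h.eq_zero (Ext.mk₀ (ModuleCat.ofHom f))
    simpa using congrArg ModuleCat.Hom.hom ((Ext.mk₀_eq_zero_iff _).1 hf)
  · refine fun h => of_forall_eq_zero fun x => ?_
    obtain ⟨f, rfl⟩ := (Ext.mk₀_bijective _ _).2 x
    exact (Ext.mk₀_eq_zero_iff f).2 (ModuleCat.hom_ext (h _))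

theorem congr_left {i : ℕ} (e : A ≃ₗ[R] B) (h : ExtVanishes R i A N) : ExtVanishes R i B N := by
  refine of_forall_eq_zero fun x => ?_
  have factor : x = (Ext.mk₀ (ModuleCat.ofHom (e.symm : B →ₗ[R] A))).comp
      ((Ext.mk₀ (ModuleCat.ofHom (e : A →ₗ[R] B))).comp x (zero_add i)) (zero_add i) := by
    rw [← Ext.comp_assoc (h₁₂ := add_zero 0) (h₂₃ := zero_add i) (h := by simp),
      Ext.mk₀_comp_mk₀, ← ModuleCat.ofHom_comp]
    simp
  rw [factor, h.eq_zero ((Ext.mk₀ (ModuleCat.ofHom (e : A →ₗ[R] B))).comp x (zero_add i)),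
    Ext.comp_zero]

theorem congr_right {i : ℕ} (e : A ≃ₗ[R] B) (h : ExtVanishes R i N A) : ExtVanishes R i N B := by
  refine of_forall_eq_zero fun x => ?_
  have factor : x = (x.comp (Ext.mk₀ (ModuleCat.ofHom (e.symm : B →ₗ[R] A))) (add_zero i)).comp
      (Ext.mk₀ (ModuleCat.ofHom (e : A →ₗ[R] B))) (add_zero i) := by
    rw [Ext.comp_assoc (h₁₂ := add_zero i) (h₂₃ := zero_add 0) (h := by simp),
      Ext.mk₀_comp_mk₀, ← ModuleCat.ofHom_comp]
    simp
  rw [factor, h.eq_zero (x.comp (Ext.mk₀ (ModuleCat.ofHom (e.symm : B →ₗ[R] A))) (add_zero i)),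
    Ext.zero_comp]

end ExtVanishes

/-- The short complex in `ModuleCat R` attached to an exact pair of linear maps. -/
abbrev shortComplexOfExact (f : A →ₗ[R] B) (g : B →ₗ[R] C) (hfg : Function.Exact f g) :
    ShortComplex (ModuleCat.{u} R) :=
  ModuleCat.shortComplexOfCompEqZero f g hfg.linearMap_comp_eq_zero

theorem shortExact_shortComplexOfExact {f : A →ₗ[R] B} {g : B →ₗ[R] C}
    (hf : Function.Injective f) (hfg : Function.Exact f g) (hg : Function.Surjective g) :
    (shortComplexOfExact f g hfg).ShortExact :=
  ModuleCat.shortComplex_shortExact _ hfg hf hg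

namespace ExtVanishes

variable {f : A →ₗ[R] B} {g : B →ₗ[R] C} (hf : Function.Injective f)
  (hfg : Function.Exact f g) (hg : Function.Surjective g)
include hf hfg hg

theorem contravariant₂ {i : ℕ} (hC : ExtVanishes R i C N) (hA : ExtVanishes R i A N) :
    ExtVanishes R i B N := by
  refine of_forall_eq_zero fun x => ?_
  obtain ⟨y, hy⟩ := Ext.contravariant_sequence_exact₂
    (shortExact_shortComplexOfExact hf hfg hg) _ x (hA.eq_zero _)
  rw [← hy, hC.eq_zero y, Ext.comp_zero]

theorem contravariant₁ {i : ℕ} (hB : ExtVanishes R i B N) (hC : ExtVanishes R (i + 1) C N) :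
    ExtVanishes R i A N := by
  refine of_forall_eq_zero fun x => ?_
  obtain ⟨y, hy⟩ := Ext.contravariant_sequence_exact₁
    (shortExact_shortComplexOfExact hf hfg hg) _ x (add_comm 1 i) (hC.eq_zero _)
  rw [← hy, hB.eq_zero y, Ext.comp_zero]

theorem contravariant₃ {i : ℕ} (hA : ExtVanishes R i A N) (hB : ExtVanishes R (i + 1) B N) :
    ExtVanishes R (i + 1) C N := by
  refine of_forall_eq_zero fun x => ?_
  obtain ⟨y, hy⟩ := Ext.contravariant_sequence_exact₃
    (shortExact_shortComplexOfExact hf hfg hg) _ x (hB.eq_zero _) (add_comm 1 i)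
  rw [← hy, hA.eq_zero y, Ext.comp_zero]

theorem covariant₃ {i : ℕ} (hB : ExtVanishes R i X B) (hA : ExtVanishes R (i + 1) X A) :
    ExtVanishes R i X C := by
  refine of_forall_eq_zero fun x => ?_
  obtain ⟨y, hy⟩ := Ext.covariant_sequence_exact₃ _
    (shortExact_shortComplexOfExact hf hfg hg) x rfl (hA.eq_zero _)
  rw [← hy, hB.eq_zero y, Ext.zero_comp]

theorem exists_extend (h : ExtVanishes R 1 C N) (φ : A →ₗ[R] N) :
    ∃ ψ : B →ₗ[R] N, ψ ∘ₗ f = φ := by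
  obtain ⟨y, hy⟩ := Ext.contravariant_sequence_exact₁ (shortExact_shortComplexOfExact hf hfg hg) _
    (Ext.mk₀ (ModuleCat.ofHom φ)) (add_comm 1 0) (h.eq_zero _)
  obtain ⟨ψ, rfl⟩ := (Ext.mk₀_bijective _ _).2 y
  rw [Ext.mk₀_comp_mk₀] at hy
  exact ⟨ψ.hom, by simpa using congrArg ModuleCat.Hom.hom ((Ext.mk₀_bijective _ _).1 hy)⟩

theorem one_of_forall_extend (h : ∀ φ : A →ₗ[R] N, ∃ ψ : B →ₗ[R] N, ψ ∘ₗ f = φ)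
    (hB : ExtVanishes R 1 B N) : ExtVanishes R 1 C N := by
  refine of_forall_eq_zero fun x => ?_
  obtain ⟨y, hy⟩ := Ext.contravariant_sequence_exact₃
    (shortExact_shortComplexOfExact hf hfg hg) _ x (hB.eq_zero _) (add_comm 1 0)
  obtain ⟨φ, rfl⟩ := (Ext.mk₀_bijective _ _).2 y
  obtain ⟨ψ, hψ⟩ := h φ.hom
  have factor : φ = (shortComplexOfExact f g hfg).f ≫ ModuleCat.ofHom ψ := by
    ext1
    exact hψ.symm
  rw [← hy, factor, ← Ext.mk₀_comp_mk₀,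
    ← Ext.comp_assoc (h₁₂ := rfl) (h₂₃ := rfl) (h := rfl),
    ShortComplex.ShortExact.extClass_comp, Ext.zero_comp]

end ExtVanishes

end ExtVanishing

section DerivedHom

section ChainComplex

variable {D : Type*} [Category* D] [Abelian D]

theorem exists_eq_homologyι_comp_descOpcycles (K : ChainComplex D ℕ) (n : ℕ) {I : D}
    [Injective I] (x : K.homology n ⟶ I) :
    ∃ (f : K.X n ⟶ I) (hf : K.d (n + 1) n ≫ f = 0),
      x = K.homologyι n ≫ K.descOpcycles f (n + 1) (by simp) hf := by
  refine ⟨K.pOpcycles n ≫ Injective.factorThru x (K.homologyι n), by simp, ?_⟩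
  have desc_eq : K.descOpcycles (K.pOpcycles n ≫ Injective.factorThru x (K.homologyι n)) (n + 1)
      (by simp) (by simp) = Injective.factorThru x (K.homologyι n) := by
    rw [← cancel_epi (K.pOpcycles n), HomologicalComplex.p_descOpcycles]
  rw [desc_eq, Injective.comp_factorThru]

theorem homologyι_comp_descOpcycles_eq_zero_iff (K : ChainComplex D ℕ) (n : ℕ) {I : D}
    [Injective I] (f : K.X n ⟶ I) (hf : K.d (n + 1) n ≫ f = 0) :
    K.homologyι n ≫ K.descOpcycles f (n + 1) (by simp) hf = 0 ↔
      ∃ g : K.X ((ComplexShape.down ℕ).next n) ⟶ I, K.d n _ ≫ g = f := by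
  constructor
  · intro h
    have hS : (ShortComplex.mk (K.homologyι n)
        (K.fromOpcycles n ((ComplexShape.down ℕ).next n)) (by simp)).Exact :=
      ShortComplex.exact_of_f_is_kernel _ (K.homologyIsKernel n _ rfl)
    obtain ⟨g, hg⟩ : ∃ g, K.fromOpcycles n ((ComplexShape.down ℕ).next n) ≫ g =
        K.descOpcycles f (n + 1) (by simp) hf := ⟨_, hS.comp_descToInjective _ h⟩
    exact ⟨g, by rw [← K.p_fromOpcycles, Category.assoc, hg, K.p_descOpcycles]⟩
  · rintro ⟨g, hg⟩
    exact K.homologyι_descOpcycles_eq_zero_of_boundary f _ _ g hg.symm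

end ChainComplex

theorem extMk_zero_eq_zero_iff {C : Type*} [Category* C] [Abelian C] [HasExt.{u} C] {X Y : C}
    (P : ProjectiveResolution X) (f : P.complex.X 0 ⟶ Y) (hf : P.complex.d 1 0 ≫ f = 0) :
    P.extMk f 1 rfl hf = 0 ↔ f = 0 := by
  refine ⟨fun hz => ?_, by rintro rfl; simp⟩
  rw [← P.extEquivCohomologyClass.apply_eq_iff_eq,
    ProjectiveResolution.extEquivCohomologyClass_extMk,
    ProjectiveResolution.extEquivCohomologyClass_zero,
    CochainComplex.HomComplex.CohomologyClass.mk_eq_zero_iff,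
    CochainComplex.HomComplex.Cocycle.toSingleMk_mem_coboundaries_iff _ _ _ _ _ 1 (by simp)] at hz
  obtain ⟨g, hg⟩ := hz
  have d_eq_zero : P.cochainComplex.d (-((0 : ℕ) : ℤ)) 1 = 0 :=
    (P.cochainComplex.isZero_of_isStrictlyLE 0 1).eq_of_tgt _ _
  rw [d_eq_zero, zero_comp] at hg
  rw [← cancel_epi (P.cochainComplexXIso (-((0 : ℕ) : ℤ)) 0 rfl).hom, ← hg, comp_zero]

theorem extMk_eq_zero_iff_exists_next {C : Type*} [Category* C] [Abelian C] [HasExt.{u} C]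
    {X Y : C} (P : ProjectiveResolution X) {n : ℕ} (f : P.complex.X n ⟶ Y)
    (hf : P.complex.d (n + 1) n ≫ f = 0) :
    P.extMk f (n + 1) rfl hf = 0 ↔
      ∃ g : P.complex.X ((ComplexShape.down ℕ).next n) ⟶ Y, P.complex.d n _ ≫ g = f := by
  cases n with
  | succ p => rw [P.extMk_eq_zero_iff f _ rfl hf p rfl, ChainComplex.next_nat_succ p]
  | zero =>
    rw [extMk_zero_eq_zero_iff, ChainComplex.next_nat_zero,
      P.complex.shape 0 0 (by simp)]
    simp only [zero_comp, exists_const, eq_comm]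

variable {R : Type u} [CommRing R] {A B X X' Y : ModuleCat.{u} R}

/-- The functor `Hom_R(-, Y)`, valued in the opposite category; `Ext R (ModuleCat R) n` is built
from its left derived functors. -/
abbrev homToRightOp (Y : ModuleCat.{u} R) : ModuleCat.{u} R ⥤ (ModuleCat.{u} R)ᵒᵖ :=
  ((linearYoneda R (ModuleCat.{u} R)).obj Y).rightOp

/-- The complex `Hom_R(P, Y)` of a projective resolution `P`, as a chain complex in the opposite
category. -/
abbrev homToComplex (P : ProjectiveResolution X) (Y : ModuleCat.{u} R) :
    ChainComplex (ModuleCat.{u} R)ᵒᵖ ℕ :=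
  ((homToRightOp Y).mapHomologicalComplex _).obj P.complex

/-- An element of `Hom_R(A, Y)`, viewed as a morphism `R → Hom_R(A, Y)`. -/
def homElement (f : A ⟶ Y) : (homToRightOp Y).obj A ⟶ op (ModuleCat.of R R) :=
  Quiver.Hom.op (X := ModuleCat.of R R) (Y := ModuleCat.of R (A ⟶ Y))
    (ModuleCat.ofHom (LinearMap.toSpanSingleton R (A ⟶ Y) f))

theorem map_comp_homElement (a : A ⟶ B) (f : B ⟶ Y) :
    (homToRightOp Y).map a ≫ homElement f = homElement (a ≫ f) := by
  apply Quiver.Hom.unop_inj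
  ext
  change a ≫ ((1 : R) • f) = (1 : R) • (a ≫ f)
  simp

theorem homElement_injective :
    Function.Injective (homElement : (A ⟶ Y) → ((homToRightOp Y).obj A ⟶ _)) := by
  intro f g h
  have key := congrArg
    (fun k : (homToRightOp Y).obj A ⟶ op (ModuleCat.of R R) => k.unop.hom (1 : R)) h
  change (1 : R) • f = (1 : R) • g at key
  simpa using key

theorem homElement_surjective :
    Function.Surjective (homElement : (A ⟶ Y) → ((homToRightOp Y).obj A ⟶ _)) := by
  refine fun x => ⟨x.unop.hom (1 : R), Quiver.Hom.unop_inj ?_⟩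
  ext
  change (1 : R) • x.unop.hom (1 : R) = _
  simp

theorem homElement_zero : homElement (0 : A ⟶ Y) = 0 := by
  apply Quiver.Hom.unop_inj
  ext
  change (1 : R) • (0 : A ⟶ Y) = 0
  simp

instance injective_op_of_self : Injective (op (ModuleCat.of R R)) := by
  have : Projective (ModuleCat.of R R) := (IsProjective.iff_projective R).1 inferInstance
  infer_instance

theorem d_comp_homElement {P : ProjectiveResolution X} {n : ℕ} {f : P.complex.X n ⟶ Y}
    (hf : P.complex.d (n + 1) n ≫ f = 0) :
    (homToComplex P Y).d (n + 1) n ≫ homElement f = 0 :=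
  (map_comp_homElement _ _).trans (by rw [hf]; exact homElement_zero)

/-- The class of the cocycle `f` in the `n`-th derived functor of `Hom_R(-, Y)` at `X`, viewed as
a morphism out of `R`. -/
noncomputable def derivedClassHom (P : ProjectiveResolution X) {n : ℕ} (f : P.complex.X n ⟶ Y)
    (hf : P.complex.d (n + 1) n ≫ f = 0) :
    ((homToRightOp Y).leftDerived n).obj X ⟶ op (ModuleCat.of R R) :=
  (P.isoLeftDerivedObj (homToRightOp Y) n).hom ≫ (homToComplex P Y).homologyι n ≫
    (homToComplex P Y).descOpcycles (homElement f) (n + 1) (by simp) (d_comp_homElement hf)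

theorem exists_eq_derivedClassHom (P : ProjectiveResolution X) {n : ℕ}
    (x : ((homToRightOp Y).leftDerived n).obj X ⟶ op (ModuleCat.of R R)) :
    ∃ (f : P.complex.X n ⟶ Y) (hf : P.complex.d (n + 1) n ≫ f = 0),
      x = derivedClassHom P f hf := by
  obtain ⟨g, hg, h⟩ := exists_eq_homologyι_comp_descOpcycles (homToComplex P Y) n
    ((P.isoLeftDerivedObj (homToRightOp Y) n).inv ≫ x)
  obtain ⟨f, rfl⟩ := homElement_surjective (A := P.complex.X n) g
  refine ⟨f, homElement_injective ?_, (Iso.inv_comp_eq _).1 h⟩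
  rw [← map_comp_homElement]
  exact Eq.trans hg homElement_zero.symm

theorem derivedClassHom_eq_zero_iff (P : ProjectiveResolution X) {n : ℕ}
    (f : P.complex.X n ⟶ Y) (hf : P.complex.d (n + 1) n ≫ f = 0) :
    derivedClassHom P f hf = 0 ↔ P.extMk f (n + 1) rfl hf = 0 := by
  rw [extMk_eq_zero_iff_exists_next, derivedClassHom, ← Iso.eq_inv_comp, comp_zero]
  refine (homologyι_comp_descOpcycles_eq_zero_iff (homToComplex P Y) n (homElement f)
    (d_comp_homElement hf)).trans ⟨?_, ?_⟩
  · rintro ⟨g, hg⟩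
    obtain ⟨g, rfl⟩ := homElement_surjective (A := P.complex.X _) g
    exact ⟨g, homElement_injective ((map_comp_homElement _ _).symm.trans hg)⟩
  · rintro ⟨g, rfl⟩
    exact ⟨homElement g, map_comp_homElement _ _⟩

theorem map_comp_derivedClassHom {a : X' ⟶ X} {P : ProjectiveResolution X}
    {P' : ProjectiveResolution X'} (φ : ProjectiveResolution.Hom P' P a) {n : ℕ}
    (f : P.complex.X n ⟶ Y) (hf : P.complex.d (n + 1) n ≫ f = 0) :
    ((homToRightOp Y).leftDerived n).map a ≫ derivedClassHom P f hf =
      derivedClassHom P' (φ.hom.f n ≫ f) (by simp [← φ.hom.comm_assoc, hf]) := by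
  rw [derivedClassHom, ← Category.assoc,
    ProjectiveResolution.isoLeftDerivedObj_hom_naturality a P' P φ.hom
      (by simpa using φ.hom_f_zero_comp_π_f_zero) (homToRightOp Y) n, derivedClassHom,
    Category.assoc]
  refine congrArg _ ((HomologicalComplex.homologyι_naturality_assoc _ _ _).trans
    (congrArg _ ?_))
  refine (HomologicalComplex.opcyclesMap_comp_descOpcycles _ _ _ _ _).trans ?_
  congr 1

/-- The class of the cocycle `f` in `Ext R (ModuleCat R) n`. -/
noncomputable def derivedClass (P : ProjectiveResolution X) {n : ℕ} (f : P.complex.X n ⟶ Y)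
    (hf : P.complex.d (n + 1) n ≫ f = 0) : ((Ext R (ModuleCat.{u} R) n).obj (op X)).obj Y :=
  (derivedClassHom P f hf).unop.hom (1 : R)

theorem exists_eq_derivedClass (P : ProjectiveResolution X) {n : ℕ}
    (x : ((Ext R (ModuleCat.{u} R) n).obj (op X)).obj Y) :
    ∃ (f : P.complex.X n ⟶ Y) (hf : P.complex.d (n + 1) n ≫ f = 0), x = derivedClass P f hf := by
  let x' : ModuleCat.of R R ⟶ ((Ext R (ModuleCat.{u} R) n).obj (op X)).obj Y :=
    ModuleCat.ofHom (LinearMap.toSpanSingleton R _ x)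
  obtain ⟨f, hf, h⟩ := exists_eq_derivedClassHom (Y := Y) P (n := n) x'.op
  refine ⟨f, hf, ?_⟩
  rw [derivedClass, ← h]
  exact (one_smul R x).symm

theorem derivedClass_eq_zero_iff (P : ProjectiveResolution X) {n : ℕ}
    (f : P.complex.X n ⟶ Y) (hf : P.complex.d (n + 1) n ≫ f = 0) :
    derivedClass P f hf = 0 ↔ P.extMk f (n + 1) rfl hf = 0 := by
  rw [← derivedClassHom_eq_zero_iff, derivedClass]
  refine ⟨fun h => Quiver.Hom.unop_inj ?_, fun h => by rw [h]; rfl⟩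
  ext
  exact h

theorem map_derivedClass {a : X' ⟶ X} {P : ProjectiveResolution X} {P' : ProjectiveResolution X'}
    (φ : ProjectiveResolution.Hom P' P a) {n : ℕ}
    (f : P.complex.X n ⟶ Y) (hf : P.complex.d (n + 1) n ≫ f = 0) :
    (((Ext R (ModuleCat.{u} R) n).map a.op).app Y).hom (derivedClass P f hf) =
      derivedClass P' (φ.hom.f n ≫ f) (by simp [← φ.hom.comm_assoc, hf]) :=
  congrArg (fun k : ((homToRightOp Y).leftDerived n).obj X' ⟶ op (ModuleCat.of R R) =>
    k.unop.hom (1 : R)) (map_comp_derivedClassHom φ f hf)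

theorem map_derivedClass_eq_zero_iff (P : ProjectiveResolution X) {n : ℕ}
    (f : P.complex.X n ⟶ Y) (hf : P.complex.d (n + 1) n ≫ f = 0) (a : X' ⟶ X) :
    (((Ext R (ModuleCat.{u} R) n).map a.op).app Y).hom (derivedClass P f hf) = 0 ↔
      (Ext.mk₀ a).comp (P.extMk f (n + 1) rfl hf) (zero_add n) = 0 := by
  let P' := projectiveResolution X'
  let φ : ProjectiveResolution.Hom P' P a :=
    ⟨ProjectiveResolution.lift a P' P, by
      simpa using ProjectiveResolution.lift_commutes_zero a P' P⟩
  rw [map_derivedClass φ, ProjectiveResolution.mk₀_comp_extMk (φ := φ), derivedClass_eq_zero_iff]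

theorem exists_ext_forall_map_eq_zero_iff {n : ℕ}
    (x : ((Ext R (ModuleCat.{u} R) n).obj (op X)).obj Y) :
    ∃ y : Abelian.Ext.{u} X Y n, ∀ (X' : ModuleCat.{u} R) (a : X' ⟶ X),
      (((Ext R (ModuleCat.{u} R) n).map a.op).app Y).hom x = 0 ↔
        (Ext.mk₀ a).comp y (zero_add n) = 0 := by
  obtain ⟨f, hf, rfl⟩ := exists_eq_derivedClass (projectiveResolution X) x
  exact ⟨_, fun X' a => map_derivedClass_eq_zero_iff _ f hf a⟩

theorem exists_forall_map_eq_zero_iff_ext {n : ℕ} (y : Abelian.Ext.{u} X Y n) :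
    ∃ x : ((Ext R (ModuleCat.{u} R) n).obj (op X)).obj Y, ∀ (X' : ModuleCat.{u} R) (a : X' ⟶ X),
      (((Ext R (ModuleCat.{u} R) n).map a.op).app Y).hom x = 0 ↔
        (Ext.mk₀ a).comp y (zero_add n) = 0 := by
  obtain ⟨f, hf, rfl⟩ := (projectiveResolution X).extMk_surjective y (n + 1) rfl
  exact ⟨_, fun X' a => map_derivedClass_eq_zero_iff _ f hf a⟩

theorem subsingleton_extM_iff (i : ℕ) (M N : Type u) [AddCommGroup M] [Module R M]
    [AddCommGroup N] [Module R N] : Subsingleton (extM R i M N) ↔ ExtVanishes R i M N := by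
  constructor
  · refine fun h => ExtVanishes.of_forall_eq_zero fun y => ?_
    obtain ⟨x, hx⟩ := exists_forall_map_eq_zero_iff_ext y
    simpa using (hx _ (𝟙 _)).1 (by rw [h.elim x 0, map_zero])
  · refine fun h => subsingleton_of_forall_eq 0 fun x => ?_
    obtain ⟨y, hy⟩ := exists_ext_forall_map_eq_zero_iff x
    simpa using (hy _ (𝟙 _)).2 (by rw [h.eq_zero y, Ext.comp_zero])

end DerivedHom

section LocalCohomologyColimit

variable {R : Type u} [CommRing R]

theorem subsingleton_colimit_obj_iff {J : Type} [SmallCategory J] [IsFiltered J]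
    (F : J ⥤ ModuleCat.{u} R ⥤ ModuleCat.{u} R) [HasColimit F] (Y : ModuleCat.{u} R) :
    Subsingleton ((colimit F).obj Y) ↔ ∀ (j : J) (x : (F.obj j).obj Y), ∃ (j' : J) (f : j ⟶ j'),
      ((F.map f).app Y).hom x = 0 := by
  let evalY : (ModuleCat.{u} R ⥤ ModuleCat.{u} R) ⥤ ModuleCat.{u} R := (evaluation _ _).obj Y
  let c := evalY.mapCocone (colimit.cocone F)
  have hc : IsColimit c := isColimitOfPreserves evalY (colimit.isColimit F)
  have : PreservesColimitsOfShape J (forget (ModuleCat.{u} R)) := by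
    have := PreservesFilteredColimitsOfSize.preserves_filtered_colimits
      (F := forget (ModuleCat.{u} R)) (ULiftHom (ULift.{u} J))
    exact preservesColimitsOfShape_of_equiv (ULiftHomULiftCategory.equiv.{u, u} J).symm _
  constructor
  · intro h j x
    have hx : c.ι.app j x = c.ι.app j 0 := h.elim _ _
    rw [Concrete.isColimit_rep_eq_iff_exists _ hc] at hx
    obtain ⟨k, f, g, hfg⟩ := hx
    exact ⟨k, f, hfg.trans (map_zero _)⟩
  · refine fun h => subsingleton_of_forall_eq 0 fun x => ?_
    obtain ⟨j, y, rfl⟩ := Concrete.isColimit_exists_rep _ hc x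
    obtain ⟨j', f, hf⟩ := h j y
    rw [← c.w f]
    change c.ι.app j' (((F.map f).app Y).hom y) = 0
    rw [hf, map_zero]

/-- The transition map `R/I^n' → R/I^n`. -/
def quotientPowMap (I : Ideal R) {n n' : ℕ} (h : n ≤ n') : (R ⧸ I ^ n') →ₗ[R] (R ⧸ I ^ n) :=
  Submodule.mapQ _ _ LinearMap.id (Ideal.pow_le_pow_right h)

theorem subsingleton_locCoh_iff_forall_exists (I : Ideal R) (i : ℕ) (M : Type u) [AddCommGroup M]
    [Module R M] :
    Subsingleton (locCoh R I i M) ↔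
      ∀ n : ℕ, ∀ x : Abelian.Ext.{u} (ModuleCat.of R (R ⧸ I ^ n)) (ModuleCat.of R M) i,
        ∃ (n' : ℕ) (h : n ≤ n'),
          (Ext.mk₀ (ModuleCat.ofHom (quotientPowMap I h))).comp x (zero_add i) = 0 := by
  refine Iff.trans (subsingleton_colimit_obj_iff
    (localCohomology.diagram (localCohomology.idealPowersDiagram I) i) (ModuleCat.of R M)) ?_
  constructor
  · intro h n x
    obtain ⟨y, hy⟩ := exists_forall_map_eq_zero_iff_ext x
    obtain ⟨j', f, hf⟩ := h (op (op n)) y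
    exact ⟨j'.unop.unop, f.unop.unop.down.down, (hy _ _).1 hf⟩
  · intro h j x
    obtain ⟨y, hy⟩ := exists_ext_forall_map_eq_zero_iff
      (X := ModuleCat.of R (R ⧸ I ^ j.unop.unop)) (Y := ModuleCat.of R M) x
    obtain ⟨n', hn, hx⟩ := h j.unop.unop y
    exact ⟨op (op n'), (homOfLE hn).op.op, (hy _ _).2 hx⟩

end LocalCohomologyColimit

section LocalCohDefinition

variable {R : Type u} [CommRing R] (I : Ideal R) (N : Type u) [AddCommGroup N] [Module R N] (i : ℕ)

/-- `Ext^i_R(R/I^n, N)`, the `n`-th term of the direct system with limit `H^i_I(N)`. -/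
abbrev ExtQuotientPow (n : ℕ) : Type u :=
  Abelian.Ext.{u} (ModuleCat.of R (R ⧸ I ^ n)) (ModuleCat.of R N) i

/-- The transition map `Ext^i_R(R/I^n, N) → Ext^i_R(R/I^n', N)`. -/
noncomputable def extTransition (n n' : ℕ) (h : n ≤ n') :
    ExtQuotientPow I N i n →ₗ[R] ExtQuotientPow I N i n' where
  toFun x := (Ext.mk₀ (ModuleCat.ofHom (quotientPowMap I h))).comp x (zero_add i)
  map_add' x y := by rw [Ext.comp_add]
  map_smul' r x := by rw [Ext.comp_smul]; rfl

theorem extTransition_apply {n n' : ℕ} (h : n ≤ n') (x : ExtQuotientPow I N i n) :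
    extTransition I N i n n' h x =
      (Ext.mk₀ (ModuleCat.ofHom (quotientPowMap I h))).comp x (zero_add i) :=
  rfl

theorem quotientPowMap_refl (n : ℕ) : quotientPowMap I (le_refl n) = LinearMap.id := by
  ext; rfl

theorem quotientPowMap_comp {n n' n'' : ℕ} (h : n ≤ n') (h' : n' ≤ n'') :
    quotientPowMap I h ∘ₗ quotientPowMap I h' = quotientPowMap I (h.trans h') := by
  ext; rfl

instance directedSystem_extTransition :
    DirectedSystem (ExtQuotientPow I N i) (extTransition I N i · · ·) where
  map_self n x := by
    rw [extTransition_apply, quotientPowMap_refl, ModuleCat.ofHom_id, Ext.mk₀_id_comp]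
  map_map k j i' hij hjk x := by
    rw [extTransition_apply, extTransition_apply, extTransition_apply,
      ← quotientPowMap_comp I hij hjk, ModuleCat.ofHom_comp, ← Ext.mk₀_comp_mk₀,
      Ext.comp_assoc (h₁₂ := add_zero 0) (h₂₃ := zero_add i) (h := by simp)]

/-- The local cohomology module `H^i_I(N)`, as the direct limit of the modules
`Ext^i_R(R/I^n, N)`; `subsingleton_locCoh_iff` compares it with `locCoh`. -/
def LocalCoh : Type u :=
  Module.DirectLimit (R := R) (ExtQuotientPow I N i) (extTransition I N i)

noncomputable instance : AddCommGroup (LocalCoh I N i) :=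
  inferInstanceAs
    (AddCommGroup (Module.DirectLimit (R := R) (ExtQuotientPow I N i) (extTransition I N i)))

noncomputable instance : Module R (LocalCoh I N i) :=
  inferInstanceAs
    (Module R (Module.DirectLimit (R := R) (ExtQuotientPow I N i) (extTransition I N i)))

end LocalCohDefinition

namespace LocalCoh

variable {R : Type u} [CommRing R] {I : Ideal R}
  {A B C N : Type u} [AddCommGroup A] [Module R A] [AddCommGroup B] [Module R B]
  [AddCommGroup C] [Module R C] [AddCommGroup N] [Module R N] {i j j' k k' : ℕ}

/-- The canonical map `Ext^i_R(R/I^n, N) → H^i_I(N)`. -/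
noncomputable def mk (I : Ideal R) (n : ℕ) : ExtQuotientPow I N i n →ₗ[R] LocalCoh I N i :=
  Module.DirectLimit.of R ℕ (ExtQuotientPow I N i) (extTransition I N i) n

theorem exists_eq_mk (z : LocalCoh I N i) : ∃ n x, z = mk I n x := by
  obtain ⟨n, x, h⟩ := Module.DirectLimit.exists_of (G := ExtQuotientPow I N i)
    (f := extTransition I N i) z
  exact ⟨n, x, h.symm⟩

theorem mk_extTransition {n n' : ℕ} (h : n ≤ n') (x : ExtQuotientPow I N i n) :
    mk I n' (extTransition I N i n n' h x) = mk I n x :=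
  Module.DirectLimit.of_f (G := ExtQuotientPow I N i) (f := extTransition I N i)

theorem exists_extTransition_eq_zero {n : ℕ} {x : ExtQuotientPow I N i n} (hx : mk I n x = 0) :
    ∃ n', ∃ h : n ≤ n', extTransition I N i n n' h x = 0 :=
  Module.DirectLimit.of.zero_exact (G := ExtQuotientPow I N i) (f := extTransition I N i) hx

/-- The map out of `H^i_I(N)` induced by a compatible family of maps. -/
noncomputable def lift (g : ∀ n, ExtQuotientPow I N i n →ₗ[R] A)
    (hg : ∀ n n' h x, g n' (extTransition I N i n n' h x) = g n x) : LocalCoh I N i →ₗ[R] A :=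
  Module.DirectLimit.lift R ℕ (ExtQuotientPow I N i) (extTransition I N i) g hg

theorem lift_mk (g : ∀ n, ExtQuotientPow I N i n →ₗ[R] A)
    (hg : ∀ n n' h x, g n' (extTransition I N i n n' h x) = g n x) (n : ℕ)
    (x : ExtQuotientPow I N i n) : lift g hg (mk I n x) = g n x :=
  Module.DirectLimit.lift_of (G := ExtQuotientPow I N i) (f := extTransition I N i) _ _ _

theorem subsingleton_locCoh_iff :
    Subsingleton (locCoh R I i N) ↔ Subsingleton (LocalCoh I N i) := by
  rw [subsingleton_locCoh_iff_forall_exists]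
  constructor
  · refine fun h => subsingleton_of_forall_eq 0 fun z => ?_
    obtain ⟨n, x, rfl⟩ := exists_eq_mk z
    obtain ⟨n', h, hx⟩ := h n x
    rw [← mk_extTransition h, extTransition_apply, hx, map_zero]
  · exact fun h n x => exists_extTransition_eq_zero (h.elim (mk I n x) 0)

theorem extTransition_comp (α : Abelian.Ext.{u} (ModuleCat.of R A) (ModuleCat.of R B) k)
    (h : i + k = j) {n n' : ℕ} (hn : n ≤ n') (x : ExtQuotientPow I A i n) :
    (extTransition I A i n n' hn x).comp α h = extTransition I B j n n' hn (x.comp α h) := by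
  rw [extTransition_apply, extTransition_apply, Ext.comp_assoc]
  omega

/-- The map `H^i_I(A) → H^{i+k}_I(B)` induced by a class in `Ext^k_R(A, B)`. -/
noncomputable def postcomp (I : Ideal R)
    (α : Abelian.Ext.{u} (ModuleCat.of R A) (ModuleCat.of R B) k) (h : i + k = j) :
    LocalCoh I A i →ₗ[R] LocalCoh I B j :=
  lift (fun n => mk I n ∘ₗ
    { toFun := fun x => x.comp α h
      map_add' := fun x y => by rw [Ext.add_comp]
      map_smul' := fun r x => by rw [Ext.smul_comp]; rfl })
    fun n n' hn x => by
      simp only [LinearMap.comp_apply, LinearMap.coe_mk, AddHom.coe_mk, extTransition_comp,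
        mk_extTransition]

theorem postcomp_mk (α : Abelian.Ext.{u} (ModuleCat.of R A) (ModuleCat.of R B) k) (h : i + k = j)
    (n : ℕ) (x : ExtQuotientPow I A i n) :
    postcomp I α h (mk I n x) = mk I n (x.comp α h) :=
  lift_mk _ _ _ _

theorem exact_postcomp (α : Abelian.Ext.{u} (ModuleCat.of R A) (ModuleCat.of R B) k)
    (h : i + k = j) (β : Abelian.Ext.{u} (ModuleCat.of R B) (ModuleCat.of R C) k')
    (h' : j + k' = j') (hαβ : α.comp β rfl = 0)
    (hexact : ∀ (X : ModuleCat.{u} R) (y : Abelian.Ext.{u} X (ModuleCat.of R B) j),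
      y.comp β h' = 0 → ∃ x : Abelian.Ext.{u} X (ModuleCat.of R A) i, x.comp α h = y) :
    Function.Exact (postcomp I α h) (postcomp I β h') := by
  intro z
  constructor
  · intro hz
    obtain ⟨n, y, rfl⟩ := exists_eq_mk z
    rw [postcomp_mk] at hz
    obtain ⟨n', hn, hy⟩ := exists_extTransition_eq_zero hz
    obtain ⟨x, hx⟩ := hexact _ (extTransition I B j n n' hn y)
      ((extTransition_comp β h' hn y).trans hy)
    exact ⟨mk I n' x, by rw [postcomp_mk, hx, mk_extTransition]⟩
  · rintro ⟨w, rfl⟩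
    obtain ⟨n, x, rfl⟩ := exists_eq_mk w
    rw [postcomp_mk, postcomp_mk, Ext.comp_assoc (h₂₃ := rfl) (h := by omega), hαβ, Ext.comp_zero,
      map_zero]

/-- The map `H^i_I(A) → H^i_I(B)` induced by a linear map `A → B`. -/
noncomputable def map (I : Ideal R) (i : ℕ) (f : A →ₗ[R] B) : LocalCoh I A i →ₗ[R] LocalCoh I B i :=
  postcomp I (Ext.mk₀ (ModuleCat.ofHom f)) (add_zero i)

theorem map_mk (f : A →ₗ[R] B) (n : ℕ) (x : ExtQuotientPow I A i n) :
    map I i f (mk I n x) = mk I n (x.comp (Ext.mk₀ (ModuleCat.ofHom f)) (add_zero i)) :=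
  postcomp_mk _ _ _ _

theorem map_comp (f : A →ₗ[R] B) (g : B →ₗ[R] C) (z : LocalCoh I A i) :
    map I i (g ∘ₗ f) z = map I i g (map I i f z) := by
  obtain ⟨n, y, rfl⟩ := exists_eq_mk z
  rw [map_mk, map_mk, map_mk, ModuleCat.ofHom_comp, ← Ext.mk₀_comp_mk₀, Ext.comp_assoc]
  omega

theorem map_id (z : LocalCoh I A i) : map I i LinearMap.id z = z := by
  obtain ⟨n, y, rfl⟩ := exists_eq_mk z
  rw [map_mk, ModuleCat.ofHom_id, Ext.comp_mk₀_id]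

theorem map_smul_left (r : R) (f : A →ₗ[R] B) (z : LocalCoh I A i) :
    map I i (r • f) z = r • map I i f z := by
  obtain ⟨n, y, rfl⟩ := exists_eq_mk z
  have ofHom_smul : ModuleCat.ofHom (r • f) = r • ModuleCat.ofHom f := rfl
  rw [map_mk, map_mk, ofHom_smul, Ext.mk₀_smul, Ext.comp_smul, map_smul]

theorem map_add_left (f g : A →ₗ[R] B) (z : LocalCoh I A i) :
    map I i (f + g) z = map I i f z + map I i g z := by
  obtain ⟨n, y, rfl⟩ := exists_eq_mk z
  have ofHom_add : ModuleCat.ofHom (f + g) = ModuleCat.ofHom f + ModuleCat.ofHom g := rfl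
  rw [map_mk, map_mk, map_mk, ofHom_add, Ext.mk₀_add, Ext.comp_add, map_add]

theorem map_zero_left (z : LocalCoh I A i) : map I i (0 : A →ₗ[R] B) z = 0 := by
  simpa using map_smul_left 0 (0 : A →ₗ[R] B) z

theorem map_sum_left {ι : Type*} (s : Finset ι) (f : ι → A →ₗ[R] B) (z : LocalCoh I A i) :
    map I i (∑ k ∈ s, f k) z = ∑ k ∈ s, map I i (f k) z := by
  classical
  induction s using Finset.induction_on with
  | empty => simp [map_zero_left]
  | insert a s ha ih => rw [Finset.sum_insert ha, Finset.sum_insert ha, map_add_left, ih]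

theorem map_lsmul (r : R) (z : LocalCoh I A i) :
    map I i (LinearMap.lsmul R A r) z = r • z := by
  have lsmul_eq : LinearMap.lsmul R A r = r • LinearMap.id := by ext; simp
  rw [lsmul_eq, map_smul_left, map_id]

theorem smul_eq_zero_of_forall_smul_eq_zero {r : R} (h : ∀ a : A, r • a = 0)
    (z : LocalCoh I A i) : r • z = 0 := by
  have lsmul_eq : LinearMap.lsmul R A r = 0 := by ext; simp [h]
  rw [← map_lsmul, lsmul_eq, map_zero_left]

theorem exists_forall_mem_pow_smul_eq_zero (z : LocalCoh I A i) :
    ∃ n : ℕ, ∀ r ∈ I ^ n, r • z = 0 := by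
  obtain ⟨n, y, rfl⟩ := exists_eq_mk z
  refine ⟨n, fun r hr => ?_⟩
  have smul_id_eq_zero : r • 𝟙 (ModuleCat.of R (R ⧸ I ^ n)) = 0 := by
    ext
    change r • (Ideal.Quotient.mk (I ^ n) 1) = 0
    rw [← Ideal.Quotient.mk_eq_mk, ← Submodule.Quotient.mk_smul]
    exact (Submodule.Quotient.mk_eq_zero _).2 (by simpa using hr)
  have smul_eq : r • y = (Ext.mk₀ (r • 𝟙 (ModuleCat.of R (R ⧸ I ^ n)))).comp y (zero_add i) := by
    rw [Ext.mk₀_smul, Ext.smul_comp, Ext.mk₀_id_comp]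
  rw [← map_smul, smul_eq, smul_id_eq_zero, Ext.mk₀_zero, Ext.zero_comp, map_zero]

theorem exists_pow_smul_eq_zero {u : R} (hu : u ∈ I) (z : LocalCoh I A i) :
    ∃ n : ℕ, u ^ n • z = 0 := by
  obtain ⟨n, hn⟩ := exists_forall_mem_pow_smul_eq_zero z
  exact ⟨n, hn _ (Ideal.pow_mem_pow hu n)⟩

theorem subsingleton_of_smul_injective {u : R} (hu : u ∈ I)
    (h : ∀ z : LocalCoh I A i, u • z = 0 → z = 0) : Subsingleton (LocalCoh I A i) := by
  refine subsingleton_of_forall_eq 0 fun z => ?_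
  obtain ⟨n, hn⟩ := exists_pow_smul_eq_zero hu z
  induction n with
  | zero => simpa using hn
  | succ n ih => exact ih (h _ (by rw [smul_smul, ← pow_succ', hn]))

/-- The isomorphism `H^i_I(A) ≃ H^i_I(B)` induced by an isomorphism `A ≃ B`. -/
noncomputable def congr (I : Ideal R) (i : ℕ) (e : A ≃ₗ[R] B) :
    LocalCoh I A i ≃ₗ[R] LocalCoh I B i :=
  .ofLinearMap (map I i e.toLinearMap) (map I i e.symm.toLinearMap)
    (LinearMap.ext fun z => by rw [LinearMap.comp_apply, ← map_comp, e.comp_symm, map_id]; rfl)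
    (LinearMap.ext fun z => by rw [LinearMap.comp_apply, ← map_comp, e.symm_comp, map_id]; rfl)

theorem subsingleton_congr (e : A ≃ₗ[R] B) (h : Subsingleton (LocalCoh I A i)) :
    Subsingleton (LocalCoh I B i) :=
  (congr I i e).toEquiv.subsingleton_congr.1 h

theorem subsingleton_of_subsingleton [Subsingleton A] : Subsingleton (LocalCoh I A i) := by
  refine subsingleton_of_forall_eq 0 fun z => ?_
  rw [← map_id z, Subsingleton.elim (LinearMap.id : A →ₗ[R] A) 0, map_zero_left]

theorem map_zero_injective {f : A →ₗ[R] B} (hf : Function.Injective f) :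
    Function.Injective (map I 0 f) := by
  refine (injective_iff_map_eq_zero _).2 fun z hz => ?_
  obtain ⟨n, y, rfl⟩ := exists_eq_mk z
  rw [map_mk] at hz
  obtain ⟨n', hn, hy⟩ := exists_extTransition_eq_zero hz
  rw [← extTransition_comp] at hy
  obtain ⟨φ, hφ⟩ := (Ext.mk₀_bijective _ _).2 (extTransition I A 0 n n' hn y)
  have : Mono (ModuleCat.ofHom f) := (ModuleCat.mono_iff_injective _).2 hf
  rw [← hφ, Ext.mk₀_comp_mk₀, Ext.mk₀_eq_zero_iff] at hy
  rw [← mk_extTransition hn, ← hφ, zero_of_comp_mono _ hy, Ext.mk₀_zero, map_zero]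

section LongExactSequence

variable {f : A →ₗ[R] B} {g : B →ₗ[R] C} (hf : Function.Injective f)
  (hfg : Function.Exact f g) (hg : Function.Surjective g)

/-- The connecting homomorphism of a short exact sequence `0 → A → B → C → 0`. -/
noncomputable def delta (I : Ideal R) (i : ℕ) : LocalCoh I C i →ₗ[R] LocalCoh I A (i + 1) :=
  postcomp I (shortExact_shortComplexOfExact hf hfg hg).extClass rfl

include hf hfg hg

theorem exact_map_map : Function.Exact (map I i f) (map I i g) :=
  exact_postcomp _ _ _ _
    (((Ext.mk₀_comp_mk₀ _ _).trans (congrArg Ext.mk₀ (shortComplexOfExact f g hfg).zero)).trans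
      (Ext.mk₀_zero _ _))
    fun X y hy => Ext.covariant_sequence_exact₂ X (shortExact_shortComplexOfExact hf hfg hg) y hy

theorem exact_delta_map : Function.Exact (delta hf hfg hg I i) (map I (i + 1) f) :=
  exact_postcomp _ _ _ _ (shortExact_shortComplexOfExact hf hfg hg).extClass_comp
    fun X y hy =>
      Ext.covariant_sequence_exact₁ X (shortExact_shortComplexOfExact hf hfg hg) y hy rfl

theorem exact_map_delta : Function.Exact (map I i g) (delta hf hfg hg I i) :=
  exact_postcomp _ _ _ _ (shortExact_shortComplexOfExact hf hfg hg).comp_extClass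
    fun X y hy =>
      Ext.covariant_sequence_exact₃ X (shortExact_shortComplexOfExact hf hfg hg) y rfl hy

theorem subsingleton_middle (h₁ : Subsingleton (LocalCoh I A i))
    (h₃ : Subsingleton (LocalCoh I C i)) : Subsingleton (LocalCoh I B i) := by
  refine subsingleton_of_forall_eq 0 fun z => ?_
  obtain ⟨w, rfl⟩ := (exact_map_map hf hfg hg z).1 (h₃.elim _ _)
  rw [h₁.elim w 0, map_zero]

theorem subsingleton_left (h₃ : Subsingleton (LocalCoh I C i))
    (h₂ : Subsingleton (LocalCoh I B (i + 1))) : Subsingleton (LocalCoh I A (i + 1)) := by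
  refine subsingleton_of_forall_eq 0 fun z => ?_
  obtain ⟨w, rfl⟩ := (exact_delta_map hf hfg hg z).1 (h₂.elim _ _)
  rw [h₃.elim w 0, map_zero]

theorem subsingleton_right (h₂ : Subsingleton (LocalCoh I B i))
    (h₁ : Subsingleton (LocalCoh I A (i + 1))) : Subsingleton (LocalCoh I C i) := by
  refine subsingleton_of_forall_eq 0 fun z => ?_
  obtain ⟨w, rfl⟩ := (exact_map_delta hf hfg hg z).1 (h₁.elim _ _)
  rw [h₂.elim w 0, map_zero]

end LongExactSequence

end LocalCoh

section PowTorsion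

variable {R : Type u} [CommRing R] {I : Ideal R}
  {A B L N : Type u} [AddCommGroup A] [Module R A] [AddCommGroup B] [Module R B]
  [AddCommGroup L] [Module R L] [AddCommGroup N] [Module R N]

/-- Every element of `N` is killed by a power of `I`, i.e. `Γ_I(N) = N`. -/
def IsPowTorsion (I : Ideal R) (N : Type u) [AddCommGroup N] [Module R N] : Prop :=
  ∀ y : N, ∃ n : ℕ, ∀ r ∈ I ^ n, r • y = 0

theorem IsPowTorsion.of_surjective {f : A →ₗ[R] B} (h : IsPowTorsion I A)
    (hf : Function.Surjective f) : IsPowTorsion I B := by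
  intro y
  obtain ⟨x, rfl⟩ := hf y
  obtain ⟨n, hn⟩ := h x
  exact ⟨n, fun r hr => by rw [← map_smul, hn r hr, map_zero]⟩

theorem IsPowTorsion.exists_forall_mem_smul_eq_zero (h : IsPowTorsion I A) {N : Submodule R A}
    (hN : N.FG) : ∃ n : ℕ, ∀ r ∈ I ^ n, ∀ y ∈ N, r • y = 0 := by
  induction N, hN using Submodule.fg_induction with
  | singleton x =>
    obtain ⟨n, hn⟩ := h x
    refine ⟨n, fun r hr y hy => ?_⟩
    obtain ⟨a, rfl⟩ := Submodule.mem_span_singleton.1 hy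
    rw [smul_comm, hn r hr, smul_zero]
  | sup N₁ N₂ _ _ ih₁ ih₂ =>
    obtain ⟨n₁, h₁⟩ := ih₁
    obtain ⟨n₂, h₂⟩ := ih₂
    refine ⟨max n₁ n₂, fun r hr y hy => ?_⟩
    obtain ⟨a, ha, b, hb, rfl⟩ := Submodule.mem_sup.1 hy
    rw [smul_add, h₁ r (Ideal.pow_le_pow_right (le_max_left _ _) hr) a ha,
      h₂ r (Ideal.pow_le_pow_right (le_max_right _ _) hr) b hb, add_zero]

theorem isPowTorsion_gammaTorsion : IsPowTorsion I (gammaTorsion R I N) := by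
  rintro ⟨y, n, h⟩
  exact ⟨n, fun r hr => Subtype.ext (h r hr)⟩

/-- Artin–Rees. -/
theorem IsPowTorsion.exists_forall_mem_pow_smul_top_apply_eq_zero [IsNoetherianRing R]
    [Module.Finite R L] (hN : IsPowTorsion I N) (J : Submodule R L) (g : J →ₗ[R] N) :
    ∃ n : ℕ, ∀ x : J, (x : L) ∈ I ^ n • (⊤ : Submodule R L) → g x = 0 := by
  obtain ⟨n, hn⟩ := hN.exists_forall_mem_smul_eq_zero (N := LinearMap.range g)
    (by rw [LinearMap.range_eq_map]; exact (IsNoetherian.noetherian (⊤ : Submodule R J)).map g)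
  obtain ⟨k, hk⟩ := Ideal.exists_pow_inf_eq_pow_smul I J
  have hle : I ^ (n + k) • (⊤ : Submodule R L) ⊓ J ≤ I ^ n • J := by
    rw [hk (n + k) (Nat.le_add_left k n), Nat.add_sub_cancel]
    exact Submodule.smul_mono le_rfl inf_le_right
  refine ⟨n + k, fun x hx => ?_⟩
  have smul_le : I ^ n • J ≤ (LinearMap.ker g).map J.subtype := by
    refine Submodule.smul_le.2 fun r hr y hy => ⟨r • ⟨y, hy⟩, ?_, rfl⟩
    exact (map_smul g r _).trans (hn r hr _ ⟨_, rfl⟩)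
  obtain ⟨y, hy, hyx⟩ := smul_le (hle ⟨hx, x.2⟩)
  rw [← Subtype.ext hyx]
  exact hy

theorem baer_gammaTorsion [IsNoetherianRing R] (hN : Module.Injective R N) :
    Module.Baer R (gammaTorsion R I N) := by
  intro J g
  obtain ⟨n, hn⟩ := isPowTorsion_gammaTorsion.exists_forall_mem_pow_smul_top_apply_eq_zero J g
  replace hn : ∀ x : J, (x : R) ∈ I ^ n → g x = 0 := fun x hx => hn x (by simpa using hx)
  let S : Submodule R J := Submodule.comap J.subtype (I ^ n)
  let ι : (J ⧸ S) →ₗ[R] (R ⧸ I ^ n) := Submodule.mapQ _ _ J.subtype le_rfl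
  have hι : Function.Injective ι := by
    refine LinearMap.ker_eq_bot.1 (Submodule.ker_liftQ_eq_bot _ _ _ fun x hx => ?_)
    exact (Submodule.Quotient.mk_eq_zero (I ^ n)).1 hx
  obtain ⟨ψ, hψ⟩ := hN.out ι hι (Submodule.liftQ S ((gammaTorsion R I N).subtype ∘ₗ g)
    fun x hx => by simp [hn x hx])
  refine ⟨LinearMap.codRestrict (gammaTorsion R I N) (ψ ∘ₗ Submodule.mkQ _) fun c => ⟨n, ?_⟩,
    fun x hx => Subtype.ext (hψ (Submodule.Quotient.mk ⟨x, hx⟩))⟩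
  intro r hr
  have mem : r • c ∈ I ^ n := Ideal.mul_mem_right _ _ hr
  rw [← map_smul, LinearMap.comp_apply, Submodule.mkQ_apply,
    (Submodule.Quotient.mk_eq_zero _).2 mem, map_zero]

theorem exists_injective_linearMap_to_injective (N : Type u) [AddCommGroup N] [Module R N] :
    ∃ (E : Type u) (_ : AddCommGroup E) (_ : Module R E) (f : N →ₗ[R] E),
      Module.Injective R E ∧ Function.Injective f := by
  let E : ModuleCat.{u} R := Injective.under (ModuleCat.of R N)
  have : Injective (ModuleCat.of R (E : Type u)) :=
    inferInstanceAs (Injective (Injective.under (ModuleCat.of R N)))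
  let ι : ModuleCat.of R N ⟶ E := Injective.ι (ModuleCat.of R N)
  have hι : Mono ι := inferInstanceAs (Mono (Injective.ι (ModuleCat.of R N)))
  exact ⟨E, inferInstance, inferInstance, ι.hom,
    Module.injective_module_of_injective_object R (E : Type u),
    (ModuleCat.mono_iff_injective ι).1 hι⟩

theorem IsPowTorsion.exists_injective_embedding [IsNoetherianRing R] (h : IsPowTorsion I N) :
    ∃ (E : Type u) (_ : AddCommGroup E) (_ : Module R E) (f : N →ₗ[R] E),
      Injective (ModuleCat.of R E) ∧ IsPowTorsion I E ∧ Function.Injective f := by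
  obtain ⟨E, _, _, f, hE, hf⟩ := exists_injective_linearMap_to_injective (R := R) N
  have : Module.Injective R (gammaTorsion R I E) := (baer_gammaTorsion hE).injective
  have hfc (c : N) : f c ∈ gammaTorsion R I E :=
    (h c).imp fun n hn r hr => by rw [← map_smul, hn r hr, map_zero]
  exact ⟨gammaTorsion R I E, inferInstance, inferInstance, f.codRestrict _ hfc,
    Module.injective_object_of_injective_module R _, isPowTorsion_gammaTorsion,
    fun a b hab => hf (congrArg Subtype.val hab)⟩

end PowTorsion

namespace LocalCoh

variable {R : Type u} [CommRing R] {I : Ideal R}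
  {A B N : Type u} [AddCommGroup A] [Module R A] [AddCommGroup B] [Module R B]
  [AddCommGroup N] [Module R N]

/-- Evaluation at `1` of a map `R/I^n → N`, on degree-zero `Ext` classes. -/
noncomputable def evalOneAt (I : Ideal R) (N : Type u) [AddCommGroup N] [Module R N] (n : ℕ) :
    ExtQuotientPow I N 0 n →ₗ[R] N where
  toFun x := (Ext.homEquiv₀ x).hom (Submodule.Quotient.mk (1 : R))
  map_add' x y := by
    have homEquiv₀_add : Ext.homEquiv₀ (x + y) = Ext.homEquiv₀ x + Ext.homEquiv₀ y :=
      (Ext.linearEquiv₀ (R := R)).map_add x y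
    rw [homEquiv₀_add]; rfl
  map_smul' r x := by
    have homEquiv₀_smul : Ext.homEquiv₀ (r • x) = r • Ext.homEquiv₀ x :=
      (Ext.linearEquiv₀ (R := R)).map_smul r x
    rw [homEquiv₀_smul]; rfl

theorem evalOneAt_mk₀ (n : ℕ) (φ : (R ⧸ I ^ n) →ₗ[R] N) :
    evalOneAt I N n (Ext.mk₀ (ModuleCat.ofHom φ)) = φ (Submodule.Quotient.mk 1) := by
  have homEquiv₀_mk₀ : Ext.homEquiv₀ (Ext.mk₀ (ModuleCat.ofHom φ)) = ModuleCat.ofHom φ :=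
    Ext.homEquiv₀.apply_symm_apply _
  simp [evalOneAt, homEquiv₀_mk₀]

theorem exists_eq_mk₀ (n : ℕ) (x : ExtQuotientPow I N 0 n) :
    ∃ φ : (R ⧸ I ^ n) →ₗ[R] N, x = Ext.mk₀ (ModuleCat.ofHom φ) := by
  obtain ⟨φ, hφ⟩ := (Ext.mk₀_bijective _ _).2 x
  exact ⟨φ.hom, hφ.symm⟩

/-- The identification of `H^0_I(N)` with the torsion submodule `Γ_I(N)`, as an injection
into `N`. -/
noncomputable def evalOne (I : Ideal R) (N : Type u) [AddCommGroup N] [Module R N] :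
    LocalCoh I N 0 →ₗ[R] N :=
  lift (evalOneAt I N) fun n n' h x => by
    obtain ⟨φ, rfl⟩ := exists_eq_mk₀ n x
    rw [extTransition_apply, Ext.mk₀_comp_mk₀, ← ModuleCat.ofHom_comp, evalOneAt_mk₀,
      evalOneAt_mk₀]
    rfl

theorem evalOne_mk (n : ℕ) (φ : (R ⧸ I ^ n) →ₗ[R] N) :
    evalOne I N (mk I n (Ext.mk₀ (ModuleCat.ofHom φ))) = φ (Submodule.Quotient.mk 1) := by
  rw [evalOne, lift_mk, evalOneAt_mk₀]

theorem evalOne_injective : Function.Injective (evalOne I N) := by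
  refine (injective_iff_map_eq_zero _).2 fun z hz => ?_
  obtain ⟨n, x, rfl⟩ := exists_eq_mk z
  obtain ⟨φ, rfl⟩ := exists_eq_mk₀ n x
  rw [evalOne_mk] at hz
  obtain rfl : φ = 0 := by
    ext
    exact hz
  change mk I n (Ext.mk₀ 0) = 0
  rw [Ext.mk₀_zero, map_zero]

theorem exists_evalOne_eq {y : N} {n : ℕ} (h : ∀ r ∈ I ^ n, r • y = 0) :
    ∃ z, evalOne I N z = y := by
  refine ⟨mk I n (Ext.mk₀ (ModuleCat.ofHom (Submodule.liftQ (I ^ n)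
    (LinearMap.toSpanSingleton R N y) fun r hr => by simpa using h r hr))), ?_⟩
  rw [evalOne_mk]
  exact (Submodule.liftQ_apply _ _ _).trans (by simp)

theorem evalOne_map (f : A →ₗ[R] B) (z : LocalCoh I A 0) :
    evalOne I B (map I 0 f z) = f (evalOne I A z) := by
  obtain ⟨n, x, rfl⟩ := exists_eq_mk z
  obtain ⟨φ, rfl⟩ := exists_eq_mk₀ n x
  rw [evalOne_mk, map_mk, Ext.mk₀_comp_mk₀, ← ModuleCat.ofHom_comp, evalOne_mk]
  rfl

theorem map_zero_surjective_of_isPowTorsion {f : A →ₗ[R] B} (hf : Function.Surjective f)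
    (hA : IsPowTorsion I A) : Function.Surjective (map I 0 f) := by
  intro z
  obtain ⟨y, hy⟩ := hf (evalOne I B z)
  obtain ⟨n, hn⟩ := hA y
  obtain ⟨w, rfl⟩ := exists_evalOne_eq hn
  exact ⟨w, evalOne_injective (by rw [evalOne_map, hy])⟩

theorem subsingleton_succ_of_injective (i : ℕ) (h : Injective (ModuleCat.of R N)) :
    Subsingleton (LocalCoh I N (i + 1)) := by
  refine subsingleton_of_forall_eq 0 fun z => ?_
  obtain ⟨n, x, rfl⟩ := exists_eq_mk z
  rw [Ext.eq_zero_of_injective x, _root_.map_zero]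

theorem subsingleton_succ_of_isPowTorsion [IsNoetherianRing R] (i : ℕ) (h : IsPowTorsion I N) :
    Subsingleton (LocalCoh I N (i + 1)) := by
  induction i generalizing N with
  | zero =>
    obtain ⟨E, _, _, f, hE, hEtors, hf⟩ := h.exists_injective_embedding
    have hfg : Function.Exact f (LinearMap.range f).mkQ := LinearMap.exact_map_mkQ_range f
    have hg := Submodule.mkQ_surjective (LinearMap.range f)
    refine subsingleton_of_forall_eq 0 fun z => ?_
    obtain ⟨w, rfl⟩ := (exact_delta_map hf hfg hg z).1
      ((subsingleton_succ_of_injective 0 hE).elim _ _)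
    exact (exact_map_delta hf hfg hg w).2 (map_zero_surjective_of_isPowTorsion hg hEtors w)
  | succ i ih =>
    obtain ⟨E, _, _, f, hE, hEtors, hf⟩ := h.exists_injective_embedding
    have hg := Submodule.mkQ_surjective (LinearMap.range f)
    exact subsingleton_left hf (LinearMap.exact_map_mkQ_range f) hg
      (ih (hEtors.of_surjective hg)) (subsingleton_succ_of_injective _ hE)

end LocalCoh

section RegularOnQuotient

variable {R : Type u} [CommRing R] {J : Ideal R} {u : R}

theorem lsmul_injective {N : Type u} [AddCommGroup N] [Module R N] (h : IsSMulRegular N u) :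
    Function.Injective (LinearMap.lsmul R N u) := h

theorem exact_lsmul_factor_sup_span (J : Ideal R) (u : R) :
    Function.Exact (LinearMap.lsmul R (R ⧸ J) u)
      (Submodule.factor (le_sup_left : J ≤ J ⊔ Ideal.span {u})) := by
  intro y
  obtain ⟨y, rfl⟩ := Submodule.Quotient.mk_surjective _ y
  change Submodule.Quotient.mk y = 0 ↔ _
  rw [Submodule.Quotient.mk_eq_zero]
  constructor
  · intro h
    obtain ⟨a, ha, b, hb, rfl⟩ := Submodule.mem_sup.1 h
    obtain ⟨c, rfl⟩ := Ideal.mem_span_singleton'.1 hb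
    refine ⟨Submodule.Quotient.mk c, ?_⟩
    change Submodule.Quotient.mk (u * c) = Submodule.Quotient.mk _
    rw [Submodule.Quotient.eq, show u * c - (a + c * u) = -a by ring]
    exact J.neg_mem ha
  · rintro ⟨x, hx⟩
    obtain ⟨x, rfl⟩ := Submodule.Quotient.mk_surjective _ x
    change Submodule.Quotient.mk (u * x) = Submodule.Quotient.mk _ at hx
    rw [Submodule.Quotient.eq] at hx
    rw [show y = -(u * x - y) + x * u by ring]
    exact Submodule.add_mem_sup (J.neg_mem hx) (Ideal.mem_span_singleton'.2 ⟨x, rfl⟩)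

theorem ringKrullDim_quotient_sup_span_add_one_le (h : IsSMulRegular (R ⧸ J) u) :
    ringKrullDim (R ⧸ (J ⊔ Ideal.span {u})) + 1 ≤ ringKrullDim (R ⧸ J) := by
  have mem : Ideal.Quotient.mk J u ∈ nonZeroDivisors (R ⧸ J) := by
    refine mem_nonZeroDivisors_iff_right.2 fun x hx => h ?_
    change u • x = u • 0
    rwa [smul_zero, Algebra.smul_def, mul_comm]
  rw [← ringKrullDim_eq_of_ringEquiv (DoubleQuot.quotQuotEquivQuotSup J (Ideal.span {u})),
    Ideal.map_span, Set.image_singleton]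
  exact ringKrullDim_quotient_succ_le_of_nonZeroDivisor mem

theorem ringKrullDim_quotient_sup_span_le (h : IsSMulRegular (R ⧸ J) u) {n : ℕ}
    (hn : ringKrullDim (R ⧸ J) ≤ (n + 1 : ℕ)) :
    ringKrullDim (R ⧸ (J ⊔ Ideal.span {u})) ≤ n := by
  rw [← ENat.WithBot.add_le_add_one_right_iff]
  exact_mod_cast (ringKrullDim_quotient_sup_span_add_one_le h).trans hn

theorem ringKrullDim_quotient_pos_of_isSMulRegular [IsLocalRing R] (h : IsSMulRegular (R ⧸ J) u)
    (hJ : J ≤ maximalIdeal R) (hu : u ∈ maximalIdeal R) : 0 < ringKrullDim (R ⧸ J) := by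
  have sup_le_maximalIdeal : J ⊔ Ideal.span {u} ≤ maximalIdeal R :=
    sup_le hJ ((Ideal.span_singleton_le_iff_mem _).2 hu)
  have : Nontrivial (R ⧸ (J ⊔ Ideal.span {u})) := Ideal.Quotient.nontrivial_iff.2 fun htop =>
    (maximalIdeal.isMaximal R).ne_top (top_le_iff.1 (htop ▸ sup_le_maximalIdeal))
  calc (0 : WithBot ℕ∞) < 0 + 1 := by simp
    _ ≤ ringKrullDim (R ⧸ (J ⊔ Ideal.span {u})) + 1 := by
      gcongr
      exact ringKrullDim_nonneg_of_nontrivial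
    _ ≤ ringKrullDim (R ⧸ J) := ringKrullDim_quotient_sup_span_add_one_le h

theorem exists_mem_isSMulRegular_quotient [IsNoetherianRing R] {I : Ideal R}
    (h : ∀ x, (∀ r ∈ I, r * x ∈ J) → x ∈ J) : ∃ u ∈ I, IsSMulRegular (R ⧸ J) u := by
  have : Subsingleton ((R ⧸ I) →ₗ[R] (R ⧸ J)) := by
    refine subsingleton_of_forall_eq 0 fun f => ?_
    ext
    change f (Submodule.Quotient.mk 1) = 0
    obtain ⟨x, hx⟩ := Submodule.Quotient.mk_surjective _ (f (Submodule.Quotient.mk 1))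
    rw [← hx, Submodule.Quotient.mk_eq_zero]
    refine h x fun r hr => ?_
    have smul_one : r • (Submodule.Quotient.mk 1 : R ⧸ I) = 0 := by
      rw [← Submodule.Quotient.mk_smul, Submodule.Quotient.mk_eq_zero]
      simpa using hr
    rw [← smul_eq_mul, ← Submodule.Quotient.mk_eq_zero, Submodule.Quotient.mk_smul, hx,
      ← map_smul, smul_one, map_zero]
  simpa only [Ideal.annihilator_quotient] using IsSMulRegular.subsingleton_linearMap_iff.1 this

end RegularOnQuotient

section Saturation

variable {R : Type u} [CommRing R]

/-- The saturation `⋃ₙ (J : I^n)` of `J` with respect to `I`, i.e. the ideal with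
`saturation I J / J = Γ_I(R/J)`. -/
def saturation (I J : Ideal R) : Ideal R :=
  Submodule.comap (Submodule.mkQ J) (gammaTorsion R I (R ⧸ J))

variable (I J : Ideal R)

theorem le_saturation : J ≤ saturation I J := by
  intro x hx
  change (Submodule.Quotient.mk x : R ⧸ J) ∈ gammaTorsion R I (R ⧸ J)
  rw [(Submodule.Quotient.mk_eq_zero _).2 hx]
  exact Submodule.zero_mem _

theorem mem_saturation_iff (x : R) :
    x ∈ saturation I J ↔ ∃ n : ℕ, ∀ r ∈ I ^ n, r * x ∈ J := by
  refine exists_congr fun n => forall₂_congr fun r _ => ?_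
  change (Submodule.Quotient.mk (r * x) : R ⧸ J) = 0 ↔ _
  rw [Submodule.Quotient.mk_eq_zero]

theorem exact_gammaTorsion_factor_saturation :
    Function.Exact (gammaTorsion R I (R ⧸ J)).subtype (Submodule.factor (le_saturation I J)) := by
  intro y
  obtain ⟨y, rfl⟩ := Submodule.Quotient.mk_surjective _ y
  change Submodule.Quotient.mk y = 0 ↔ _
  rw [Submodule.Quotient.mk_eq_zero]
  refine ⟨fun h => ⟨⟨_, h⟩, rfl⟩, ?_⟩
  rintro ⟨⟨x, hx⟩, rfl⟩
  exact hx

theorem ringKrullDim_quotient_saturation_le {I J : Ideal R} {n : WithBot ℕ∞}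
    (hn : ringKrullDim (R ⧸ J) ≤ n) :
    ringKrullDim (R ⧸ saturation I J) ≤ n :=
  (ringKrullDim_le_of_surjective (Ideal.Quotient.factor (le_saturation I J))
    (Ideal.Quotient.factor_surjective _)).trans hn

variable [IsNoetherianRing R]

theorem mem_saturation_of_forall_mul_mem (x : R) (h : ∀ r ∈ I, r * x ∈ saturation I J) :
    x ∈ saturation I J := by
  obtain ⟨n, hn⟩ := (isPowTorsion_gammaTorsion (I := I) (N := R ⧸ J)).exists_forall_mem_smul_eq_zero
    (IsNoetherian.noetherian ⊤)
  have hle : I ^ n • saturation I J ≤ J := by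
    refine Submodule.smul_le.2 fun r hr s hs => ?_
    have := congrArg Subtype.val (hn r hr ⟨Submodule.Quotient.mk s, hs⟩ trivial)
    exact (Submodule.Quotient.mk_eq_zero J).1 this
  refine (mem_saturation_iff I J x).2 ⟨n + 1, fun r hr => hle ?_⟩
  rw [pow_succ] at hr
  refine Submodule.mul_induction_on hr (fun a ha b hb => ?_) fun a b ha hb => ?_
  · rw [mul_assoc]
    exact Submodule.smul_mem_smul ha (h b hb)
  · rw [add_mul]
    exact add_mem ha hb

theorem saturation_eq_top_or_exists_isSMulRegular [IsLocalRing R] :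
    saturation (maximalIdeal R) J = ⊤ ∨ saturation (maximalIdeal R) J ≤ maximalIdeal R ∧
      ∃ u ∈ maximalIdeal R, IsSMulRegular (R ⧸ saturation (maximalIdeal R) J) u :=
  or_iff_not_imp_left.2 fun h => ⟨le_maximalIdeal h,
    exists_mem_isSMulRegular_quotient (mem_saturation_of_forall_mul_mem _ J)⟩

variable {I J}

theorem exists_maximalIdeal_pow_le [IsLocalRing R] (hJ : ringKrullDim (R ⧸ J) ≤ 0) :
    ∃ k, maximalIdeal R ^ k ≤ J := by
  rcases saturation_eq_top_or_exists_isSMulRegular J with htop | ⟨hle, u, hu, hreg⟩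
  · obtain ⟨n, hn⟩ := (mem_saturation_iff (maximalIdeal R) J 1).1 (htop ▸ Submodule.mem_top)
    exact ⟨n, fun r hr => by simpa using hn r hr⟩
  · exact absurd (ringKrullDim_quotient_saturation_le hJ)
      (ringKrullDim_quotient_pos_of_isSMulRegular hreg hle hu).not_ge

end Saturation

namespace LocalCoh

variable {R : Type u} [CommRing R] {I J : Ideal R} {u : R}

theorem map_lsmul_eq_lsmul {N : Type u} [AddCommGroup N] [Module R N] (I : Ideal R) (i : ℕ) :
    map I i (LinearMap.lsmul R N u) = LinearMap.lsmul R (LocalCoh I N i) u :=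
  LinearMap.ext (map_lsmul u)

theorem le_annihilator_quotient (i : ℕ) :
    J ≤ Module.annihilator R (LocalCoh I (R ⧸ J) i) := fun _ hr =>
  Module.mem_annihilator.2 <| smul_eq_zero_of_forall_smul_eq_zero <|
    Module.mem_annihilator.1 (Ideal.annihilator_quotient.ge hr)

theorem subsingleton_succ_of_isSMulRegular (hu : u ∈ I) (hreg : IsSMulRegular (R ⧸ J) u) {i : ℕ}
    (h : Subsingleton (LocalCoh I (R ⧸ (J ⊔ Ideal.span {u})) i)) :
    Subsingleton (LocalCoh I (R ⧸ J) (i + 1)) := by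
  refine subsingleton_of_smul_injective hu fun z hz => ?_
  rw [← map_lsmul] at hz
  obtain ⟨w, rfl⟩ := (exact_delta_map (lsmul_injective hreg) (exact_lsmul_factor_sup_span J u)
    (Submodule.factor_surjective _) z).1 hz
  rw [h.elim w 0, map_zero]

variable [IsNoetherianRing R]

theorem subsingleton_succ_of_saturation {i : ℕ}
    (h : Subsingleton (LocalCoh I (R ⧸ saturation I J) (i + 1))) :
    Subsingleton (LocalCoh I (R ⧸ J) (i + 1)) :=
  subsingleton_middle Subtype.val_injective (exact_gammaTorsion_factor_saturation I J)
    (Submodule.factor_surjective _)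
    (subsingleton_succ_of_isPowTorsion i isPowTorsion_gammaTorsion) h

variable [IsLocalRing R]

theorem subsingleton_quotient_of_ringKrullDim_lt {n : ℕ} (hJ : ringKrullDim (R ⧸ J) ≤ n) {i : ℕ}
    (hi : n < i) : Subsingleton (LocalCoh (maximalIdeal R) (R ⧸ J) i) := by
  induction n generalizing J i with
  | zero =>
    obtain ⟨i, rfl⟩ := Nat.exists_eq_add_one.2 hi
    obtain ⟨k, hk⟩ := exists_maximalIdeal_pow_le hJ
    refine subsingleton_succ_of_isPowTorsion i fun y => ⟨k, fun r hr => ?_⟩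
    exact Module.mem_annihilator.1 (Ideal.annihilator_quotient.ge (hk hr)) y
  | succ n ih =>
    obtain ⟨i, rfl⟩ := Nat.exists_eq_add_one.2 (Nat.zero_lt_of_lt hi)
    refine subsingleton_succ_of_saturation ?_
    rcases saturation_eq_top_or_exists_isSMulRegular J with htop | ⟨-, u, hu, hreg⟩
    · have : Subsingleton (R ⧸ saturation (maximalIdeal R) J) :=
        Ideal.Quotient.subsingleton_iff.2 htop
      exact subsingleton_of_subsingleton
    · exact subsingleton_succ_of_isSMulRegular hu hreg <|
        ih (ringKrullDim_quotient_sup_span_le hreg (ringKrullDim_quotient_saturation_le hJ))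
          (Nat.lt_of_succ_lt_succ hi)

/-- Grothendieck vanishing. -/
theorem subsingleton_of_ringKrullDim_lt {n : ℕ} (hR : ringKrullDim R ≤ n) (N : Type u)
    [AddCommGroup N] [Module R N] [hN : Module.Finite R N] {i : ℕ} (hi : n < i) :
    Subsingleton (LocalCoh (maximalIdeal R) N i) := by
  induction hN using IsNoetherianRing.induction_on_isQuotientEquivQuotientPrime R with
  | subsingleton N => exact subsingleton_of_subsingleton
  | quotient N p e =>
    exact subsingleton_congr e.symm <|
      subsingleton_quotient_of_ringKrullDim_lt ((ringKrullDim_quotient_le _).trans hR) hi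
  | exact N₁ N₂ N₃ f g hf hg hfg h₁ h₃ => exact subsingleton_middle hf hfg hg h₁ h₃

end LocalCoh

section CohenMacaulayQuotient

variable {R : Type u} [CommRing R] [IsLocalRing R] {J : Ideal R} {n : ℕ} {u : R}

/-- `R/J` is Cohen–Macaulay of dimension `n`: its dimension is at most `n`, and its depth, read
off from `Ext^j_R(k, R/J)`, is at least `n`. -/
structure IsCMQuotient (n : ℕ) (J : Ideal R) : Prop where
  le_maximalIdeal : J ≤ maximalIdeal R
  ringKrullDim_le : ringKrullDim (R ⧸ J) ≤ n
  extVanishes : ∀ j < n, ExtVanishes R j (R ⧸ maximalIdeal R) (R ⧸ J)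

namespace IsCMQuotient

theorem sup_span (h : IsCMQuotient (n + 1) J) (hu : u ∈ maximalIdeal R)
    (hreg : IsSMulRegular (R ⧸ J) u) : IsCMQuotient n (J ⊔ Ideal.span {u}) where
  le_maximalIdeal := sup_le h.le_maximalIdeal ((Ideal.span_singleton_le_iff_mem _).2 hu)
  ringKrullDim_le := ringKrullDim_quotient_sup_span_le hreg h.ringKrullDim_le
  extVanishes j hj := ExtVanishes.covariant₃ (lsmul_injective hreg)
    (exact_lsmul_factor_sup_span J u) (Submodule.factor_surjective _)
    (h.extVanishes j (by lia)) (h.extVanishes (j + 1) (by lia))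

variable [IsNoetherianRing R]

theorem exists_isSMulRegular (h : IsCMQuotient (n + 1) J) :
    ∃ u ∈ maximalIdeal R, IsSMulRegular (R ⧸ J) u := by
  refine exists_mem_isSMulRegular_quotient fun x hx => ?_
  have eq_zero := ExtVanishes.zero_iff.1 (h.extVanishes 0 n.succ_pos)
    (Submodule.liftQ (maximalIdeal R)
      (LinearMap.toSpanSingleton R (R ⧸ J) (Submodule.Quotient.mk x))
      fun r hr => (Submodule.Quotient.mk_eq_zero _).2 (hx r hr))
  have := LinearMap.congr_fun eq_zero (Submodule.Quotient.mk 1)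
  rw [← Submodule.Quotient.mk_eq_zero]
  rwa [← one_smul R (Submodule.Quotient.mk x)]

theorem subsingleton_localCoh (h : IsCMQuotient n J) {j : ℕ} (hj : j ≠ n) :
    Subsingleton (LocalCoh (maximalIdeal R) (R ⧸ J) j) := by
  rcases Nat.lt_or_gt_of_ne hj with hlt | hgt
  · induction n generalizing J j with
    | zero => lia
    | succ n ih =>
      obtain ⟨u, hu, hreg⟩ := h.exists_isSMulRegular
      cases j with
      | zero =>
        refine LocalCoh.subsingleton_of_smul_injective hu fun z hz => ?_
        rw [← LocalCoh.map_lsmul] at hz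
        exact LocalCoh.map_zero_injective (lsmul_injective hreg) (hz.trans (map_zero _).symm)
      | succ j =>
        exact LocalCoh.subsingleton_succ_of_isSMulRegular hu hreg <|
          ih (h.sup_span hu hreg) (by lia) (by lia)
  · exact LocalCoh.subsingleton_quotient_of_ringKrullDim_lt h.ringKrullDim_le hgt

end IsCMQuotient

/-- The features of `H = H^n_m(R/J)`, for `R/J` Cohen–Macaulay of dimension `n`, that survive
cutting down by a regular element: `J` kills `H`; for `n = 0`, `R/J` is Artinian and `H ≅ R/J`;
for `n + 1`, every `u ∈ m` regular on `R/J` acts surjectively on `H`, and the kernel of its action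
is again of this kind for `n` and `J + (u)`. -/
def IsTopCohomologyLike (R : Type u) [CommRing R] [IsLocalRing R] : ℕ → Ideal R → (H : Type u) →
    [AddCommGroup H] → [Module R H] → Prop
  | 0, J, H, _, _ => J ≤ maximalIdeal R ∧ J ≤ Module.annihilator R H ∧
      (∃ k, maximalIdeal R ^ k ≤ J) ∧ Nonempty ((R ⧸ J) ≃ₗ[R] H)
  | n + 1, J, H, _, _ => J ≤ maximalIdeal R ∧ J ≤ Module.annihilator R H ∧
      (∃ u ∈ maximalIdeal R, IsSMulRegular (R ⧸ J) u) ∧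
      ∀ u ∈ maximalIdeal R, IsSMulRegular (R ⧸ J) u →
        Function.Surjective (LinearMap.lsmul R H u) ∧
        ∃ (H' : Type u) (_ : AddCommGroup H') (_ : Module R H') (ι : H' →ₗ[R] H),
          Function.Injective ι ∧ Function.Exact ι (LinearMap.lsmul R H u) ∧
          IsTopCohomologyLike R n (J ⊔ Ideal.span {u}) H'

theorem IsCMQuotient.isTopCohomologyLike_localCoh [IsNoetherianRing R] (h : IsCMQuotient n J) :
    IsTopCohomologyLike R n J (LocalCoh (maximalIdeal R) (R ⧸ J) n) := by
  induction n generalizing J with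
  | zero =>
    obtain ⟨k, hk⟩ := exists_maximalIdeal_pow_le h.ringKrullDim_le
    have surj : Function.Surjective (LocalCoh.evalOne (maximalIdeal R) (R ⧸ J)) := fun y =>
      LocalCoh.exists_evalOne_eq fun r hr =>
        Module.mem_annihilator.1 (Ideal.annihilator_quotient.ge (hk hr)) y
    exact ⟨h.le_maximalIdeal, LocalCoh.le_annihilator_quotient 0, ⟨k, hk⟩,
      ⟨(LinearEquiv.ofBijective _ ⟨LocalCoh.evalOne_injective, surj⟩).symm⟩⟩
  | succ n ih =>
    refine ⟨h.le_maximalIdeal, LocalCoh.le_annihilator_quotient (n + 1), h.exists_isSMulRegular,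
      fun u hu hreg => ?_⟩
    have hinj := lsmul_injective hreg
    have hex := exact_lsmul_factor_sup_span J u
    have hsurj := Submodule.factor_surjective (le_sup_left : J ≤ J ⊔ Ideal.span {u})
    have hquot := h.sup_span hu hreg
    refine ⟨fun z => ?_, LocalCoh (maximalIdeal R) (R ⧸ (J ⊔ Ideal.span {u})) n, inferInstance,
      inferInstance, LocalCoh.delta hinj hex hsurj _ n, ?_, ?_, ih hquot⟩
    · rw [← LocalCoh.map_lsmul_eq_lsmul]
      exact (LocalCoh.exact_map_map hinj hex hsurj z).1
        ((hquot.subsingleton_localCoh (Nat.succ_ne_self n)).elim _ _)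
    · refine (injective_iff_map_eq_zero _).2 fun z hz => ?_
      obtain ⟨w, rfl⟩ := (LocalCoh.exact_map_delta hinj hex hsurj z).1 hz
      rw [(h.subsingleton_localCoh (Nat.succ_ne_self n).symm).elim w 0, map_zero]
    · rw [← LocalCoh.map_lsmul_eq_lsmul]
      exact LocalCoh.exact_delta_map hinj hex hsurj

end CohenMacaulayQuotient

section LinearMapLemmas

variable {R : Type u} [CommRing R]
  {A B X Y : Type u} [AddCommGroup A] [Module R A] [AddCommGroup B] [Module R B]
  [AddCommGroup X] [Module R X] [AddCommGroup Y] [Module R Y]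

theorem exists_comp_eq_of_ker_le_ker {p : A →ₗ[R] B} (hp : Function.Surjective p)
    {f : A →ₗ[R] X} (h : LinearMap.ker p ≤ LinearMap.ker f) :
    ∃ g : B →ₗ[R] X, g ∘ₗ p = f := by
  refine ⟨Submodule.liftQ (LinearMap.ker p) f h ∘ₗ
    (p.quotKerEquivOfSurjective hp).symm.toLinearMap, LinearMap.ext fun a => ?_⟩
  have : (p.quotKerEquivOfSurjective hp).symm (p a) = Submodule.Quotient.mk a :=
    (LinearEquiv.symm_apply_eq _).2 rfl
  simp only [LinearMap.comp_apply, LinearEquiv.coe_coe, this]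
  exact Submodule.liftQ_apply _ _ _

theorem exists_comp_eq_of_range_le_range {j : A →ₗ[R] B} (hj : Function.Injective j)
    {f : X →ₗ[R] B} (h : LinearMap.range f ≤ LinearMap.range j) :
    ∃ g : X →ₗ[R] A, j ∘ₗ g = f := by
  refine ⟨(LinearEquiv.ofInjective j hj).symm.toLinearMap ∘ₗ
    f.codRestrict (LinearMap.range j) fun x => h ⟨x, rfl⟩, LinearMap.ext fun x => ?_⟩
  exact LinearEquiv.ofInjective_symm_apply (h := hj) j _

theorem nonempty_linearEquiv_of_ker_eq_ker {p : A →ₗ[R] B} (hp : Function.Surjective p)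
    {q : A →ₗ[R] X} (hq : Function.Surjective q) (h : LinearMap.ker p = LinearMap.ker q) :
    Nonempty (B ≃ₗ[R] X) :=
  ⟨(p.quotKerEquivOfSurjective hp).symm ≪≫ₗ Submodule.quotEquivOfEq _ _ h ≪≫ₗ
    q.quotKerEquivOfSurjective hq⟩

theorem exact_lsmul_comp_linearEquiv {u : R} {q : Y →ₗ[R] X}
    (hq : Function.Exact (LinearMap.lsmul R Y u) q) (e : B ≃ₗ[R] Y) :
    Function.Exact (LinearMap.lsmul R B u) (q ∘ₗ e.toLinearMap) := by
  refine fun b => (hq (e b)).trans ⟨?_, ?_⟩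
  · rintro ⟨y, hy⟩
    exact ⟨e.symm y, e.injective (by simpa using hy)⟩
  · rintro ⟨b, rfl⟩
    exact ⟨e b, (map_smul e u b).symm⟩

theorem exact_lsmul_comp_ker_subtype {u : R} (hu : IsSMulRegular Y u) (f : A →ₗ[R] Y)
    {p : A →ₗ[R] B} (hup : Function.Exact (LinearMap.lsmul R A u) p) :
    Function.Exact (LinearMap.lsmul R (LinearMap.ker f) u) (p ∘ₗ (LinearMap.ker f).subtype) := by
  rintro ⟨a, ha⟩
  constructor
  · intro h
    obtain ⟨a', rfl⟩ := (hup a).1 h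
    rw [LinearMap.lsmul_apply, LinearMap.mem_ker, map_smul] at ha
    exact ⟨⟨a', hu (ha.trans (smul_zero u).symm)⟩, rfl⟩
  · rintro ⟨a', h⟩
    exact (hup a).2 ⟨a'.1, congrArg Subtype.val h⟩

theorem exists_ker_surjective_exact_lsmul {u : R} (hu : IsSMulRegular Y u) {f : A →ₗ[R] Y}
    (hf : Function.Surjective f) {q : Y →ₗ[R] X} (hq : Function.Exact (LinearMap.lsmul R Y u) q)
    {p : A →ₗ[R] B} (hp : Function.Surjective p) (hup : Function.Exact (LinearMap.lsmul R A u) p)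
    {g : B →ₗ[R] X} (hg : g ∘ₗ p = q ∘ₗ f) :
    ∃ p' : LinearMap.ker f →ₗ[R] LinearMap.ker g, Function.Surjective p' ∧
      Function.Exact (LinearMap.lsmul R (LinearMap.ker f) u) p' := by
  have hg' : ∀ a, g (p a) = q (f a) := LinearMap.congr_fun hg
  refine ⟨p.restrict fun a ha => ?_, ?_, ?_⟩
  · rw [LinearMap.mem_ker, hg', LinearMap.mem_ker.1 ha, map_zero]
  · rintro ⟨b, hb⟩
    obtain ⟨a, rfl⟩ := hp b
    rw [LinearMap.mem_ker, hg'] at hb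
    obtain ⟨y, hy⟩ := (hq _).1 hb
    obtain ⟨a', rfl⟩ := hf y
    rw [LinearMap.lsmul_apply] at hy
    refine ⟨⟨a - u • a', ?_⟩, Subtype.ext ?_⟩
    · rw [LinearMap.mem_ker, map_sub, map_smul, hy, sub_self]
    · change p (a - u • a') = p a
      have hpa' : p (u • a') = 0 := (hup _).2 ⟨a', rfl⟩
      rw [map_sub, hpa', sub_zero]
  · exact fun a => Subtype.ext_iff.trans (exact_lsmul_comp_ker_subtype hu f hup a)

end LinearMapLemmas

section FreeOverQuotient

variable {R : Type u} [CommRing R] (J : Ideal R) (b : ℕ)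
  {X Y : Type u} [AddCommGroup X] [Module R X] [AddCommGroup Y] [Module R Y]

theorem compLeft_factor_surjective (u : R) : Function.Surjective
    ((Submodule.factor (le_sup_left : J ≤ J ⊔ Ideal.span {u})).compLeft (Fin b)) := fun y => by
  choose x hx using fun i => Submodule.factor_surjective le_sup_left (y i)
  exact ⟨x, funext hx⟩

theorem exact_lsmul_compLeft_factor (u : R) :
    Function.Exact (LinearMap.lsmul R (Fin b → R ⧸ J) u)
      ((Submodule.factor (le_sup_left : J ≤ J ⊔ Ideal.span {u})).compLeft (Fin b)) := by
  refine fun x => ⟨fun h => ?_, ?_⟩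
  · choose y hy using fun i => (exact_lsmul_factor_sup_span J u (x i)).1 (congrFun h i)
    exact ⟨y, funext hy⟩
  · rintro ⟨y, rfl⟩
    exact funext fun i => (exact_lsmul_factor_sup_span J u _).2 ⟨y i, rfl⟩

variable {J b}

theorem isSMulRegular_of_injective_pi_quotient {ι : Y →ₗ[R] (Fin b → R ⧸ J)}
    (hι : Function.Injective ι) {u : R} (hu : IsSMulRegular (R ⧸ J) u) : IsSMulRegular Y u :=
  IsSMulRegular.of_injective ι hι (IsSMulRegular.pi fun _ => hu)

theorem pi_quotient_hom_ext {f g : (Fin b → R ⧸ J) →ₗ[R] X}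
    (h : ∀ i, f (Pi.single i 1) = g (Pi.single i 1)) : f = g :=
  LinearMap.pi_ext' fun i => Submodule.linearMap_qext _ (LinearMap.ext_ring (h i))

theorem exists_pi_quotient_hom_apply_single (hX : J ≤ Module.annihilator R X) (v : Fin b → X) :
    ∃ f : (Fin b → R ⧸ J) →ₗ[R] X, ∀ i, f (Pi.single i 1) = v i := by
  have hJ : ∀ i, J ≤ LinearMap.ker (LinearMap.toSpanSingleton R X (v i)) := fun i r hr => by
    rw [LinearMap.mem_ker, LinearMap.toSpanSingleton_apply, Module.mem_annihilator.1 (hX hr)]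
  refine ⟨LinearMap.lsum R _ R fun i => Submodule.liftQ J _ (hJ i), fun i => ?_⟩
  rw [LinearMap.lsum_piSingle]
  exact one_smul R (v i)

theorem exists_comp_eq_of_surjective_of_le_annihilator (hX : J ≤ Module.annihilator R X)
    {p : X →ₗ[R] Y} (hp : Function.Surjective p) (f : (Fin b → R ⧸ J) →ₗ[R] Y) :
    ∃ g : (Fin b → R ⧸ J) →ₗ[R] X, p ∘ₗ g = f := by
  choose v hv using fun i => hp (f (Pi.single i 1))
  obtain ⟨g, hg⟩ := exists_pi_quotient_hom_apply_single hX v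
  exact ⟨g, pi_quotient_hom_ext fun i => by rw [LinearMap.comp_apply, hg, hv]⟩

theorem exists_eq_sum_smul_proj (f : (Fin b → R ⧸ J) →ₗ[R] (R ⧸ J)) :
    ∃ r : Fin b → R, f = ∑ i, r i • LinearMap.proj i := by
  choose r hr using fun i => Ideal.Quotient.mk_surjective (f (Pi.single i 1))
  refine ⟨r, pi_quotient_hom_ext fun k => ?_⟩
  rw [LinearMap.sum_apply, Finset.sum_eq_single k (fun i _ hi => by simp [hi]) (by simp), ← hr k]
  simp [Algebra.smul_def]

end FreeOverQuotient

section ProjectiveDimensionOverQuotient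

variable {R : Type u} [CommRing R] {J : Ideal R} {n : ℕ} {u : R}
  {L X Y : Type u} [AddCommGroup L] [Module R L] [AddCommGroup X] [Module R X]
  [AddCommGroup Y] [Module R Y]

/-- `L` has a resolution of length `n` by finite free `R/J`-modules; over a local ring this says
that `L` is a finitely generated `R/J`-module of projective dimension at most `n`. -/
def HasPdLE (J : Ideal R) : ℕ → (L : Type u) → [AddCommGroup L] → [Module R L] → Prop
  | 0, L, _, _ => ∃ b : ℕ, Nonempty (L ≃ₗ[R] (Fin b → R ⧸ J))
  | n + 1, L, _, _ => ∃ (b : ℕ) (f : (Fin b → R ⧸ J) →ₗ[R] L), Function.Surjective f ∧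
      HasPdLE J n (LinearMap.ker f)

namespace HasPdLE

theorem congr (e : L ≃ₗ[R] Y) (h : HasPdLE J n L) : HasPdLE J n Y := by
  cases n with
  | zero =>
    obtain ⟨b, ⟨f⟩⟩ := h
    exact ⟨b, ⟨e.symm ≪≫ₗ f⟩⟩
  | succ n =>
    obtain ⟨b, f, hf, hker⟩ := h
    refine ⟨b, e.toLinearMap ∘ₗ f, e.surjective.comp hf, ?_⟩
    rwa [LinearEquiv.ker_comp]

theorem finite (h : HasPdLE J n L) : Module.Finite R L := by
  cases n with
  | zero =>
    obtain ⟨b, ⟨f⟩⟩ := h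
    exact Module.Finite.equiv f.symm
  | succ n =>
    obtain ⟨b, f, hf, -⟩ := h
    exact Module.Finite.of_surjective f hf

theorem sup_span (hu : IsSMulRegular (R ⧸ J) u) (h : HasPdLE J n Y) (huY : IsSMulRegular Y u)
    {q : Y →ₗ[R] X} (hq : Function.Surjective q)
    (hexact : Function.Exact (LinearMap.lsmul R Y u) q) :
    HasPdLE (J ⊔ Ideal.span {u}) n X := by
  induction n generalizing Y X with
  | zero =>
    obtain ⟨b, ⟨f⟩⟩ := h
    refine ⟨b, nonempty_linearEquiv_of_ker_eq_ker (p := q ∘ₗ f.symm.toLinearMap)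
      (hq.comp f.symm.surjective) (compLeft_factor_surjective J b u) ?_⟩
    rw [(exact_lsmul_comp_linearEquiv hexact f.symm).linearMap_ker_eq,
      (exact_lsmul_compLeft_factor J b u).linearMap_ker_eq]
  | succ n ih =>
    obtain ⟨b, f, hf, hker⟩ := h
    have hp := compLeft_factor_surjective J b u
    have hup := exact_lsmul_compLeft_factor J b u
    obtain ⟨g, hg⟩ := exists_comp_eq_of_ker_le_ker hp (f := q ∘ₗ f) fun a ha => by
      obtain ⟨y, rfl⟩ := (hup a).1 ha
      exact (hexact _).2 ⟨f y, (map_smul f u y).symm⟩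
    obtain ⟨p', hp', hexact'⟩ := exists_ker_surjective_exact_lsmul huY hf hexact hp hup hg
    have hgp : Function.Surjective (q ∘ₗ f) := hq.comp hf
    rw [← hg, LinearMap.coe_comp] at hgp
    exact ⟨b, g, hgp.of_comp, ih hker
      (isSMulRegular_of_injective_pi_quotient (LinearMap.ker f).injective_subtype hu) hp' hexact'⟩

end HasPdLE

end ProjectiveDimensionOverQuotient

section SplittingUpToRegularElement

variable {R : Type u} [CommRing R] {J : Ideal R} {n b : ℕ}
  {L Y : Type u} [AddCommGroup L] [Module R L] [AddCommGroup Y] [Module R Y]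

/-- Multiplication by some element regular on `R/J` factors through a finite free `R/J`-module as
an endomorphism of `L`; over the total fraction ring of `R/J`, `L` is then projective. -/
def IsGenericallyProjective (J : Ideal R) (L : Type u) [AddCommGroup L] [Module R L] : Prop :=
  ∃ s : R, IsSMulRegular (R ⧸ J) s ∧
    ∃ (c : ℕ) (α : L →ₗ[R] (Fin c → R ⧸ J)) (β : (Fin c → R ⧸ J) →ₗ[R] L),
      β ∘ₗ α = s • LinearMap.id

theorem exists_apply_comp_eq_apply {c : ℕ} (φ : (Y →ₗ[R] (R ⧸ J)) →ₗ[R] (R ⧸ J))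
    (α : Y →ₗ[R] (Fin c → R ⧸ J)) :
    ∃ v : Fin c → R ⧸ J, ∀ ψ : (Fin c → R ⧸ J) →ₗ[R] (R ⧸ J), φ (ψ ∘ₗ α) = ψ v := by
  refine ⟨fun i => φ (LinearMap.proj i ∘ₗ α), fun ψ => ?_⟩
  obtain ⟨r, rfl⟩ := exists_eq_sum_smul_proj ψ
  have : (∑ i, r i • LinearMap.proj i) ∘ₗ α = ∑ i, r i • (LinearMap.proj i ∘ₗ α) := by
    ext x
    simp
  simp only [this, map_sum, map_smul, LinearMap.sum_apply, LinearMap.smul_apply,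
    LinearMap.proj_apply]

theorem IsGenericallyProjective.subsingleton_hom_coker_lcomp (h : IsGenericallyProjective J Y)
    {ι : Y →ₗ[R] (Fin b → R ⧸ J)} (hι : Function.Injective ι) :
    Subsingleton (((Y →ₗ[R] (R ⧸ J)) ⧸ LinearMap.range (LinearMap.lcomp R (R ⧸ J) ι))
      →ₗ[R] (R ⧸ J)) := by
  obtain ⟨s, hs, c, α, β, hβ⟩ := h
  refine subsingleton_of_forall_eq 0 fun f => Submodule.linearMap_qext _ ?_
  set φ := f ∘ₗ Submodule.mkQ _ with hφ
  have hφι : ∀ χ, φ (χ ∘ₗ ι) = 0 := fun χ => by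
    have mk_eq_zero : Submodule.mkQ (LinearMap.range (LinearMap.lcomp R (R ⧸ J) ι)) (χ ∘ₗ ι) = 0 :=
      (Submodule.Quotient.mk_eq_zero _).2 ⟨χ, rfl⟩
    rw [hφ, LinearMap.comp_apply, mk_eq_zero, map_zero]
  obtain ⟨v, hv⟩ := exists_apply_comp_eq_apply φ α
  have apply_v : ∀ χ : Y →ₗ[R] (R ⧸ J), χ (β v) = s • φ χ := fun χ => by
    rw [← LinearMap.comp_apply, ← hv, LinearMap.comp_assoc, hβ, LinearMap.comp_smul, map_smul,
      LinearMap.comp_id]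
  have hβv : β v = 0 := (injective_iff_map_eq_zero ι).1 hι _ <| funext fun i =>
    (apply_v (LinearMap.proj i ∘ₗ ι)).trans (by rw [hφι, smul_zero]; rfl)
  refine LinearMap.ext fun χ => hs ?_
  simp only [LinearMap.zero_comp, LinearMap.zero_apply, ← apply_v, hβv, map_zero, smul_zero]

variable [IsNoetherianRing R]

theorem IsGenericallyProjective.exists_retraction [Module.Finite R Y]
    (h : IsGenericallyProjective J Y) {ι : Y →ₗ[R] (Fin b → R ⧸ J)} (hι : Function.Injective ι) :
    ∃ u : R, IsSMulRegular (R ⧸ J) u ∧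
      ∃ ρ : (Fin b → R ⧸ J) →ₗ[R] Y, ρ ∘ₗ ι = u • LinearMap.id := by
  obtain ⟨t, ht, htreg⟩ :=
    IsSMulRegular.subsingleton_linearMap_iff.1 (h.subsingleton_hom_coker_lcomp hι)
  obtain ⟨s, hs, c, α, β, hβ⟩ := h
  have exists_extension : ∀ χ : Y →ₗ[R] (R ⧸ J),
      ∃ χ' : (Fin b → R ⧸ J) →ₗ[R] (R ⧸ J), χ' ∘ₗ ι = t • χ := fun χ => by
    have := Module.mem_annihilator.1 ht (Submodule.Quotient.mk χ)
    rwa [← Submodule.Quotient.mk_smul, Submodule.Quotient.mk_eq_zero] at this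
  choose α' hα' using fun i => exists_extension (LinearMap.proj i ∘ₗ α)
  have pi_comp : LinearMap.pi α' ∘ₗ ι = t • α :=
    LinearMap.ext fun y => funext fun i => LinearMap.congr_fun (hα' i) y
  refine ⟨t * s, htreg.mul hs, β ∘ₗ LinearMap.pi α', ?_⟩
  rw [LinearMap.comp_assoc, pi_comp, LinearMap.comp_smul, hβ, smul_smul]

theorem HasPdLE.isGenericallyProjective (h : HasPdLE J n L) : IsGenericallyProjective J L := by
  induction n generalizing L with
  | zero =>
    obtain ⟨b, ⟨f⟩⟩ := h
    exact ⟨1, IsSMulRegular.one _, b, f.toLinearMap, f.symm.toLinearMap, by ext; simp⟩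
  | succ n ih =>
    obtain ⟨b, f, hf, hker⟩ := h
    obtain ⟨u, hu, ρ, hρ⟩ := (ih hker).exists_retraction (LinearMap.ker f).injective_subtype
    obtain ⟨σ, hσ⟩ := exists_comp_eq_of_ker_le_ker hf
      (f := u • LinearMap.id - (LinearMap.ker f).subtype ∘ₗ ρ) fun a ha => by
        have := congrArg Subtype.val (LinearMap.congr_fun hρ ⟨a, ha⟩)
        exact sub_eq_zero.2 this.symm
    refine ⟨u, hu, b, σ, f, (LinearMap.cancel_right hf).1 ?_⟩
    rw [LinearMap.comp_assoc, hσ, LinearMap.comp_sub, ← LinearMap.comp_assoc,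
      LinearMap.comp_ker_subtype, LinearMap.zero_comp, sub_zero,
      LinearMap.comp_smul, LinearMap.smul_comp, LinearMap.comp_id, LinearMap.id_comp]

end SplittingUpToRegularElement

section MapsToTopCohomology

variable {R : Type u} [CommRing R] {J : Ideal R} {n b : ℕ} {u : R}
  {X Y L H H' : Type u} [AddCommGroup X] [Module R X] [AddCommGroup Y] [Module R Y]
  [AddCommGroup L] [Module R L] [AddCommGroup H] [Module R H] [AddCommGroup H'] [Module R H']

-- Lift `g` along `u : H → H` over a free cover of `Y`; the obstruction is a map from the first
-- syzygy of `Y / uY` to `H'`, which `hextend` kills.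
theorem HasPdLE.exists_smul_eq (hY : HasPdLE J n Y) (hu : IsSMulRegular (R ⧸ J) u)
    (huY : IsSMulRegular Y u) (hH : J ≤ Module.annihilator R H)
    (hsurj : Function.Surjective (LinearMap.lsmul R H u)) {j : H' →ₗ[R] H}
    (hj : Function.Injective j) (hexact : Function.Exact j (LinearMap.lsmul R H u))
    (hextend : ∀ {m b : ℕ} {K : Submodule R (Fin b → R ⧸ J ⊔ Ideal.span {u})},
      HasPdLE (J ⊔ Ideal.span {u}) m K → ∀ g : K →ₗ[R] H', ∃ f, f ∘ₗ K.subtype = g)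
    (g : Y →ₗ[R] H) : ∃ g' : Y →ₗ[R] H, u • g' = g := by
  cases n with
  | zero =>
    obtain ⟨b, ⟨e⟩⟩ := hY
    obtain ⟨w, hw⟩ :=
      exists_comp_eq_of_surjective_of_le_annihilator hH hsurj (g ∘ₗ e.symm.toLinearMap)
    refine ⟨w ∘ₗ e.toLinearMap, LinearMap.ext fun y => ?_⟩
    exact (LinearMap.congr_fun hw (e y)).trans (congrArg g (e.symm_apply_apply y))
  | succ n =>
    obtain ⟨b, π, hπ, hker⟩ := hY
    obtain ⟨w, hw⟩ := exists_comp_eq_of_surjective_of_le_annihilator hH hsurj (g ∘ₗ π)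
    obtain ⟨h₀, hh₀⟩ := exists_comp_eq_of_range_le_range hj
      (f := w ∘ₗ (LinearMap.ker π).subtype) <| by
      rintro _ ⟨k, rfl⟩
      refine (hexact _).1 ((LinearMap.congr_fun hw k).trans ?_)
      rw [LinearMap.comp_apply, k.2, map_zero]
    set p := (Submodule.factor (le_sup_left : J ≤ J ⊔ Ideal.span {u})).compLeft (Fin b)
    set q := p ∘ₗ (LinearMap.ker π).subtype
    have hq : Function.Exact (LinearMap.lsmul R (LinearMap.ker π) u) q.rangeRestrict := fun k =>
      Subtype.ext_iff.trans <|
        exact_lsmul_comp_ker_subtype huY π (exact_lsmul_compLeft_factor J b u) k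
    have smul_eq_zero : ∀ x : H', u • x = 0 := fun x =>
      hj (by rw [map_smul, map_zero]; exact hexact.apply_apply_eq_zero x)
    obtain ⟨h₁, hh₁⟩ := exists_comp_eq_of_ker_le_ker q.surjective_rangeRestrict (f := h₀) <| by
      intro a ha
      obtain ⟨k, rfl⟩ := (hq a).1 ha
      rw [LinearMap.mem_ker, LinearMap.lsmul_apply, map_smul, smul_eq_zero]
    obtain ⟨h₂, hh₂⟩ := hextend (hker.sup_span hu
      (isSMulRegular_of_injective_pi_quotient (LinearMap.ker π).injective_subtype hu)
      q.surjective_rangeRestrict hq) h₁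
    obtain ⟨g', hg'⟩ := exists_comp_eq_of_ker_le_ker hπ (f := w - j ∘ₗ h₂ ∘ₗ p) <| by
      intro a ha
      have hw_apply : w a = j (h₀ ⟨a, ha⟩) := (LinearMap.congr_fun hh₀ ⟨a, ha⟩).symm
      rw [LinearMap.mem_ker, LinearMap.sub_apply, hw_apply, ← hh₁, ← hh₂, sub_eq_zero]
      rfl
    refine ⟨g', (LinearMap.cancel_right hπ).1 ?_⟩
    rw [LinearMap.smul_comp, hg', smul_sub, ← LinearMap.comp_smul, ← hw]
    ext x
    simp [smul_eq_zero]

variable [IsLocalRing R]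

theorem exists_notMem_sup_span_pow [IsNoetherianRing R] {c : R} (hu : u ∈ maximalIdeal R)
    (hc : c ∉ J) : ∃ N, c ∉ J ⊔ Ideal.span {u ^ (N + 1)} := by
  by_contra! hmem
  have hbot := Ideal.iInf_pow_smul_eq_bot_of_isLocalRing (M := R ⧸ J) (maximalIdeal R)
    (maximalIdeal.isMaximal R).ne_top
  suffices h : (Submodule.Quotient.mk c : R ⧸ J) ∈
      ⨅ i : ℕ, maximalIdeal R ^ i • (⊤ : Submodule R (R ⧸ J)) by
    rw [hbot, Submodule.mem_bot, Submodule.Quotient.mk_eq_zero] at h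
    exact hc h
  refine Submodule.mem_iInf _ |>.2 fun i => ?_
  obtain ⟨a, ha, _, hb, rfl⟩ := Submodule.mem_sup.1 (hmem i)
  obtain ⟨x, rfl⟩ := Ideal.mem_span_singleton'.1 hb
  have hmk : (Submodule.Quotient.mk (a + x * u ^ (i + 1)) : R ⧸ J) =
      u ^ (i + 1) • Submodule.Quotient.mk x := by
    rw [← Submodule.Quotient.mk_smul, Submodule.Quotient.eq, smul_eq_mul, mul_comm x,
      add_sub_cancel_right]
    exact ha
  rw [hmk]
  exact Submodule.smul_mem_smul
    (Ideal.pow_le_pow_right (Nat.le_succ i) (Ideal.pow_mem_pow hu _)) trivial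

namespace IsTopCohomologyLike

theorem le_annihilator (h : IsTopCohomologyLike R n J H) : J ≤ Module.annihilator R H := by
  cases n with
  | zero => exact h.2.1
  | succ n => exact h.2.1

theorem isUnit_of_isSMulRegular (h : IsTopCohomologyLike R 0 J H)
    (hu : IsSMulRegular (R ⧸ J) u) : IsUnit u := by
  obtain ⟨hJ, -, ⟨k, hk⟩, -⟩ := h
  by_contra hunit
  have hmem : u ^ k ∈ J := hk (Ideal.pow_mem_pow ((mem_maximalIdeal u).2 hunit) k)
  have hone : (Submodule.Quotient.mk 1 : R ⧸ J) = 0 := hu.pow k <| by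
    change u ^ k • (Submodule.Quotient.mk 1 : R ⧸ J) = u ^ k • 0
    rw [← Submodule.Quotient.mk_smul, smul_zero, Submodule.Quotient.mk_eq_zero]
    simpa using hmem
  exact (Ideal.ne_top_iff_one _).1 (maximalIdeal.isMaximal R).ne_top
    (hJ ((Submodule.Quotient.mk_eq_zero J).1 hone))

variable [IsNoetherianRing R]

theorem exists_extension (hH : IsTopCohomologyLike R n J H) {m : ℕ}
    {K : Submodule R (Fin b → R ⧸ J)} (hK : HasPdLE J m K) (g : K →ₗ[R] H) :
    ∃ f, f ∘ₗ K.subtype = g := by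
  induction n generalizing J H m b with
  | zero =>
    have := hK.finite
    obtain ⟨u, hu, ρ, hρ⟩ := hK.isGenericallyProjective.exists_retraction K.injective_subtype
    obtain ⟨v, hv⟩ := (hH.isUnit_of_isSMulRegular hu).exists_left_inv
    refine ⟨v • g ∘ₗ ρ, ?_⟩
    rw [LinearMap.smul_comp, LinearMap.comp_assoc, hρ, LinearMap.comp_smul, smul_smul, hv, one_smul,
      LinearMap.comp_id]
  | succ n ih =>
    have := hK.finite
    obtain ⟨u, hu, ρ, hρ⟩ := hK.isGenericallyProjective.exists_retraction K.injective_subtype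
    suffices h : ∃ g' : K →ₗ[R] H, u • g' = g by
      obtain ⟨g', rfl⟩ := h
      exact ⟨g' ∘ₗ ρ, by rw [LinearMap.comp_assoc, hρ, LinearMap.comp_smul, LinearMap.comp_id]⟩
    by_cases hunit : IsUnit u
    · obtain ⟨v, hv⟩ := hunit.exists_right_inv
      exact ⟨v • g, by rw [smul_smul, hv, one_smul]⟩
    · obtain ⟨hsurj, H', _, _, j, hj, hexact, hH'⟩ := hH.2.2.2 u ((mem_maximalIdeal u).2 hunit) hu
      exact hK.exists_smul_eq hu (isSMulRegular_of_injective_pi_quotient K.injective_subtype hu)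
        hH.le_annihilator hsurj hj hexact (fun hK' => ih hH' hK') g

theorem exists_smul_ne_zero (hH : IsTopCohomologyLike R n J H) {c : R} (hc : c ∉ J) :
    ∃ h : H, c • h ≠ 0 := by
  induction n generalizing J H with
  | zero =>
    obtain ⟨-, -, -, ⟨e⟩⟩ := hH
    refine ⟨e (Submodule.Quotient.mk 1), fun h => hc ?_⟩
    rw [← map_smul, LinearEquiv.map_eq_zero_iff, ← Submodule.Quotient.mk_smul,
      Submodule.Quotient.mk_eq_zero] at h
    simpa using h
  | succ n ih =>
    obtain ⟨u, hum, hu⟩ := hH.2.2.1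
    obtain ⟨N, hN⟩ := exists_notMem_sup_span_pow hum hc
    obtain ⟨-, H', _, _, j, hj, -, hH'⟩ := hH.2.2.2 (u ^ (N + 1))
      (Ideal.pow_mem_of_mem _ hum _ N.succ_pos) (hu.pow _)
    obtain ⟨h, hh⟩ := ih hH' hN
    refine ⟨j h, fun hzero => hh (hj ?_)⟩
    rw [map_smul, hzero, map_zero]

theorem exists_hom_apply_ne_zero_of_pi (hH : IsTopCohomologyLike R n J H)
    {x : Fin b → R ⧸ J} (hx : x ≠ 0) : ∃ f : (Fin b → R ⧸ J) →ₗ[R] H, f x ≠ 0 := by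
  obtain ⟨i, hi⟩ := Function.ne_iff.1 hx
  obtain ⟨a, ha⟩ := Submodule.Quotient.mk_surjective _ (x i)
  rw [← ha] at hi
  obtain ⟨h, hh⟩ := hH.exists_smul_ne_zero fun haJ => hi ((Submodule.Quotient.mk_eq_zero _).2 haJ)
  have hJ : J ≤ LinearMap.ker (LinearMap.toSpanSingleton R H h) := fun r hr => by
    rw [LinearMap.mem_ker, LinearMap.toSpanSingleton_apply,
      Module.mem_annihilator.1 (hH.le_annihilator hr)]
  refine ⟨Submodule.liftQ J _ hJ ∘ₗ LinearMap.proj i, ?_⟩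
  rwa [LinearMap.comp_apply, LinearMap.proj_apply, ← ha, Submodule.liftQ_apply,
    LinearMap.toSpanSingleton_apply]

-- If `u • e = 0`, then `e` is a class in `ker π / u ker π`; a functional to `ker u ⊆ H` detecting
-- it extends from `ker π` to the free cover, and `u` times the extension descends to `L`.
theorem exists_hom_apply_ne_zero_of_smul_eq_zero (hH : IsTopCohomologyLike R n J H)
    {j : H' →ₗ[R] H} (hj : Function.Injective j) (hexact : Function.Exact j (LinearMap.lsmul R H u))
    (hu : IsSMulRegular (R ⧸ J) u) {π : (Fin b → R ⧸ J) →ₗ[R] L} (hπ : Function.Surjective π)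
    {m : ℕ} (hker : HasPdLE J m (LinearMap.ker π))
    (hdetect : ∀ x : LinearMap.ker π ⧸ LinearMap.range (LinearMap.lsmul R (LinearMap.ker π) u),
      x ≠ 0 → ∃ g : _ →ₗ[R] H', g x ≠ 0)
    {e : L} (he : e ≠ 0) (hue : u • e = 0) : ∃ f : L →ₗ[R] H, f e ≠ 0 := by
  obtain ⟨a, rfl⟩ := hπ e
  set S := LinearMap.range (LinearMap.lsmul R (LinearMap.ker π) u)
  let k : LinearMap.ker π := ⟨u • a, by rw [LinearMap.mem_ker, map_smul, hue]⟩
  have hk : S.mkQ k ≠ 0 := fun h => by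
    obtain ⟨k', hk'⟩ := (Submodule.Quotient.mk_eq_zero _).1 h
    have : (k' : Fin b → R ⧸ J) = a :=
      IsSMulRegular.pi (fun _ : Fin b => hu) (congrArg Subtype.val hk')
    exact he (this ▸ k'.2)
  obtain ⟨g, hg⟩ := hdetect _ hk
  obtain ⟨f₀, hf₀⟩ := hH.exists_extension hker (j ∘ₗ g ∘ₗ S.mkQ)
  have f₀_apply : ∀ k : LinearMap.ker π, f₀ k = j (g (S.mkQ k)) := LinearMap.congr_fun hf₀
  obtain ⟨f, hf⟩ := exists_comp_eq_of_ker_le_ker hπ (f := u • f₀) fun a ha => by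
    rw [LinearMap.mem_ker, LinearMap.smul_apply, f₀_apply ⟨a, ha⟩]
    exact hexact.apply_apply_eq_zero _
  refine ⟨f, fun h => hg (hj ?_)⟩
  rw [map_zero, ← f₀_apply, ← h]
  exact (map_smul f₀ u a).trans (LinearMap.congr_fun hf a).symm

theorem exists_hom_apply_ne_zero (hH : IsTopCohomologyLike R n J H) {m : ℕ}
    (hL : HasPdLE J m L) {e : L} (he : e ≠ 0) : ∃ f : L →ₗ[R] H, f e ≠ 0 := by
  induction n generalizing J H m L with
  | zero =>
    obtain ⟨s, hs, c, α, β, hβ⟩ := hL.isGenericallyProjective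
    have hαe : α e ≠ 0 := fun h => he <| (hH.isUnit_of_isSMulRegular hs).smul_eq_zero.1 <| by
      simpa [h] using (LinearMap.congr_fun hβ e).symm
    obtain ⟨f, hf⟩ := hH.exists_hom_apply_ne_zero_of_pi hαe
    exact ⟨f ∘ₗ α, hf⟩
  | succ n ih =>
    obtain ⟨s, hs, c, α, β, hβ⟩ := hL.isGenericallyProjective
    by_cases hαe : α e = 0
    · have hse : s • e = 0 := by simpa [hαe] using (LinearMap.congr_fun hβ e).symm
      have hsm : s ∈ maximalIdeal R :=
        (mem_maximalIdeal s).2 fun hunit => he (hunit.smul_eq_zero.1 hse)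
      cases m with
      | zero =>
        obtain ⟨b, ⟨f⟩⟩ := hL
        have := isSMulRegular_of_injective_pi_quotient (ι := f.toLinearMap) f.injective hs
        exact absurd (this (hse.trans (smul_zero s).symm)) he
      | succ m =>
        obtain ⟨b, π, hπ, hker⟩ := hL
        obtain ⟨-, H', _, _, j, hj, hexact, hH'⟩ := hH.2.2.2 s hsm hs
        have hpd := hker.sup_span hs
          (isSMulRegular_of_injective_pi_quotient (LinearMap.ker π).injective_subtype hs)
          (Submodule.mkQ_surjective _) (LinearMap.exact_map_mkQ_range _)
        exact hH.exists_hom_apply_ne_zero_of_smul_eq_zero hj hexact hs hπ hker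
          (fun _ hx => ih hH' hpd hx) he hse
    · obtain ⟨f, hf⟩ := hH.exists_hom_apply_ne_zero_of_pi hαe
      exact ⟨f ∘ₗ α, hf⟩

end IsTopCohomologyLike

end MapsToTopCohomology

section ExtIntoTopCohomology

variable {R : Type u} [CommRing R] {I J : Ideal R} {n : ℕ} {u : R}
  {G H H' : Type u} [AddCommGroup G] [Module R G] [AddCommGroup H] [Module R H]
  [AddCommGroup H'] [Module R H']

theorem IsPowTorsion.of_injective {f : H' →ₗ[R] H} (h : IsPowTorsion I H)
    (hf : Function.Injective f) : IsPowTorsion I H' := by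
  intro y
  obtain ⟨n, hn⟩ := h (f y)
  exact ⟨n, fun r hr => hf (by rw [map_smul, hn r hr, map_zero])⟩

theorem IsPowTorsion.exists_pow_smul_ext_eq_zero [IsNoetherianRing R] [Module.Finite R G]
    (hH : IsPowTorsion I H) (hu : u ∈ I) {i : ℕ}
    (x : Abelian.Ext.{u} (ModuleCat.of R G) (ModuleCat.of R H) i) : ∃ n : ℕ, u ^ n • x = 0 := by
  induction i generalizing G with
  | zero =>
    obtain ⟨φ, rfl⟩ := (Ext.mk₀_bijective _ _).2 x
    obtain ⟨n, hn⟩ := hH.exists_forall_mem_smul_eq_zero (N := LinearMap.range φ.hom)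
      (by rw [LinearMap.range_eq_map]; exact (IsNoetherian.noetherian (⊤ : Submodule R G)).map _)
    refine ⟨n, ?_⟩
    rw [← Ext.mk₀_smul, Ext.mk₀_eq_zero_iff]
    ext y
    exact hn _ (Ideal.pow_mem_pow hu n) _ ⟨y, rfl⟩
  | succ i ih =>
    obtain ⟨b, f, hf⟩ := Module.Finite.exists_fin' R G
    obtain ⟨y, rfl⟩ := Ext.contravariant_sequence_exact₃
      (shortExact_shortComplexOfExact (LinearMap.ker f).injective_subtype
        (LinearMap.exact_subtype_ker_map f) hf) _ x
      ((ExtVanishes.of_projective i.succ_pos (A := Fin b → R) (B := H)).eq_zero _) (add_comm 1 i)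
    obtain ⟨n, hn⟩ := ih (G := LinearMap.ker f) y
    exact ⟨n, by rw [← Ext.comp_smul, hn, Ext.comp_zero]⟩

theorem ext_eq_zero_of_smul_eq_zero {j : H' →ₗ[R] H} (hj : Function.Injective j)
    (hexact : Function.Exact j (LinearMap.lsmul R H u))
    (hsurj : Function.Surjective (LinearMap.lsmul R H u)) {i : ℕ} (h : ExtVanishes R i G H')
    {x : Abelian.Ext.{u} (ModuleCat.of R G) (ModuleCat.of R H) i} (hx : u • x = 0) : x = 0 := by
  have hcomp : x.comp (Ext.mk₀ (ModuleCat.ofHom (LinearMap.lsmul R H u))) (add_zero _) = 0 := by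
    have hsmul : ModuleCat.ofHom (LinearMap.lsmul R H u) = u • 𝟙 (ModuleCat.of R H) := by
      ext
      rfl
    rw [hsmul, Ext.mk₀_smul, Ext.comp_smul, Ext.comp_mk₀_id, hx]
  obtain ⟨y, rfl⟩ := Ext.covariant_sequence_exact₂ _
    (shortExact_shortComplexOfExact hj hexact hsurj) x hcomp
  rw [h.eq_zero y, Ext.zero_comp]

theorem IsTopCohomologyLike.extVanishes_succ [IsLocalRing R] [IsNoetherianRing R]
    [Module.Finite R G] (hH : IsTopCohomologyLike R n J H) (htors : IsPowTorsion (maximalIdeal R) H)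
    (hG : ∀ i, ExtVanishes R (i + 1) G (R ⧸ J)) (i : ℕ) : ExtVanishes R (i + 1) G H := by
  induction n generalizing J H i with
  | zero =>
    obtain ⟨-, -, -, ⟨e⟩⟩ := hH
    exact (hG i).congr_right e
  | succ n ih =>
    obtain ⟨u, hum, hu⟩ := hH.2.2.1
    obtain ⟨hsurj, H', _, _, j, hj, hexact, hH'⟩ := hH.2.2.2 u hum hu
    have hExt : ExtVanishes R (i + 1) G H' := ih hH' (htors.of_injective hj)
      (fun i => ExtVanishes.covariant₃ (lsmul_injective hu) (exact_lsmul_factor_sup_span J u)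
        (Submodule.factor_surjective _) (hG i) (hG (i + 1))) i
    refine .of_forall_eq_zero fun x => ?_
    obtain ⟨k, hk⟩ := htors.exists_pow_smul_ext_eq_zero hum x
    induction k with
    | zero => simpa using hk
    | succ k ihk =>
      exact ihk (ext_eq_zero_of_smul_eq_zero hj hexact hsurj hExt
        (by rw [smul_smul, ← pow_succ', hk]))

end ExtIntoTopCohomology

section DualExactness

variable {R : Type u} [CommRing R] {A B C N : Type u} [AddCommGroup A] [Module R A]
  [AddCommGroup B] [Module R B] [AddCommGroup C] [Module R C] [AddCommGroup N] [Module R N]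
  {f : A →ₗ[R] B} {g : B →ₗ[R] C}

theorem exact_lcomp (hfg : Function.Exact f g) (hg : Function.Surjective g) :
    Function.Exact (LinearMap.lcomp R N g) (LinearMap.lcomp R N f) := by
  refine fun φ => ⟨fun h => ?_, ?_⟩
  · refine exists_comp_eq_of_ker_le_ker hg fun b hb => ?_
    obtain ⟨a, rfl⟩ := (hfg b).1 hb
    exact LinearMap.congr_fun h a
  · rintro ⟨ψ, rfl⟩
    ext a
    exact (congrArg ψ (hfg.apply_apply_eq_zero a)).trans (map_zero ψ)

theorem exact_dualMap (hfg : Function.Exact f g) (hg : Function.Surjective g) :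
    Function.Exact g.dualMap f.dualMap :=
  exact_lcomp hfg hg

theorem dualMap_surjective_of_extVanishes (hf : Function.Injective f)
    (hfg : Function.Exact f g) (hg : Function.Surjective g) (hC : ExtVanishes R 1 C R) :
    Function.Surjective f.dualMap :=
  ExtVanishes.exists_extend hf hfg hg hC

end DualExactness

section GDimZero

variable {R : Type u} [CommRing R] {A B C G P : Type u} [AddCommGroup A] [Module R A]
  [AddCommGroup B] [Module R B] [AddCommGroup C] [Module R C] [AddCommGroup G] [Module R G]
  [AddCommGroup P] [Module R P]

namespace IsGDimZero

theorem finite (h : IsGDimZero R G) : Module.Finite R G := h.1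

theorem bijective_eval (h : IsGDimZero R G) : Function.Bijective (Module.Dual.eval R G) := h.2.1

theorem extVanishes (h : IsGDimZero R G) (i : ℕ) : ExtVanishes R (i + 1) G R :=
  (subsingleton_extM_iff _ _ _).1 (h.2.2.1 (i + 1) i.succ_pos)

theorem extVanishes_dual (h : IsGDimZero R G) (i : ℕ) :
    ExtVanishes R (i + 1) (Module.Dual R G) R :=
  (subsingleton_extM_iff _ _ _).1 (h.2.2.2 (i + 1) i.succ_pos)

theorem of_extVanishes (hfin : Module.Finite R G)
    (hbij : Function.Bijective (Module.Dual.eval R G)) (h : ∀ i, ExtVanishes R (i + 1) G R)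
    (hdual : ∀ i, ExtVanishes R (i + 1) (Module.Dual R G) R) : IsGDimZero R G := by
  refine ⟨hfin, hbij, fun i hi => ?_, fun i hi => ?_⟩ <;>
  obtain ⟨i, rfl⟩ := Nat.exists_eq_succ_of_ne_zero hi.ne'
  exacts [(subsingleton_extM_iff _ _ _).2 (h i), (subsingleton_extM_iff _ _ _).2 (hdual i)]

theorem of_projective [Module.Projective R P] [Module.Finite R P] : IsGDimZero R P :=
  of_extVanishes inferInstance (Module.bijective_dual_eval R P)
    (fun i => ExtVanishes.of_projective i.succ_pos) fun i => ExtVanishes.of_projective i.succ_pos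

theorem dual [IsNoetherianRing R] (h : IsGDimZero R G) : IsGDimZero R (Module.Dual R G) := by
  have := h.finite
  have : Module.IsReflexive R G := ⟨h.bijective_eval⟩
  exact of_extVanishes inferInstance (Module.bijective_dual_eval R _) h.extVanishes_dual
    fun i => (h.extVanishes i).congr_left (Module.evalEquiv R G)

variable {f : A →ₗ[R] B} {g : B →ₗ[R] C}

theorem bijective_eval_of_exact (hf : Function.Injective f) (hfg : Function.Exact f g)
    (hg : Function.Surjective g) (hA : IsGDimZero R A) (hC : IsGDimZero R C) :
    Function.Bijective (Module.Dual.eval R B) := by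
  have hexact := exact_dualMap hfg hg
  have hsurj := dualMap_surjective_of_extVanishes hf hfg hg (hC.extVanishes 0)
  refine ⟨(injective_iff_map_eq_zero _).2 fun b hb => ?_, fun β => ?_⟩
  · have hgb : g b = 0 := (map_eq_zero_iff _ hC.bijective_eval.1).1 <|
      LinearMap.ext fun φ => LinearMap.congr_fun hb (g.dualMap φ)
    obtain ⟨a, rfl⟩ := (hfg b).1 hgb
    suffices a = 0 by rw [this, map_zero]
    refine (map_eq_zero_iff _ hA.bijective_eval.1).1 (LinearMap.ext fun φ => ?_)
    obtain ⟨ψ, rfl⟩ := hsurj φ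
    exact LinearMap.congr_fun hb ψ
  · obtain ⟨c, hc⟩ := hC.bijective_eval.2 (g.dualMap.dualMap β)
    obtain ⟨b, rfl⟩ := hg c
    obtain ⟨α, hα⟩ := (exact_dualMap hexact hsurj (β - Module.Dual.eval R B b)).1 <| by
      rw [map_sub, sub_eq_zero, ← hc]
      rfl
    obtain ⟨a, rfl⟩ := hA.bijective_eval.2 α
    refine ⟨f a + b, ?_⟩
    rw [map_add, ← eq_sub_iff_add_eq, ← hα]
    rfl

theorem of_exact (hf : Function.Injective f) (hfg : Function.Exact f g)
    (hg : Function.Surjective g) (hA : IsGDimZero R A) (hC : IsGDimZero R C) :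
    IsGDimZero R B := by
  have := hA.finite
  have := hC.finite
  have hexact := exact_dualMap hfg hg
  have hsurj := dualMap_surjective_of_extVanishes hf hfg hg (hC.extVanishes 0)
  have hinj := LinearMap.dualMap_injective_of_surjective hg
  exact of_extVanishes (Module.Finite.of_exact hfg hg) (bijective_eval_of_exact hf hfg hg hA hC)
    (fun i => ExtVanishes.contravariant₂ hf hfg hg (hC.extVanishes i) (hA.extVanishes i))
    fun i => ExtVanishes.contravariant₂ hinj hexact hsurj
      (hA.extVanishes_dual i) (hC.extVanishes_dual i)

variable [Module.Projective R P] [Module.Finite R P] {p : P →ₗ[R] C}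

theorem bijective_eval_ker (hp : Function.Surjective p) (hC : IsGDimZero R C) :
    Function.Bijective (Module.Dual.eval R (LinearMap.ker p)) := by
  have hexact := exact_dualMap (LinearMap.exact_subtype_ker_map p) hp
  have hsurj := dualMap_surjective_of_extVanishes Subtype.val_injective
    (LinearMap.exact_subtype_ker_map p) hp (hC.extVanishes 0)
  refine ⟨(injective_iff_map_eq_zero _).2 fun k hk => Subtype.ext ?_, fun κ => ?_⟩
  · exact (map_eq_zero_iff _ (Module.bijective_dual_eval R P).1).1 <|
      LinearMap.ext fun φ => LinearMap.congr_fun hk ((LinearMap.ker p).subtype.dualMap φ)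
  · obtain ⟨x, hx⟩ :=
      (Module.bijective_dual_eval R P).2 ((LinearMap.ker p).subtype.dualMap.dualMap κ)
    have hpx : p x = 0 := (map_eq_zero_iff _ hC.bijective_eval.1).1 <| LinearMap.ext fun φ => by
      refine (LinearMap.congr_fun hx (p.dualMap φ)).trans ((congrArg κ ?_).trans (map_zero κ))
      exact hexact.apply_apply_eq_zero φ
    refine ⟨⟨x, hpx⟩, LinearMap.ext fun φ => ?_⟩
    obtain ⟨ψ, rfl⟩ := hsurj φ
    exact LinearMap.congr_fun hx ψ

theorem ker [IsNoetherianRing R] (hp : Function.Surjective p) (hC : IsGDimZero R C) :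
    IsGDimZero R (LinearMap.ker p) := by
  have hexact := LinearMap.exact_subtype_ker_map p
  have hinj : Function.Injective (LinearMap.ker p).subtype := Subtype.val_injective
  have hinj' := LinearMap.dualMap_injective_of_surjective hp
  have hexact' := exact_dualMap hexact hp
  have hsurj' := dualMap_surjective_of_extVanishes hinj hexact hp (hC.extVanishes 0)
  refine of_extVanishes inferInstance (bijective_eval_ker hp hC) (fun i =>
    ExtVanishes.contravariant₁ hinj hexact hp (.of_projective i.succ_pos) (hC.extVanishes _))
    fun i => ?_
  cases i with
  | zero =>
    refine ExtVanishes.one_of_forall_extend hinj' hexact' hsurj' (fun φ => ?_)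
      (.of_projective one_pos)
    obtain ⟨c, rfl⟩ := hC.bijective_eval.2 φ
    obtain ⟨x, rfl⟩ := hp c
    exact ⟨Module.Dual.eval R _ x, rfl⟩
  | succ i =>
    exact ExtVanishes.contravariant₃ hinj' hexact' hsurj' (hC.extVanishes_dual i)
      (.of_projective (Nat.succ_pos _))

theorem exists_embedding [IsNoetherianRing R] (h : IsGDimZero R G) :
    ∃ (F C : ModuleCat.{u} R) (ι : G →ₗ[R] F) (q : F →ₗ[R] C),
      Module.Free R F ∧ Module.Finite R F ∧ Function.Injective ι ∧ Function.Exact ι q ∧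
      Function.Surjective q ∧ IsGDimZero R C := by
  have := h.dual.finite
  obtain ⟨b, p, hp⟩ := Module.Finite.exists_fin' R (Module.Dual R G)
  have hexact := LinearMap.exact_subtype_ker_map p
  refine ⟨.of R (Module.Dual R (Fin b → R)), .of R (Module.Dual R (LinearMap.ker p)),
    p.dualMap ∘ₗ Module.Dual.eval R G, (LinearMap.ker p).subtype.dualMap,
    inferInstanceAs (Module.Free R (Module.Dual R (Fin b → R))),
    inferInstanceAs (Module.Finite R (Module.Dual R (Fin b → R))),
    (LinearMap.dualMap_injective_of_surjective hp).comp h.bijective_eval.1,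
    fun φ => (exact_dualMap hexact hp φ).trans ?_,
    dualMap_surjective_of_extVanishes Subtype.val_injective hexact hp (h.dual.extVanishes 0),
    (h.dual.ker hp).dual⟩
  exact Set.ext_iff.1 (h.bijective_eval.2.range_comp p.dualMap).symm φ

end IsGDimZero

end GDimZero

section FiniteProjectiveHull

variable {R : Type u} [CommRing R]

/-- The natural isomorphism `R ≃ R ⧸ 0`. -/
noncomputable def quotBotEquiv (R : Type u) [CommRing R] : R ≃ₗ[R] R ⧸ (⊥ : Ideal R) :=
  (Submodule.quotEquivOfEqBot _ rfl).symm

theorem projective_pi_quotient_bot (b : ℕ) :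
    Module.Projective R (Fin b → R ⧸ (⊥ : Ideal R)) :=
  .of_equiv (LinearEquiv.piCongrRight fun _ => quotBotEquiv R)

section

variable (R) (F : Type u) [AddCommGroup F] [Module R F] [Module.Free R F] [Module.Finite R F]

theorem exists_linearEquiv_pi_quotient_bot :
    ∃ b : ℕ, Nonempty (F ≃ₗ[R] (Fin b → R ⧸ (⊥ : Ideal R))) := by
  obtain ⟨b, ⟨e⟩⟩ : ∃ b : ℕ, Nonempty (F ≃ₗ[R] (Fin b → R)) :=
    ⟨_, ⟨(Module.Free.chooseBasis R F).equivFun ≪≫ₗ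
      LinearEquiv.funCongrLeft R R (Fintype.equivFin _).symm⟩⟩
  exact ⟨b, ⟨e ≪≫ₗ LinearEquiv.piCongrRight fun _ => quotBotEquiv R⟩⟩

variable {R F}

theorem ExtVanishes.exists_extend_of_free {A B C : Type u} [AddCommGroup A] [Module R A]
    [AddCommGroup B] [Module R B] [AddCommGroup C] [Module R C] {f : A →ₗ[R] B} {g : B →ₗ[R] C}
    (hf : Function.Injective f) (hfg : Function.Exact f g) (hg : Function.Surjective g)
    (hC : ExtVanishes R 1 C R) (φ : A →ₗ[R] F) : ∃ ψ : B →ₗ[R] F, ψ ∘ₗ f = φ := by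
  let basis := Module.Free.chooseBasis R F
  choose ψ hψ using fun k => exists_extend hf hfg hg hC (basis.coord k ∘ₗ φ)
  refine ⟨basis.equivFun.symm.toLinearMap ∘ₗ LinearMap.pi ψ, LinearMap.ext fun a => ?_⟩
  exact (LinearEquiv.symm_apply_eq basis.equivFun).2
    (funext fun k => LinearMap.congr_fun (hψ k) a)

end

theorem HasPdLE.quotient_range {n : ℕ} {F L : Type u} [AddCommGroup F] [Module R F]
    [Module.Free R F] [Module.Finite R F] [AddCommGroup L] [Module R L] {j : L →ₗ[R] F}
    (hj : Function.Injective j) (hL : HasPdLE (⊥ : Ideal R) n L) :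
    HasPdLE (⊥ : Ideal R) (n + 1) (F ⧸ LinearMap.range j) := by
  obtain ⟨b, ⟨e⟩⟩ := exists_linearEquiv_pi_quotient_bot R F
  let f := (LinearMap.range j).mkQ ∘ₗ e.symm.toLinearMap
  have hker : LinearMap.range (e.toLinearMap ∘ₗ j) = LinearMap.ker f := by
    rw [LinearMap.ker_comp, Submodule.ker_mkQ, LinearMap.range_comp,
      Submodule.map_equiv_eq_comap_symm]
  refine ⟨b, f, (Submodule.mkQ_surjective _).comp e.symm.surjective, hL.congr ?_⟩
  exact LinearEquiv.ofInjective (e.toLinearMap ∘ₗ j) (e.injective.comp hj) ≪≫ₗ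
    LinearEquiv.ofEq _ _ hker

/-- `T` embeds into a module of finite projective dimension, the hull, with cokernel of
G-dimension zero. Every module of finite G-dimension has such a hull. -/
def HasFinitePdHull (R : Type u) [CommRing R] (T : Type u) [AddCommGroup T] [Module R T] : Prop :=
  ∃ (n : ℕ) (L C : ModuleCat.{u} R) (ι : T →ₗ[R] L) (q : L →ₗ[R] C),
    Function.Injective ι ∧ Function.Exact ι q ∧ Function.Surjective q ∧
    HasPdLE (⊥ : Ideal R) n L ∧ IsGDimZero R C

section HullStep

variable {Y G T L C F D F' D' : Type u} [AddCommGroup Y] [Module R Y] [AddCommGroup G]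
  [Module R G] [AddCommGroup T] [Module R T] [AddCommGroup L] [Module R L] [AddCommGroup C]
  [Module R C] [AddCommGroup F] [Module R F] [AddCommGroup D] [Module R D]
  [AddCommGroup F'] [Module R F'] [AddCommGroup D'] [Module R D']
  {i : Y →ₗ[R] G} {f : G →ₗ[R] T} {ι : Y →ₗ[R] L} {q : L →ₗ[R] C}
  {j : G →ₗ[R] F} {p : F →ₗ[R] D} {j' : C →ₗ[R] F'} {p' : F' →ₗ[R] D'} {e : L →ₗ[R] F}

theorem prod_comp_injective (hι : Function.Injective (e ∘ₗ ι)) (hιq : Function.Exact ι q)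
    (hj' : Function.Injective j') : Function.Injective (e.prod (j' ∘ₗ q)) := by
  refine (injective_iff_map_eq_zero _).2 fun l hl => ?_
  obtain ⟨y, rfl⟩ := (hιq l).1 ((map_eq_zero_iff _ hj').1 (congrArg Prod.snd hl))
  rw [(map_eq_zero_iff _ hι).1 (congrArg Prod.fst hl), map_zero]

variable {t : T →ₗ[R] (F × F') ⧸ LinearMap.range (e.prod (j' ∘ₗ q))}

theorem injective_of_comp_eq_mkQ_comp_inl (hif : Function.Exact i f) (hf : Function.Surjective f)
    (hιq : Function.Exact ι q) (hj : Function.Injective j) (hj' : Function.Injective j')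
    (he : e ∘ₗ ι = j ∘ₗ i) (ht : t ∘ₗ f = Submodule.mkQ _ ∘ₗ LinearMap.inl R F F' ∘ₗ j) :
    Function.Injective t := by
  refine (injective_iff_map_eq_zero _).2 fun x hx => ?_
  obtain ⟨g, rfl⟩ := hf x
  obtain ⟨l, hl⟩ :=
    (Submodule.Quotient.mk_eq_zero _).1 ((LinearMap.congr_fun ht g).symm.trans hx)
  obtain ⟨y, rfl⟩ := (hιq l).1 ((map_eq_zero_iff _ hj').1 (congrArg Prod.snd hl))
  have hjg : j (i y) = j g := (LinearMap.congr_fun he y).symm.trans (congrArg Prod.fst hl)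
  rw [← hj hjg, hif.apply_apply_eq_zero]

theorem mkQ_range_mkQ_eq_zero_iff (hf : Function.Surjective f)
    (ht : t ∘ₗ f = Submodule.mkQ _ ∘ₗ LinearMap.inl R F F' ∘ₗ j) (z : F × F') :
    (LinearMap.range t).mkQ (Submodule.mkQ _ z) = 0 ↔
      ∃ l g, e l + j g = z.1 ∧ j' (q l) = z.2 := by
  rw [Submodule.mkQ_apply, Submodule.Quotient.mk_eq_zero]
  constructor
  · rintro ⟨x, hx⟩
    obtain ⟨g, rfl⟩ := hf x
    obtain ⟨l, hl⟩ := (Submodule.Quotient.eq _).1 (hx.symm.trans (LinearMap.congr_fun ht g))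
    refine ⟨l, g, ?_, (congrArg Prod.snd hl).trans (sub_zero _)⟩
    exact eq_sub_iff_add_eq.1 (congrArg Prod.fst hl)
  · rintro ⟨l, g, hx, hy⟩
    refine ⟨f g, (LinearMap.congr_fun ht g).trans ((Submodule.Quotient.eq _).2 ⟨-l, ?_⟩)⟩
    ext
    · simp [← hx]
    · simp [← hy]

theorem isGDimZero_quotient_range (hf : Function.Surjective f) (hιq : Function.Exact ι q)
    (hq : Function.Surjective q) (hjp : Function.Exact j p) (hp : Function.Surjective p)
    (hj' : Function.Injective j') (hjp' : Function.Exact j' p') (hp' : Function.Surjective p')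
    (he : e ∘ₗ ι = j ∘ₗ i) (ht : t ∘ₗ f = Submodule.mkQ _ ∘ₗ LinearMap.inl R F F' ∘ₗ j)
    (hD : IsGDimZero R D) (hD' : IsGDimZero R D') : IsGDimZero R (_ ⧸ LinearMap.range t) := by
  let π := (LinearMap.range t).mkQ ∘ₗ Submodule.mkQ _
  have hπ : Function.Surjective π := (Submodule.mkQ_surjective _).comp (Submodule.mkQ_surjective _)
  have mem_ker_π : ∀ z, π z = 0 ↔ _ := mkQ_range_mkQ_eq_zero_iff hf ht
  obtain ⟨α, hα⟩ := exists_comp_eq_of_ker_le_ker hp (f := π ∘ₗ LinearMap.inl R F F') fun x hx => by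
    obtain ⟨g, rfl⟩ := (hjp x).1 hx
    exact (mem_ker_π _).2 ⟨0, g, by simp, by simp⟩
  obtain ⟨β, hβ⟩ := exists_comp_eq_of_ker_le_ker hπ (f := p' ∘ₗ LinearMap.snd R F F') fun z hz => by
    obtain ⟨l, g, -, hl⟩ := (mem_ker_π z).1 hz
    exact (hjp' z.2).2 ⟨q l, hl⟩
  refine IsGDimZero.of_exact (f := α) (g := β) ?_ (fun w => ⟨fun hw => ?_, ?_⟩) ?_ hD hD'
  · refine (injective_iff_map_eq_zero _).2 fun x hx => ?_
    obtain ⟨x, rfl⟩ := hp x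
    obtain ⟨l, g, hl, hl'⟩ := (mem_ker_π _).1 ((LinearMap.congr_fun hα x).symm.trans hx)
    obtain ⟨y, rfl⟩ := (hιq l).1 ((map_eq_zero_iff _ hj').1 hl')
    refine (hjp x).2 ⟨i y + g, ?_⟩
    rw [map_add]
    exact (congrArg (· + j g) (LinearMap.congr_fun he y).symm).trans hl
  · obtain ⟨z, rfl⟩ := hπ w
    obtain ⟨c, hc⟩ := (hjp' z.2).1 ((LinearMap.congr_fun hβ z).symm.trans hw)
    obtain ⟨l, rfl⟩ := hq c
    refine ⟨p (z.1 - e l), (LinearMap.congr_fun hα _).trans (sub_eq_zero.1 ?_)⟩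
    rw [LinearMap.comp_apply, ← map_sub]
    exact (mem_ker_π _).2 ⟨-l, 0, by simp, by simp [hc]⟩
  · rintro ⟨x, rfl⟩
    obtain ⟨x, rfl⟩ := hp x
    have hαx : α (p x) = π (x, 0) := LinearMap.congr_fun hα x
    rw [hαx]
    exact (LinearMap.congr_fun hβ _).trans (map_zero p')
  · exact fun y => (hp' y).imp' (fun y => π (0, y)) fun y hy => (LinearMap.congr_fun hβ _).trans hy

/-- Given `0 → Y → G → T → 0` with `Y ↪ L` a hull and `L ↠ C` its cokernel, embed `G` and `C` into
free modules `F` and `F'`. Since `Ext^1(C, R) = 0`, the composite `Y → G → F` extends to `L → F`,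
so `L` embeds into `F × F'`, and the quotient is a hull of `T`. -/
theorem HasFinitePdHull.of_exact [IsNoetherianRing R] (hi : Function.Injective i)
    (hif : Function.Exact i f) (hf : Function.Surjective f) (hG : IsGDimZero R G)
    (hY : HasFinitePdHull R Y) : HasFinitePdHull R T := by
  obtain ⟨n, L, C, ι, q, hι, hιq, hq, hL, hC⟩ := hY
  obtain ⟨F, D, j, p, _, _, hj, hjp, hp, hD⟩ := hG.exists_embedding
  obtain ⟨F', D', j', p', _, _, hj', hjp', hp', hD'⟩ := hC.exists_embedding
  obtain ⟨e, he⟩ := ExtVanishes.exists_extend_of_free hι hιq hq (hC.extVanishes 0) (j ∘ₗ i)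
  have hk : Function.Injective (e.prod (j' ∘ₗ q)) :=
    prod_comp_injective (by rw [he]; exact hj.comp hi) hιq hj'
  obtain ⟨t, ht⟩ := exists_comp_eq_of_ker_le_ker hf
    (f := Submodule.mkQ (LinearMap.range (e.prod (j' ∘ₗ q))) ∘ₗ LinearMap.inl R F F' ∘ₗ j)
    fun g hg => by
      obtain ⟨y, rfl⟩ := (hif g).1 hg
      refine (Submodule.Quotient.mk_eq_zero _).2 ⟨ι y, Prod.ext (LinearMap.congr_fun he y) ?_⟩
      exact (congrArg j' (hιq.apply_apply_eq_zero y)).trans (map_zero j')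
  exact ⟨n + 1, .of R ((F × F') ⧸ _), .of R (_ ⧸ LinearMap.range t), t, (LinearMap.range t).mkQ,
    injective_of_comp_eq_mkQ_comp_inl hif hf hιq hj hj' he ht, t.exact_map_mkQ_range,
    Submodule.mkQ_surjective _, hL.quotient_range hk,
    isGDimZero_quotient_range hf hιq hq hjp hp hj' hjp' hp' he ht hD hD'⟩

end HullStep

variable {T H : Type u} [AddCommGroup T] [Module R T] [AddCommGroup H] [Module R H]

theorem HasFinitePdHull.of_isGDimZero [IsNoetherianRing R] (h : IsGDimZero R T) :
    HasFinitePdHull R T := by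
  obtain ⟨F, C, ι, q, _, _, hι, hιq, hq, hC⟩ := h.exists_embedding
  exact ⟨0, F, C, ι, q, hι, hιq, hq, exists_linearEquiv_pi_quotient_bot R F, hC⟩

theorem HasFinitePdHull.of_gDimLE [IsNoetherianRing R] {n : ℕ} {T : ModuleCat.{u} R}
    (h : GDimLE R n T) : HasFinitePdHull R T := by
  induction n generalizing T with
  | zero => exact .of_isGDimZero h
  | succ n ih =>
    obtain ⟨G, f, hG, hf, hker⟩ := h
    exact .of_exact Subtype.val_injective (LinearMap.exact_subtype_ker_map f) hf hG (ih hker)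

theorem HasFinitePdHull.congr {T' : Type u} [AddCommGroup T'] [Module R T'] (e : T ≃ₗ[R] T')
    (h : HasFinitePdHull R T) : HasFinitePdHull R T' := by
  obtain ⟨n, L, C, ι, q, hι, hιq, hq, hL, hC⟩ := h
  refine ⟨n, L, C, ι ∘ₗ e.symm.toLinearMap, q, hι.comp e.symm.injective, fun x => ?_, hq, hL, hC⟩
  exact (hιq x).trans (Set.ext_iff.1 (e.symm.surjective.range_comp ι).symm x)

namespace IsTopCohomologyLike

variable [IsNoetherianRing R] [IsLocalRing R] {d n : ℕ}

theorem extVanishes_one_of_hasPdLE (hH : IsTopCohomologyLike R d (⊥ : Ideal R) H)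
    (hT : HasPdLE (⊥ : Ideal R) n T) : ExtVanishes R 1 T H := by
  have := @projective_pi_quotient_bot R _
  cases n with
  | zero =>
    obtain ⟨b, ⟨e⟩⟩ := hT
    exact ExtVanishes.congr_left e.symm (.of_projective one_pos)
  | succ n =>
    obtain ⟨b, f, hf, hker⟩ := hT
    exact ExtVanishes.one_of_forall_extend Subtype.val_injective
      (LinearMap.exact_subtype_ker_map f) hf (hH.exists_extension hker) (.of_projective one_pos)

theorem extVanishes_one_of_hasFinitePdHull (hH : IsTopCohomologyLike R d (⊥ : Ideal R) H)
    (htors : IsPowTorsion (maximalIdeal R) H) (hT : HasFinitePdHull R T) :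
    ExtVanishes R 1 T H := by
  obtain ⟨n, L, C, ι, q, hι, hιq, hq, hL, hC⟩ := hT
  have := hC.finite
  exact ExtVanishes.contravariant₁ hι hιq hq (hH.extVanishes_one_of_hasPdLE hL)
    (hH.extVanishes_succ htors (fun i => (hC.extVanishes i).congr_right (quotBotEquiv R)) 1)

theorem exists_hom_apply_ne_zero_of_hasFinitePdHull
    (hH : IsTopCohomologyLike R d (⊥ : Ideal R) H) (hT : HasFinitePdHull R T) {t : T}
    (ht : t ≠ 0) : ∃ f : T →ₗ[R] H, f t ≠ 0 := by
  obtain ⟨n, L, C, ι, q, hι, -, -, hL, -⟩ := hT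
  obtain ⟨f, hf⟩ := hH.exists_hom_apply_ne_zero hL ((map_ne_zero_iff _ hι).2 ht)
  exact ⟨f ∘ₗ ι, hf⟩

end IsTopCohomologyLike

end FiniteProjectiveHull

section Exactness

variable {R : Type u} [CommRing R] {A B C K N : Type u} [AddCommGroup A] [Module R A]
  [AddCommGroup B] [Module R B] [AddCommGroup C] [Module R C] [AddCommGroup K] [Module R K]
  [AddCommGroup N] [Module R N] {f : A →ₗ[R] B} {g : B →ₗ[R] C}

theorem exact_comp_left_iff_injective {p : B →ₗ[R] K} {h : K →ₗ[R] C} (hfp : Function.Exact f p)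
    (hp : Function.Surjective p) : Function.Exact f (h ∘ₗ p) ↔ Function.Injective h := by
  refine ⟨fun hex => (injective_iff_map_eq_zero _).2 fun k hk => ?_,
    fun hh => hfp.comp_injective h hh (map_zero h)⟩
  obtain ⟨b, rfl⟩ := hp k
  exact (hfp b).2 ((hex b).1 hk)

theorem exact_comp_right_iff_surjective {q : A →ₗ[R] K} {h : K →ₗ[R] B} (hhg : Function.Exact h g)
    (hh : Function.Injective h) : Function.Exact (h ∘ₗ q) g ↔ Function.Surjective q := by
  refine ⟨fun hex k => ?_, fun hq => ?_⟩
  · obtain ⟨a, ha⟩ := (hex (h k)).1 (hhg.apply_apply_eq_zero k)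
    exact ⟨a, hh ha⟩
  · exact fun b => (hhg b).trans (Set.ext_iff.1 (hq.range_comp h).symm b)

theorem exact_rangeRestrict (hfg : Function.Exact f g) : Function.Exact f g.rangeRestrict :=
  fun b => Subtype.ext_iff.trans (hfg b)

theorem extVanishes_one_quotient_range_iff [Module.Projective R C] (hfg : Function.Exact f g) :
    ExtVanishes R 1 (C ⧸ LinearMap.range g) R ↔ Function.Exact g.dualMap f.dualMap := by
  have hinj := (LinearMap.range g).injective_subtype
  have hex := LinearMap.exact_subtype_mkQ (LinearMap.range g)
  have hsurj := Submodule.mkQ_surjective (LinearMap.range g)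
  have hdual := exact_dualMap (exact_rangeRestrict hfg) g.surjective_rangeRestrict
  calc
    _ ↔ Function.Surjective (LinearMap.range g).subtype.dualMap :=
      ⟨dualMap_surjective_of_extVanishes hinj hex hsurj, fun h =>
        .one_of_forall_extend hinj hex hsurj h (.of_projective one_pos)⟩
    _ ↔ _ := (exact_comp_right_iff_surjective hdual
      (LinearMap.dualMap_injective_of_surjective g.surjective_rangeRestrict)).symm

theorem exact_lcomp_of_extVanishes_one (hfg : Function.Exact f g)
    (h : ExtVanishes R 1 (C ⧸ LinearMap.range g) N) :
    Function.Exact (LinearMap.lcomp R N g) (LinearMap.lcomp R N f) :=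
  (exact_comp_right_iff_surjective (q := LinearMap.lcomp R N (LinearMap.range g).subtype)
    (exact_lcomp (exact_rangeRestrict hfg) g.surjective_rangeRestrict)
    (LinearMap.lcomp_injective_of_surjective _ g.surjective_rangeRestrict)).2
    (ExtVanishes.exists_extend (LinearMap.range g).injective_subtype
      (LinearMap.exact_subtype_mkQ _) (Submodule.mkQ_surjective _) h)

theorem exact_of_exact_lcomp (hgf : g ∘ₗ f = 0)
    (hN : ∀ t : B ⧸ LinearMap.range f, t ≠ 0 → ∃ φ : B ⧸ LinearMap.range f →ₗ[R] N, φ t ≠ 0)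
    (h : Function.Exact (LinearMap.lcomp R N g) (LinearMap.lcomp R N f)) :
    Function.Exact f g := by
  refine fun b => ⟨fun hb => ?_, fun ⟨a, ha⟩ => ha ▸ LinearMap.congr_fun hgf a⟩
  by_contra hmem
  obtain ⟨φ, hφ⟩ := hN (Submodule.Quotient.mk b) (mt (Submodule.Quotient.mk_eq_zero _).1 hmem)
  obtain ⟨ψ, hψ⟩ := (h (φ ∘ₗ Submodule.mkQ _)).1 (by
    rw [LinearMap.lcomp_apply', LinearMap.comp_assoc, LinearMap.range_mkQ_comp,
      LinearMap.comp_zero])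
  refine hφ ((LinearMap.congr_fun hψ b).symm.trans ?_)
  rw [LinearMap.lcomp_apply, hb, map_zero]

theorem exists_id_eq_sum_toSpanSingleton_comp (R P : Type u) [CommRing R] [AddCommGroup P]
    [Module R P] [Module.Finite R P] [Module.Projective R P] :
    ∃ (n : ℕ) (s : Fin n → Module.Dual R P) (e : Fin n → P),
      (LinearMap.id : P →ₗ[R] P) = ∑ k, LinearMap.toSpanSingleton R P (e k) ∘ₗ s k := by
  obtain ⟨n, p, s, -, -, hps⟩ := Module.Finite.exists_comp_eq_id_of_projective R P
  refine ⟨n, fun k => LinearMap.proj k ∘ₗ s, fun k => p (Pi.single k 1), ?_⟩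
  ext x
  rw [← hps, LinearMap.comp_apply, pi_eq_sum_univ' (s x), map_sum, LinearMap.sum_apply]
  simp

end Exactness

namespace LocalCoh

variable {R : Type u} [CommRing R] {I : Ideal R} {A B C P Q : Type u} [AddCommGroup A] [Module R A]
  [AddCommGroup B] [Module R B] [AddCommGroup C] [Module R C] [AddCommGroup P] [Module R P]
  [AddCommGroup Q] [Module R Q] {f : A →ₗ[R] B} {g : B →ₗ[R] C} {i : ℕ}

theorem subsingleton_iff_injective_map (hf : Function.Injective f) (hfg : Function.Exact f g)
    (hg : Function.Surjective g) (hB : Subsingleton (LocalCoh I B i)) :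
    Subsingleton (LocalCoh I C i) ↔ Function.Injective (map I (i + 1) f) := by
  refine ⟨fun hC => (injective_iff_map_eq_zero _).2 fun z hz => ?_,
    fun h => subsingleton_of_forall_eq 0 fun z => ?_⟩
  · obtain ⟨w, rfl⟩ := (exact_delta_map hf hfg hg z).1 hz
    rw [hC.elim w 0, map_zero]
  · have hδ : delta hf hfg hg I i z = 0 :=
      h (((exact_delta_map hf hfg hg).apply_apply_eq_zero z).trans (map_zero _).symm)
    obtain ⟨w, rfl⟩ := (exact_map_delta hf hfg hg z).1 hδ
    rw [hB.elim w 0, map_zero]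

section RightExactness

variable [IsNoetherianRing R] [IsLocalRing R] {d : ℕ} (hR : ringKrullDim R ≤ d)

include hR

theorem map_surjective_of_ringKrullDim_le [Module.Finite R B] (hg : Function.Surjective g) :
    Function.Surjective (map (maximalIdeal R) d g) := fun z =>
  (exact_map_delta Subtype.val_injective (LinearMap.exact_subtype_ker_map g) hg z).1
    ((subsingleton_of_ringKrullDim_lt hR (LinearMap.ker g) d.lt_succ_self).elim _ _)

theorem exact_map_map_of_ringKrullDim_le [Module.Finite R A] (hfg : Function.Exact f g)
    (hg : Function.Surjective g) :
    Function.Exact (map (maximalIdeal R) d f) (map (maximalIdeal R) d g) := by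
  have hker := exact_map_map (I := maximalIdeal R) (i := d) (LinearMap.range f).injective_subtype
    (LinearMap.exact_iff.2 (by rw [Submodule.range_subtype, LinearMap.exact_iff.1 hfg])) hg
  have hsurj := map_surjective_of_ringKrullDim_le hR f.surjective_rangeRestrict
  refine fun z => (hker z).trans (Set.ext_iff.1 ?_ z)
  rw [← hsurj.range_comp]
  exact congrArg Set.range (funext fun w => (map_comp _ _ w).symm)

end RightExactness

theorem subsingleton_quotient_range_iff_exact_map [IsNoetherianRing R] [IsLocalRing R]
    [Module.Finite R A] [Module.Finite R B] (hR : ringKrullDim R ≤ (i + 1 : ℕ))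
    (hC : Subsingleton (LocalCoh (maximalIdeal R) C i)) (hfg : Function.Exact f g) :
    Subsingleton (LocalCoh (maximalIdeal R) (C ⧸ LinearMap.range g) i) ↔
      Function.Exact (map (maximalIdeal R) (i + 1) f) (map (maximalIdeal R) (i + 1) g) := by
  have map_factor : map (maximalIdeal R) (i + 1) g =
      map (maximalIdeal R) (i + 1) (LinearMap.range g).subtype ∘ₗ
        map (maximalIdeal R) (i + 1) g.rangeRestrict :=
    LinearMap.ext fun z => map_comp g.rangeRestrict (LinearMap.range g).subtype z
  have hex := exact_map_map_of_ringKrullDim_le hR (exact_rangeRestrict hfg)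
    g.surjective_rangeRestrict
  have hsurj := map_surjective_of_ringKrullDim_le hR g.surjective_rangeRestrict
  rw [map_factor]
  exact (subsingleton_iff_injective_map (LinearMap.range g).injective_subtype
    (LinearMap.exact_subtype_mkQ _) (Submodule.mkQ_surjective _) hC).trans
    (exact_comp_left_iff_injective hex hsurj).symm

/-- The natural map `H^i_I(P) → Hom_R(P*, H^i_I(R))`, which evaluates `H^i_I(φ)` for `φ : P → R`. -/
noncomputable def toDualHom (I : Ideal R) (i : ℕ) (P : Type u) [AddCommGroup P] [Module R P] :
    LocalCoh I P i →ₗ[R] Module.Dual R P →ₗ[R] LocalCoh I R i :=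
  LinearMap.mk₂ R (fun z φ => map I i φ z) (fun _ _ _ => map_add _ _ _)
    (fun _ _ _ => map_smul _ _ _) (fun z φ ψ => map_add_left φ ψ z) fun r z φ => map_smul_left r φ z

theorem toDualHom_map (f : P →ₗ[R] Q) (z : LocalCoh I P i) :
    toDualHom I i Q (map I i f z) = toDualHom I i P z ∘ₗ f.dualMap :=
  LinearMap.ext fun _ => (map_comp _ _ z).symm

section DualBasis

variable {n : ℕ} {s : Fin n → Module.Dual R P} {e : Fin n → P}
  (hid : LinearMap.id = ∑ k, LinearMap.toSpanSingleton R P (e k) ∘ₗ s k)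

include hid

theorem eq_sum_map_toSpanSingleton (z : LocalCoh I P i) :
    z = ∑ k, map I i (LinearMap.toSpanSingleton R P (e k)) (map I i (s k) z) :=
  calc
    z = map I i LinearMap.id z := (map_id z).symm
    _ = _ := by simp_rw [hid, map_sum_left, map_comp]

theorem toDualHom_sum_map_toSpanSingleton (h : Module.Dual R P →ₗ[R] LocalCoh I R i) :
    toDualHom I i P (∑ k, map I i (LinearMap.toSpanSingleton R P (e k)) (h (s k))) = h := by
  ext φ
  have hφ : φ = ∑ k, φ (e k) • s k := by
    ext x
    have hx := LinearMap.congr_fun (congrArg (φ ∘ₗ ·) hid) x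
    simpa [mul_comm] using hx
  have comp_eq : ∀ k, φ ∘ₗ LinearMap.toSpanSingleton R P (e k) = LinearMap.lsmul R R (φ (e k)) :=
    fun k => by ext; simp
  calc
    _ = ∑ k, map I i φ (map I i (LinearMap.toSpanSingleton R P (e k)) (h (s k))) := map_sum _ _ _
    _ = ∑ k, φ (e k) • h (s k) := by simp_rw [← map_comp, comp_eq, map_lsmul]
    _ = h φ := by rw [hφ, map_sum]; simp [← hφ]

end DualBasis

variable [Module.Finite R P] [Module.Projective R P]

theorem bijective_toDualHom : Function.Bijective (toDualHom I i P) := by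
  obtain ⟨n, s, e, hid⟩ := exists_id_eq_sum_toSpanSingleton_comp R P
  refine ⟨(injective_iff_map_eq_zero _).2 fun z hz => ?_,
    fun h => ⟨_, toDualHom_sum_map_toSpanSingleton hid h⟩⟩
  have map_eq_zero : ∀ k, map I i (s k) z = 0 := fun k => LinearMap.congr_fun hz (s k)
  rw [eq_sum_map_toSpanSingleton hid z]
  simp [map_eq_zero]

theorem subsingleton_of_projective [Subsingleton (LocalCoh I R i)] :
    Subsingleton (LocalCoh I P i) :=
  bijective_toDualHom.injective.subsingleton

variable {P₀ P₁ P₂ : Type u} [AddCommGroup P₀] [Module R P₀] [AddCommGroup P₁] [Module R P₁]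
  [AddCommGroup P₂] [Module R P₂] [Module.Finite R P₀] [Module.Projective R P₀]
  [Module.Finite R P₁] [Module.Projective R P₁] [Module.Finite R P₂] [Module.Projective R P₂]

theorem exact_map_map_iff_exact_lcomp_dualMap {d₁ : P₂ →ₗ[R] P₁} {d₀ : P₁ →ₗ[R] P₀} :
    Function.Exact (map I i d₁) (map I i d₀) ↔
      Function.Exact (LinearMap.lcomp R (LocalCoh I R i) d₁.dualMap)
        (LinearMap.lcomp R (LocalCoh I R i) d₀.dualMap) :=
  (Function.Exact.iff_of_ladder_linearEquiv (e₁ := .ofBijective _ bijective_toDualHom)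
    (e₂ := .ofBijective _ bijective_toDualHom) (e₃ := .ofBijective _ bijective_toDualHom)
    (LinearMap.ext fun z => (toDualHom_map d₁ z).symm)
    (LinearMap.ext fun z => (toDualHom_map d₀ z).symm)).symm

end LocalCoh

section CohenMacaulayRing

variable {R : Type u} [CommRing R] {A B G : Type u} [AddCommGroup A] [Module R A]
  [AddCommGroup B] [Module R B] [AddCommGroup G] [Module R G]

theorem HasFinitePdHull.quotient_range [IsNoetherianRing R] (hG : IsGDimZero R G) {f : A →ₗ[R] G}
    (h : HasFinitePdHull R (LinearMap.range f)) : HasFinitePdHull R (G ⧸ LinearMap.range f) :=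
  .of_exact (LinearMap.range f).injective_subtype (LinearMap.exact_subtype_mkQ _)
    (Submodule.mkQ_surjective _) hG h

theorem HasFinitePdHull.quotient_range_of_exact [IsNoetherianRing R] (hG : IsGDimZero R G)
    {f : A →ₗ[R] B} {g : B →ₗ[R] G} (hfg : Function.Exact f g)
    (h : HasFinitePdHull R (B ⧸ LinearMap.range f)) : HasFinitePdHull R (G ⧸ LinearMap.range g) :=
  .quotient_range hG <| h.congr <|
    Submodule.quotEquivOfEq _ _ (LinearMap.exact_iff.1 hfg).symm ≪≫ₗ g.quotKerEquivRange

variable [IsLocalRing R] {J : Ideal R} {d : ℕ}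

theorem IsTopCohomologyLike.congr (e : A ≃ₗ[R] B) (h : IsTopCohomologyLike R d J A) :
    IsTopCohomologyLike R d J B := by
  cases d with
  | zero =>
    obtain ⟨hJ, hann, hpow, ⟨e'⟩⟩ := h
    exact ⟨hJ, hann.trans e.annihilator_eq.le, hpow, ⟨e' ≪≫ₗ e⟩⟩
  | succ d =>
    obtain ⟨hJ, hann, hreg, h⟩ := h
    refine ⟨hJ, hann.trans e.annihilator_eq.le, hreg, fun u hu hu' => ?_⟩
    obtain ⟨hsurj, H, _, _, ι, hι, hex, hH⟩ := h u hu hu'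
    refine ⟨fun b => ?_, H, _, _, e.toLinearMap ∘ₗ ι, e.injective.comp hι, fun b => ?_, hH⟩
    · obtain ⟨a, ha⟩ := hsurj (e.symm b)
      exact ⟨e a, by simpa using congrArg e ha⟩
    · obtain ⟨a, rfl⟩ := e.surjective b
      have := hex a
      simp_all [← map_smul]

theorem isCMQuotient_bot (hdim : ringKrullDim R ≤ d) (hdepth : d ≤ rdepth R) :
    IsCMQuotient d (⊥ : Ideal R) where
  le_maximalIdeal := bot_le
  ringKrullDim_le := (ringKrullDim_eq_of_ringEquiv (RingEquiv.quotientBot R)).trans_le hdim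
  extVanishes j hj := by
    refine .congr_right (quotBotEquiv R) ((subsingleton_extM_iff _ _ _).1 ?_)
    by_contra hne
    exact hj.not_ge (Nat.cast_le.1 (hdepth.trans (sInf_le ⟨j, rfl, hne⟩)))

theorem IsCMQuotient.ringKrullDim_le_of_bot (h : IsCMQuotient d (⊥ : Ideal R)) :
    ringKrullDim R ≤ d :=
  (ringKrullDim_eq_of_ringEquiv (RingEquiv.quotientBot R)).ge.trans h.ringKrullDim_le

variable [IsNoetherianRing R]

theorem IsCMQuotient.isTopCohomologyLike_localCoh_self (h : IsCMQuotient d (⊥ : Ideal R)) :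
    IsTopCohomologyLike R d ⊥ (LocalCoh (maximalIdeal R) R d) :=
  h.isTopCohomologyLike_localCoh.congr (LocalCoh.congr _ _ (quotBotEquiv R).symm)

theorem IsCMQuotient.subsingleton_localCoh_of_projective (h : IsCMQuotient d (⊥ : Ideal R))
    [Module.Finite R A] [Module.Projective R A] {i : ℕ} (hi : i ≠ d) :
    Subsingleton (LocalCoh (maximalIdeal R) A i) :=
  have := LocalCoh.subsingleton_congr (quotBotEquiv R).symm (h.subsingleton_localCoh hi)
  LocalCoh.subsingleton_of_projective

variable {P₀ P₁ P₂ : Type u} [AddCommGroup P₀] [Module R P₀] [AddCommGroup P₁] [Module R P₁]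
  [AddCommGroup P₂] [Module R P₂] [Module.Finite R P₂] [Module.Projective R P₂]
  {d₁ : P₂ →ₗ[R] P₁} {d₀ : P₁ →ₗ[R] P₀}

theorem IsCMQuotient.exact_dualMap_iff_exact_lcomp (h : IsCMQuotient d (⊥ : Ideal R))
    (hd : Function.Exact d₁ d₀)
    (hT : HasFinitePdHull R (Module.Dual R P₁ ⧸ LinearMap.range d₀.dualMap)) :
    Function.Exact d₀.dualMap d₁.dualMap ↔
      Function.Exact (LinearMap.lcomp R (LocalCoh (maximalIdeal R) R d) d₁.dualMap)
        (LinearMap.lcomp R (LocalCoh (maximalIdeal R) R d) d₀.dualMap) := by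
  have hH := h.isTopCohomologyLike_localCoh_self
  refine ⟨fun hex => exact_lcomp_of_extVanishes_one hex ?_, exact_of_exact_lcomp ?_ fun t ht =>
    hH.exists_hom_apply_ne_zero_of_hasFinitePdHull hT ht⟩
  · exact hH.extVanishes_one_of_hasFinitePdHull LocalCoh.exists_forall_mem_pow_smul_eq_zero
      (hT.quotient_range_of_exact .of_projective hex)
  · rw [LinearMap.dualMap_comp_dualMap, hd.linearMap_comp_eq_zero]
    exact LinearMap.ext LinearMap.comp_zero

theorem IsCMQuotient.extVanishes_one_iff_subsingleton_localCoh [Module.Finite R P₀]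
    [Module.Projective R P₀] [Module.Finite R P₁] [Module.Projective R P₁] {e : ℕ}
    (h : IsCMQuotient (e + 1) (⊥ : Ideal R)) (hd : Function.Exact d₁ d₀)
    (hT : HasFinitePdHull R (Module.Dual R P₁ ⧸ LinearMap.range d₀.dualMap)) :
    ExtVanishes R 1 (P₀ ⧸ LinearMap.range d₀) R ↔
      Subsingleton (LocalCoh (maximalIdeal R) (P₀ ⧸ LinearMap.range d₀) e) := by
  rw [extVanishes_one_quotient_range_iff hd, h.exact_dualMap_iff_exact_lcomp hd hT,
    LocalCoh.subsingleton_quotient_range_iff_exact_map h.ringKrullDim_le_of_bot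
      (h.subsingleton_localCoh_of_projective e.succ_ne_self.symm) hd,
    LocalCoh.exact_map_map_iff_exact_lcomp_dualMap]

end CohenMacaulayRing

namespace MinRes

variable {R : Type u} [CommRing R] {M : Type u} [AddCommGroup M] [Module R M] (F : MinRes R M)
  {i j k d : ℕ}

/-- The `k`-th syzygy `Ω^k M`, as the cokernel of `P_{k+1} → P_k`. -/
abbrev syzygy (k : ℕ) : Type u := F.P k ⧸ LinearMap.range (F.d k)

/-- The inclusion of `Ω^{k+1} M` into `P_k`. -/
def syzygyInclusion (k : ℕ) : F.syzygy (k + 1) →ₗ[R] F.P k :=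
  Submodule.liftQ _ (F.d k) (F.exact k).le

/-- The isomorphism `Ω^0 M ≃ M`. -/
noncomputable def syzygyZeroEquiv : F.syzygy 0 ≃ₗ[R] M :=
  Submodule.quotEquivOfEq _ _ F.exact0 ≪≫ₗ F.ε.quotKerEquivOfSurjective F.surj

include F in
theorem finite_module : Module.Finite R M :=
  have := F.finite 0
  .of_surjective F.ε F.surj

theorem exact_d (k : ℕ) : Function.Exact (F.d (k + 1)) (F.d k) :=
  LinearMap.exact_iff.2 (F.exact k).symm

theorem syzygyInclusion_injective (k : ℕ) : Function.Injective (F.syzygyInclusion k) := by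
  rw [← LinearMap.ker_eq_bot]
  exact Submodule.ker_liftQ_eq_bot _ _ _ (F.exact k).ge

theorem exact_syzygyInclusion_mkQ (k : ℕ) :
    Function.Exact (F.syzygyInclusion k) (LinearMap.range (F.d k)).mkQ :=
  LinearMap.exact_iff.2 ((Submodule.ker_mkQ _).trans (Submodule.range_liftQ _ _ _).symm)

theorem extVanishes_syzygy_succ_iff :
    ExtVanishes R (i + 1) (F.syzygy (k + 1)) R ↔ ExtVanishes R (i + 2) (F.syzygy k) R := by
  have := F.projective k
  have hinj := F.syzygyInclusion_injective k
  have hex := F.exact_syzygyInclusion_mkQ k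
  have hsurj := Submodule.mkQ_surjective (LinearMap.range (F.d k))
  exact ⟨fun h => .contravariant₃ hinj hex hsurj h (.of_projective (Nat.succ_pos _)),
    fun h => .contravariant₁ hinj hex hsurj (.of_projective i.succ_pos) h⟩

theorem extVanishes_syzygy_iff :
    ExtVanishes R (i + 1) (F.syzygy k) R ↔ ExtVanishes R (i + k + 1) M R := by
  induction k generalizing i with
  | zero => exact ⟨.congr_left F.syzygyZeroEquiv, .congr_left F.syzygyZeroEquiv.symm⟩
  | succ k ih => rw [extVanishes_syzygy_succ_iff, ih, Nat.succ_add_eq_add_succ]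

variable [IsNoetherianRing R]

theorem hasFinitePdHull_T (hfin : GDim R F.lambdaMod < ⊤)
    (hk : ∀ j < k, ExtVanishes R (j + 1) M R) : HasFinitePdHull R (F.T k) := by
  have := F.projective
  have := F.finite
  induction k with
  | zero =>
    obtain ⟨_, ⟨n, rfl, hn⟩, _⟩ := sInf_lt_iff.1 hfin
    exact HasFinitePdHull.quotient_range .of_projective (.of_gDimLE hn)
  | succ k ih =>
    refine HasFinitePdHull.quotient_range_of_exact .of_projective ?_ (ih fun j hj => hk j (by lia))
    rw [← extVanishes_one_quotient_range_iff (F.exact_d k)]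
    exact (F.extVanishes_syzygy_iff (i := 0)).2 (by simpa using hk k k.lt_succ_self)

variable [IsLocalRing R]

theorem subsingleton_localCoh_syzygy_succ_iff (h : IsCMQuotient d (⊥ : Ideal R))
    (hj : j + 1 < d) :
    Subsingleton (LocalCoh (maximalIdeal R) (F.syzygy (k + 1)) (j + 1)) ↔
      Subsingleton (LocalCoh (maximalIdeal R) (F.syzygy k) j) := by
  have := F.projective k
  have := F.finite k
  have hinj := F.syzygyInclusion_injective k
  have hex := F.exact_syzygyInclusion_mkQ k
  have hsurj := Submodule.mkQ_surjective (LinearMap.range (F.d k))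
  exact ⟨LocalCoh.subsingleton_right hinj hex hsurj
      (h.subsingleton_localCoh_of_projective (by lia)),
    fun hC => LocalCoh.subsingleton_left hinj hex hsurj hC
      (h.subsingleton_localCoh_of_projective hj.ne)⟩

theorem subsingleton_localCoh_syzygy_iff (h : IsCMQuotient d (⊥ : Ideal R)) (hjk : j + k < d) :
    Subsingleton (LocalCoh (maximalIdeal R) (F.syzygy k) (j + k)) ↔
      Subsingleton (LocalCoh (maximalIdeal R) M j) := by
  induction k with
  | zero => exact ⟨LocalCoh.subsingleton_congr F.syzygyZeroEquiv,
      LocalCoh.subsingleton_congr F.syzygyZeroEquiv.symm⟩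
  | succ k ih =>
    exact (F.subsingleton_localCoh_syzygy_succ_iff h hjk).trans (ih (by lia))

theorem extVanishes_iff_subsingleton_localCoh (h : IsCMQuotient d (⊥ : Ideal R))
    (hfin : GDim R F.lambdaMod < ⊤) (hk : ∀ j < k, ExtVanishes R (j + 1) M R)
    (hik : i + k + 1 = d) :
    ExtVanishes R (k + 1) M R ↔ Subsingleton (LocalCoh (maximalIdeal R) M i) := by
  have := F.projective
  have := F.finite
  subst hik
  calc
    _ ↔ ExtVanishes R 1 (F.syzygy k) R := by simpa using (F.extVanishes_syzygy_iff (i := 0)).symm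
    _ ↔ Subsingleton (LocalCoh (maximalIdeal R) (F.syzygy k) (i + k)) :=
      h.extVanishes_one_iff_subsingleton_localCoh (F.exact_d k) (F.hasFinitePdHull_T hfin hk)
    _ ↔ _ := F.subsingleton_localCoh_syzygy_iff h (i + k).lt_succ_self

end MinRes

theorem sSup_natCast_eq_tsub {d : ℕ} {r : ℕ∞} {p : ℕ → Prop}
    (h : ∀ n ≤ d, (n : ℕ∞) ≤ r ↔ ∀ i, p i → i + n ≤ d) :
    sSup {m : ℕ∞ | ∃ i : ℕ, m = i ∧ p i} = d - r := by
  refine eq_of_forall_ge_iff fun b => ?_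
  cases b with
  | top => simp
  | coe k =>
    have hd : ∀ i, p i → i ≤ d := (h 0 d.zero_le).1 (by simp)
    calc
      _ ↔ ∀ i, p i → i ≤ k := by simp [@forall_comm ℕ∞]
      _ ↔ ∀ i, p i → i + (d - k) ≤ d := forall₂_congr fun i hi => by have := hd i hi; lia
      _ ↔ (d : ℕ∞) - k ≤ r := by rw [← ENat.natCast_sub, h _ (d.sub_le k)]
      _ ↔ (d : ℕ∞) - r ≤ k := tsub_le_iff_tsub_le

theorem natCast_le_rgr_iff {R : Type u} [CommRing R] {M : Type u} [AddCommGroup M] [Module R M]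
    {n : ℕ} : (n : ℕ∞) ≤ rgr R M ↔ ∀ j, j + 1 < n → ExtVanishes R (j + 1) M R := by
  constructor
  · intro hn j hj
    rw [← subsingleton_extM_iff]
    by_contra hext
    have : (n : ℕ∞) ≤ (j + 1 : ℕ) := hn.trans (sInf_le ⟨j + 1, rfl, j.succ_pos, hext⟩)
    exact hj.not_ge (Nat.cast_le.1 this)
  · intro hext
    refine le_sInf ?_
    rintro _ ⟨k, rfl, hk, hne⟩
    obtain ⟨j, rfl⟩ := Nat.exists_eq_succ_of_ne_zero hk.ne'
    exact Nat.cast_le.2 (not_lt.1 fun hj => hne ((subsingleton_extM_iff _ _ _).2 (hext j hj)))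

section Statements

variable (R : Type u) [CommRing R] [IsNoetherianRing R]

theorem stmt14_general [IsLocalRing R] (d : ℕ)
    (hdim : ringKrullDim R = ((d : ℕ∞) : WithBot ℕ∞)) (hCM : rdepth R = (d : ℕ∞))
    (M : Type u) [AddCommGroup M] [Module R M] (F : MinRes R M)
    (hfin : GDim R F.lambdaMod < ⊤) {n : ℕ} (hn : n ≤ d + 1) :
    (n : ℕ∞) ≤ rgr R M ↔
      ∀ i, i ≠ d → ¬ Subsingleton (locCoh R (maximalIdeal R) i M) → i + n ≤ d := by
  have := F.finite_module
  have hR : IsCMQuotient d (⊥ : Ideal R) := isCMQuotient_bot hdim.le hCM.ge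
  simp only [natCast_le_rgr_iff, LocalCoh.subsingleton_locCoh_iff]
  constructor
  · intro hext i hid hi
    have hid' : i < d := hid.lt_of_le
      (not_lt.1 fun h => hi (LocalCoh.subsingleton_of_ringKrullDim_lt hdim.le M h))
    by_contra! hin
    obtain ⟨k, rfl⟩ := Nat.exists_eq_add_of_lt hid'
    exact hi ((F.extVanishes_iff_subsingleton_localCoh hR hfin
      (fun j hj => hext j (by lia)) rfl).1 (hext k (by lia)))
  · intro hcoh k hk
    induction k using Nat.strong_induction_on with
    | h k ih =>
      obtain ⟨i, rfl⟩ : ∃ i, d = i + k + 1 := ⟨d - (k + 1), by lia⟩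
      rw [F.extVanishes_iff_subsingleton_localCoh hR hfin (fun j hj => ih j hj (by lia)) rfl]
      by_contra hi
      have := hcoh i (by lia) hi
      lia

theorem stmt14 [IsLocalRing R] (d : ℕ) (hdim : ringKrullDim R = ((d : ℕ∞) : WithBot ℕ∞))
    (hCM : rdepth R = (d : ℕ∞))
    (M : Type u) [AddCommGroup M] [Module R M] [Module.Finite R M]
    (hMdim : ringKrullDim (R ⧸ Module.annihilator R M) = ((d : ℕ∞) : WithBot ℕ∞))
    (hnotMCM : edepth R (IsLocalRing.maximalIdeal R) M ≠ (d : ℕ∞))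
    (F : MinRes R M) (hfin : GDim R F.lambdaMod < ⊤) :
    sSup {m : ℕ∞ | ∃ i : ℕ, m = i ∧ i ≠ d ∧
        ¬ Subsingleton (locCoh R (IsLocalRing.maximalIdeal R) i M)} =
      (d : ℕ∞) - rgr R M :=
  sSup_natCast_eq_tsub fun n hn => by
    simpa only [and_imp] using stmt14_general R d hdim hCM M F hfin (hn.trans d.le_succ)

end Statements
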